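/- arXiv:1407.5518 — 3 statements merged into one kernel-verified Lean document; each statement's English description precedes it below -/
import Mathlib

section
/- Let p>1 and fix a positive constant σ > 0. Then the infimum of λ_p(Ω,σ) over all open bounded convex domains Ω ⊂ ℝ^n with C^2 boundary equals C_p = ((p-1)/p)^p. -/
open MeasureTheory Metric Set Filter Bornology
open scoped ENNReal Topology

noncomputable section

namespace RobinHardy

/-- Distance to the boundary of `Ω`. -/
def sdist {n : ℕ} (Ω : Set (EuclideanSpace ℝ (Fin n))) (x : EuclideanSpace ℝ (Fin n)) : ℝ :=
  Metric.infDist x (frontier Ω)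

/-- The in-radius of `Ω`, i.e. `sup_{x ∈ Ω} dist(x, ∂Ω)`. -/
def inradius {n : ℕ} (Ω : Set (EuclideanSpace ℝ (Fin n))) : ℝ :=
  sSup (sdist Ω '' Ω)

/-- The surface measure on `∂Ω`: the `(n-1)`-dimensional Hausdorff measure restricted
to the boundary of `Ω`. -/
def surf {n : ℕ} (Ω : Set (EuclideanSpace ℝ (Fin n))) :
    Measure (EuclideanSpace ℝ (Fin n)) :=
  (Measure.hausdorffMeasure ((n : ℝ) - 1)).restrict (frontier Ω)

/-- `Ω` has boundary of class `C²`: near every boundary point, `Ω` is a sublevel set of a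
`C²` function with non-vanishing differential. -/
def HasC2Boundary {n : ℕ} (Ω : Set (EuclideanSpace ℝ (Fin n))) : Prop :=
  ∀ x ∈ frontier Ω, ∃ (U : Set (EuclideanSpace ℝ (Fin n)))
    (f : EuclideanSpace ℝ (Fin n) → ℝ), IsOpen U ∧ x ∈ U ∧ ContDiff ℝ 2 f ∧
      (∀ y ∈ U, fderiv ℝ f y ≠ 0) ∧ Ω ∩ U = {y ∈ U | f y < 0} ∧
      frontier Ω ∩ U = {y ∈ U | f y = 0}

/-- Membership in `W^{1,p}(Ω)`, realized via functions continuous up to the boundary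
(providing the boundary trace), differentiable in `Ω`, with finite `L^p`-integrals of the
function and of its gradient. -/
def MemW1p {n : ℕ} (p : ℝ) (Ω : Set (EuclideanSpace ℝ (Fin n)))
    (u : EuclideanSpace ℝ (Fin n) → ℝ) : Prop :=
  ContinuousOn u (closure Ω) ∧ (∀ x ∈ Ω, DifferentiableAt ℝ u x) ∧
    (∫⁻ x in Ω, ENNReal.ofReal (|u x| ^ p)) ≠ ∞ ∧
    (∫⁻ x in Ω, ENNReal.ofReal (‖fderiv ℝ u x‖ ^ p)) ≠ ∞

/-- The `p`-th power of the `W^{1,p}(Ω)`-distance between two functions. -/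
def W1pDist {n : ℕ} (p : ℝ) (Ω : Set (EuclideanSpace ℝ (Fin n)))
    (u v : EuclideanSpace ℝ (Fin n) → ℝ) : ℝ≥0∞ :=
  (∫⁻ x in Ω, ENNReal.ofReal (|u x - v x| ^ p)) +
    ∫⁻ x in Ω, ENNReal.ofReal (‖fderiv ℝ u x - fderiv ℝ v x‖ ^ p)

/-- Membership in `W^{1,p}_{0,Γ}(Ω)`: the closure, in the `W^{1,p}(Ω)`-norm, of the set of
`C¹` functions vanishing on `Γ`. -/
def MemW1pGamma {n : ℕ} (p : ℝ) (Ω Γ : Set (EuclideanSpace ℝ (Fin n)))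
    (u : EuclideanSpace ℝ (Fin n) → ℝ) : Prop :=
  MemW1p p Ω u ∧ ∃ v : ℕ → EuclideanSpace ℝ (Fin n) → ℝ,
    (∀ j, ContDiff ℝ 1 (v j)) ∧ (∀ j, ∀ x ∈ Γ, v j x = 0) ∧
      Tendsto (fun j => W1pDist p Ω (v j) u) atTop (𝓝 0)

/-- Membership in `W^{1,p}_0(Ω)`: the closure of `C_c^∞(Ω)` in the `W^{1,p}(Ω)`-norm. -/
def MemW1p0 {n : ℕ} (p : ℝ) (Ω : Set (EuclideanSpace ℝ (Fin n)))
    (u : EuclideanSpace ℝ (Fin n) → ℝ) : Prop :=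
  MemW1p p Ω u ∧ ∃ v : ℕ → EuclideanSpace ℝ (Fin n) → ℝ,
    (∀ j, ContDiff ℝ (⊤ : ℕ∞) (v j) ∧ HasCompactSupport (v j) ∧ tsupport (v j) ⊆ Ω) ∧
      Tendsto (fun j => W1pDist p Ω (v j) u) atTop (𝓝 0)

/-- The class `Σ_Γ` of boundary functions: `σ = +∞` on `Γ` and `σ` essentially bounded
on `∂Ω \ cl(Γ)`. -/
def SigmaGamma {n : ℕ} (Ω Γ : Set (EuclideanSpace ℝ (Fin n)))
    (σ : EuclideanSpace ℝ (Fin n) → ℝ≥0∞) : Prop :=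
  (∀ y ∈ Γ, σ y = ∞) ∧
    essSup σ ((surf Ω).restrict (frontier Ω \ closure Γ)) ≠ ∞

/-- `α(x) = ((p-1)/p)·σ(π(x))^{1/(1-p)}`, where `π` is a nearest-point projection onto `∂Ω`
(with the conventions `α(x) = 0` when `σ(π(x)) = ∞` and `α(x) = ∞` when `σ(π(x)) = 0`,
built into the `ℝ≥0∞`-valued power). -/
def alphaF {n : ℕ} (p : ℝ) (σ : EuclideanSpace ℝ (Fin n) → ℝ≥0∞)
    (π : EuclideanSpace ℝ (Fin n) → EuclideanSpace ℝ (Fin n))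
    (x : EuclideanSpace ℝ (Fin n)) : ℝ≥0∞ :=
  ENNReal.ofReal ((p - 1) / p) * σ (π x) ^ (1 / (1 - p))

/-- The weighted norm `‖u‖_{p,σ}^p = ∫_Ω |u(x)|^p/(δ(x)+α(x))^p dx`. -/
def wnorm {n : ℕ} (p : ℝ) (Ω : Set (EuclideanSpace ℝ (Fin n)))
    (σ : EuclideanSpace ℝ (Fin n) → ℝ≥0∞)
    (π : EuclideanSpace ℝ (Fin n) → EuclideanSpace ℝ (Fin n))
    (u : EuclideanSpace ℝ (Fin n) → ℝ) : ℝ≥0∞ :=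
  ∫⁻ x in Ω, ENNReal.ofReal (|u x| ^ p) /
    (ENNReal.ofReal (sdist Ω x) + alphaF p σ π x) ^ p

/-- The Robin functional `Q_p[σ,u] = ∫_Ω |∇u|^p dx + ∫_{∂Ω} σ|u|^p dν`, the boundary
integral being taken over the set where `σ` is finite. -/
def Qp {n : ℕ} (p : ℝ) (Ω : Set (EuclideanSpace ℝ (Fin n)))
    (σ : EuclideanSpace ℝ (Fin n) → ℝ≥0∞)
    (u : EuclideanSpace ℝ (Fin n) → ℝ) : ℝ≥0∞ :=
  (∫⁻ x in Ω, ENNReal.ofReal (‖fderiv ℝ u x‖ ^ p)) +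
    ∫⁻ y in frontier Ω ∩ {y | σ y ≠ ∞}, σ y * ENNReal.ofReal (|u y| ^ p) ∂(surf Ω)

/-- The variational quantity `λ_p(Ω,σ) = inf { Q_p[σ,u]/‖u‖_{p,σ}^p : u ∈ W^{1,p}_{0,Γ}(Ω), u ≠ 0 }`. -/
def lam {n : ℕ} (p : ℝ) (Ω Γ : Set (EuclideanSpace ℝ (Fin n)))
    (σ : EuclideanSpace ℝ (Fin n) → ℝ≥0∞)
    (π : EuclideanSpace ℝ (Fin n) → EuclideanSpace ℝ (Fin n)) : ℝ≥0∞ :=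
  ⨅ (u : EuclideanSpace ℝ (Fin n) → ℝ) (_ : MemW1pGamma p Ω Γ u)
    (_ : wnorm p Ω σ π u ≠ 0), Qp p Ω σ u / wnorm p Ω σ π u

/-- The variational quantity `λ_p(Ω,σ)` with the infimum over all of `W^{1,p}(Ω)`. -/
def lamAll {n : ℕ} (p : ℝ) (Ω : Set (EuclideanSpace ℝ (Fin n)))
    (σ : EuclideanSpace ℝ (Fin n) → ℝ≥0∞)
    (π : EuclideanSpace ℝ (Fin n) → EuclideanSpace ℝ (Fin n)) : ℝ≥0∞ :=
  ⨅ (u : EuclideanSpace ℝ (Fin n) → ℝ) (_ : MemW1p p Ω u)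
    (_ : wnorm p Ω σ π u ≠ 0), Qp p Ω σ u / wnorm p Ω σ π u

/-- `α = ((p-1)/p)·σ^{1/(1-p)}` for a constant boundary parameter `σ > 0`. -/
def alphaC (p σ : ℝ) : ℝ := ((p - 1) / p) * σ ^ (1 / (1 - p))

/-- `‖u‖_{p,σ}^p` for a constant boundary parameter `σ`. -/
def wnormC {n : ℕ} (p : ℝ) (Ω : Set (EuclideanSpace ℝ (Fin n))) (σ : ℝ)
    (u : EuclideanSpace ℝ (Fin n) → ℝ) : ℝ≥0∞ :=
  ∫⁻ x in Ω, ENNReal.ofReal (|u x| ^ p / (sdist Ω x + alphaC p σ) ^ p)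

/-- `Q_p[σ,u]` for a constant boundary parameter `σ`. -/
def QpC {n : ℕ} (p : ℝ) (Ω : Set (EuclideanSpace ℝ (Fin n))) (σ : ℝ)
    (u : EuclideanSpace ℝ (Fin n) → ℝ) : ℝ≥0∞ :=
  (∫⁻ x in Ω, ENNReal.ofReal (‖fderiv ℝ u x‖ ^ p)) +
    ENNReal.ofReal σ * ∫⁻ y, ENNReal.ofReal (|u y| ^ p) ∂(surf Ω)

/-- `λ_p(Ω,σ)` for a constant boundary parameter `σ`. -/
def lamC {n : ℕ} (p : ℝ) (Ω : Set (EuclideanSpace ℝ (Fin n))) (σ : ℝ) : ℝ≥0∞ :=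
  ⨅ (u : EuclideanSpace ℝ (Fin n) → ℝ) (_ : MemW1p p Ω u)
    (_ : wnormC p Ω σ u ≠ 0), QpC p Ω σ u / wnormC p Ω σ u

/-! On a convex domain the depth `δ` is concave, so moving points towards the boundary, against
the inward normal `∇δ`, expands distances. Hence the level sets of `δ` carry no more area than the
boundary, and integrating `|u|^p` along the normals against the weight
`g (δ) = (p - 1) (α + δ) ^ (-p)`, whose primitive is `-(α + δ) ^ (1 - p)`, gives
`∫ g (δ) |u|^p ≤ α ^ (1 - p) ∫_∂Ω |u|^p + p ∫ (α + δ) ^ (1 - p) |u|^(p - 1) |∇u|`. Young's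
inequality absorbs the last term, and the choice of `α` turns the boundary constant into `σ`.

Conversely, `(1 - ‖y‖²) ^ β` with `β ↓ (p - 1) / p` vanishes on the unit sphere and has Hardy
quotient at most `β ^ p` with the weight `δ ^ (-p)`. Dilating the ball by `R` replaces `α` by
`α / R`, so large balls realise that weight in the limit. -/

open scoped RealInnerProductSpace

section DepthFunction

variable {E : Type*} [NormedAddCommGroup E]

section Depth

variable {Ω : Set E} {x : E}

/-- The distance from `x` to the complement of `Ω`. On an open `Ω ≠ univ` it is the distance to
the boundary, but here the ball around `x` of this radius lies in `Ω` by definition. -/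
def depth (Ω : Set E) (x : E) : ℝ := infDist x Ωᶜ

lemma depth_nonneg : 0 ≤ depth Ω x := infDist_nonneg

lemma lipschitzWith_depth (Ω : Set E) : LipschitzWith 1 (depth Ω) := lipschitz_infDist_pt _

lemma measurable_depth [MeasurableSpace E] [BorelSpace E] (Ω : Set E) : Measurable (depth Ω) :=
  (lipschitzWith_depth Ω).continuous.measurable

lemma depth_pos (ho : IsOpen Ω) (hne : Ω ≠ univ) (hx : x ∈ Ω) : 0 < depth Ω x :=
  (ho.isClosed_compl.notMem_iff_infDist_pos (nonempty_compl.2 hne)).1 (not_not.2 hx)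

lemma ball_depth_subset : ball x (depth Ω x) ⊆ Ω := ball_infDist_compl_subset

lemma depth_le_dist_of_mem_frontier (ho : IsOpen Ω) {y : E} (hy : y ∈ frontier Ω) :
    depth Ω x ≤ dist x y :=
  infDist_le_dist_of_mem (ho.frontier_eq ▸ hy).2

lemma le_depth_iff_ball_subset (hne : Ω ≠ univ) {r : ℝ} : r ≤ depth Ω x ↔ ball x r ⊆ Ω := by
  rw [depth, le_infDist (nonempty_compl.2 hne), subset_def]
  refine forall_congr' fun y => ?_
  rw [mem_compl_iff, mem_ball', ← not_le, not_imp_comm]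

lemma exists_mem_frontier_dist_eq_depth [NormedSpace ℝ E] [FiniteDimensional ℝ E] (hne : Ω ≠ univ)
    (hx : x ∈ Ω) : ∃ y ∈ frontier Ω, dist x y = depth Ω x :=
  (exists_mem_frontier_infDist_compl_eq_dist hx hne).imp fun _ h => ⟨h.1, h.2.symm⟩

lemma infDist_frontier_eq_depth [NormedSpace ℝ E] [FiniteDimensional ℝ E] (ho : IsOpen Ω)
    (hne : Ω ≠ univ) (hx : x ∈ Ω) : infDist x (frontier Ω) = depth Ω x := by
  obtain ⟨y, hy, hxy⟩ := exists_mem_frontier_dist_eq_depth hne hx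
  exact le_antisymm (hxy ▸ infDist_le_dist_of_mem hy)
    ((le_infDist ⟨y, hy⟩).2 fun _ => depth_le_dist_of_mem_frontier ho)

open scoped Pointwise in
lemma concaveOn_depth [NormedSpace ℝ E] (ho : IsOpen Ω) (hc : Convex ℝ Ω) (hne : Ω ≠ univ) :
    ConcaveOn ℝ Ω (depth Ω) := by
  refine concaveOn_iff_forall_pos.2 ⟨hc, fun x hx y hy a b ha hb hab => ?_⟩
  refine (le_depth_iff_ball_subset hne).2 ?_
  have hax := mul_pos ha (depth_pos ho hne hx)
  have hby := mul_pos hb (depth_pos ho hne hy)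
  calc ball (a • x + b • y) (a * depth Ω x + b * depth Ω y)
      = a • ball x (depth Ω x) + b • ball y (depth Ω y) := by
        rw [_root_.smul_ball ha.ne', _root_.smul_ball hb.ne', Real.norm_of_nonneg ha.le,
          Real.norm_of_nonneg hb.le, ball_add_ball hax hby]
    _ ⊆ a • Ω + b • Ω :=
        add_subset_add (smul_set_mono ball_depth_subset) (smul_set_mono ball_depth_subset)
    _ ⊆ Ω := hc.set_combo_subset ha.le hb.le hab

end Depth

lemma le_add_fderiv_of_concaveOn [NormedSpace ℝ E] {s : Set E} {f : E → ℝ} {x z : E}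
    (hf : ConcaveOn ℝ s f) (hfx : DifferentiableAt ℝ f x) (hx : x ∈ s) (hz : z ∈ s) :
    f z ≤ f x + fderiv ℝ f x (z - x) := by
  have hline : ConcaveOn ℝ (AffineMap.lineMap x z ⁻¹' s) (f ∘ AffineMap.lineMap (k := ℝ) x z) :=
    hf.comp_affineMap _
  have hderiv : HasDerivAt (f ∘ AffineMap.lineMap (k := ℝ) x z) (fderiv ℝ f x (z - x)) 0 := by
    refine HasFDerivAt.comp_hasDerivAt 0 ?_ AffineMap.hasDerivAt_lineMap
    simpa using hfx.hasFDerivAt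
  have := hline.slope_le_of_hasDerivAt (x := 0) (y := 1) (by simpa) (by simpa) one_pos hderiv
  rw [slope_def_field, sub_zero, div_one, sub_le_iff_le_add'] at this
  simpa using this

end DepthFunction

section ConvexDomain

/-- An open convex set that has a boundary. -/
structure IsConvexDomain {E : Type*} [NormedAddCommGroup E] [NormedSpace ℝ E] (Ω : Set E) :
    Prop where
  isOpen : IsOpen Ω
  convex : Convex ℝ Ω
  ne_univ : Ω ≠ univ

variable {E : Type*} [NormedAddCommGroup E] [InnerProductSpace ℝ E]

lemma sq_norm_add_sq_mul_norm_le_of_inner_nonpos {a b : E} (hab : ⟪a, b⟫ ≤ 0) {t : ℝ}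
    (ht : 0 ≤ t) : ‖a‖ ^ 2 + (t * ‖b‖) ^ 2 ≤ ‖a - t • b‖ ^ 2 := by
  rw [norm_sub_sq_real, inner_smul_right, norm_smul, Real.norm_of_nonneg ht]
  linarith [mul_nonpos_of_nonneg_of_nonpos ht hab]

variable {Ω : Set E} {x x' z : E} {t : ℝ}

lemma depth_sub_smul_of_depth_eq_dist (ho : IsOpen Ω) {y e : E} (hy : y ∈ frontier Ω)
    (he : ‖e‖ = 1) (hxy : x - y = depth Ω x • e) (ht : t ∈ Icc 0 (depth Ω x)) :
    depth Ω (x - t • e) = depth Ω x - t := by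
  apply le_antisymm
  · calc depth Ω (x - t • e) ≤ dist (x - t • e) y := depth_le_dist_of_mem_frontier ho hy
      _ = depth Ω x - t := by
        rw [dist_eq_norm, sub_right_comm, hxy, ← sub_smul, norm_smul, he, mul_one,
          Real.norm_of_nonneg (sub_nonneg.2 ht.2)]
  · have h := (lipschitzWith_depth Ω).dist_le_mul x (x - t • e)
    rw [dist_self_sub_right, norm_smul, he, Real.norm_of_nonneg ht.1, Real.dist_eq,
      NNReal.coe_one, one_mul, mul_one] at h
    linarith [le_abs_self (depth Ω x - depth Ω (x - t • e))]

section CompleteSpace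

variable [CompleteSpace E]

/-- The gradient of the distance to the complement: the inward unit normal of the level set of
`depth Ω` through `x`, for `x` in `regularSet Ω`. -/
def inwardNormal (Ω : Set E) (x : E) : E := gradient (depth Ω) x

/-- The nearest boundary point of `x`, for `x` in `regularSet Ω`. -/
def footpoint (Ω : Set E) (x : E) : E := x - depth Ω x • inwardNormal Ω x

/-- The points of `Ω` at which the distance to the complement is differentiable. -/
def regularSet (Ω : Set E) : Set E := {x ∈ Ω | DifferentiableAt ℝ (depth Ω) x}

lemma depth_le_add_inner (hΩ : IsConvexDomain Ω) (hx : x ∈ regularSet Ω) (hz : z ∈ Ω) :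
    depth Ω z ≤ depth Ω x + ⟪inwardNormal Ω x, z - x⟫ := by
  rw [inwardNormal, inner_gradient_left]
  exact le_add_fderiv_of_concaveOn (concaveOn_depth hΩ.isOpen hΩ.convex hΩ.ne_univ) hx.2 hx.1 hz

lemma norm_inwardNormal_le_one : ‖inwardNormal Ω x‖ ≤ 1 := by
  rw [inwardNormal, gradient, LinearIsometryEquiv.norm_map]
  exact_mod_cast norm_fderiv_le_of_lipschitz ℝ (lipschitzWith_depth Ω)

lemma inwardNormal_eq_of_depth_eq_dist (ho : IsOpen Ω) (hne : Ω ≠ univ) (hx : x ∈ regularSet Ω)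
    {y e : E} (hy : y ∈ frontier Ω) (he : ‖e‖ = 1) (hxy : x - y = depth Ω x • e) :
    inwardNormal Ω x = e := by
  have hpos := depth_pos ho hne hx.1
  have hleft : (0 : ℝ) ∈ Icc 0 (depth Ω x) := left_mem_Icc.2 hpos.le
  have hray : HasDerivAt (fun s : ℝ => x - s • e) (-e) 0 := by
    simpa using ((hasDerivAt_id (0 : ℝ)).smul_const e).const_sub x
  have hchain : HasDerivAt (fun s : ℝ => depth Ω (x - s • e)) (fderiv ℝ (depth Ω) x (-e)) 0 :=
    hx.2.hasFDerivAt.comp_hasDerivAt_of_eq 0 hray (by simp)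
  have hunit : HasDerivWithinAt (fun s : ℝ => depth Ω (x - s • e)) (-1) (Icc 0 (depth Ω x)) 0 :=
    ((hasDerivAt_id (0 : ℝ)).const_sub (depth Ω x)).hasDerivWithinAt.congr_of_mem
      (fun s hs => depth_sub_smul_of_depth_eq_dist ho hy he hxy hs) hleft
  have hinner : ⟪inwardNormal Ω x, e⟫ = 1 := by
    have := (uniqueDiffOn_Icc hpos 0 hleft).eq_deriv _ hchain.hasDerivWithinAt hunit
    rwa [map_neg, neg_inj, ← inner_gradient_left] at this
  have hnorm : ‖inwardNormal Ω x‖ = 1 :=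
    le_antisymm norm_inwardNormal_le_one
      (by simpa [hinner, he] using real_inner_le_norm (inwardNormal Ω x) e)
  exact (inner_eq_one_iff_of_norm_eq_one hnorm he).1 hinner

lemma sub_smul_inwardNormal_mem (ht : t ∈ Ico 0 (depth Ω x)) :
    x - t • inwardNormal Ω x ∈ Ω := by
  refine ball_depth_subset (x := x) (mem_ball'.2 ?_)
  rw [dist_self_sub_right, norm_smul, Real.norm_of_nonneg ht.1]
  exact (mul_le_of_le_one_right ht.1 norm_inwardNormal_le_one).trans_lt ht.2

end CompleteSpace

variable [FiniteDimensional ℝ E]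

lemma norm_inwardNormal_eq_one_and_footpoint_mem (ho : IsOpen Ω) (hne : Ω ≠ univ)
    (hx : x ∈ regularSet Ω) : ‖inwardNormal Ω x‖ = 1 ∧ footpoint Ω x ∈ frontier Ω := by
  obtain ⟨y, hy, hxy⟩ := exists_mem_frontier_dist_eq_depth hne hx.1
  have hpos := depth_pos ho hne hx.1
  rw [dist_eq_norm] at hxy
  have he : ‖(depth Ω x)⁻¹ • (x - y)‖ = 1 := by
    rw [norm_smul, hxy, norm_inv, Real.norm_of_nonneg hpos.le, inv_mul_cancel₀ hpos.ne']
  have hsub : x - y = depth Ω x • (depth Ω x)⁻¹ • (x - y) := (smul_inv_smul₀ hpos.ne' _).symm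
  have hν := inwardNormal_eq_of_depth_eq_dist ho hne hx hy he hsub
  refine ⟨hν ▸ he, ?_⟩
  rwa [footpoint, hν, ← hsub, sub_sub_cancel]

lemma norm_inwardNormal (ho : IsOpen Ω) (hne : Ω ≠ univ) (hx : x ∈ regularSet Ω) :
    ‖inwardNormal Ω x‖ = 1 :=
  (norm_inwardNormal_eq_one_and_footpoint_mem ho hne hx).1

lemma footpoint_mem_frontier (ho : IsOpen Ω) (hne : Ω ≠ univ) (hx : x ∈ regularSet Ω) :
    footpoint Ω x ∈ frontier Ω :=
  (norm_inwardNormal_eq_one_and_footpoint_mem ho hne hx).2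

lemma depth_sub_smul_inwardNormal (ho : IsOpen Ω) (hne : Ω ≠ univ) (hx : x ∈ regularSet Ω)
    (ht : t ∈ Icc 0 (depth Ω x)) : depth Ω (x - t • inwardNormal Ω x) = depth Ω x - t :=
  depth_sub_smul_of_depth_eq_dist ho (footpoint_mem_frontier ho hne hx)
    (norm_inwardNormal ho hne hx) (sub_sub_cancel _ _) ht

/- The supergradient of the concave function `depth Ω` at `x` is still one at every point of the
normal ray from `x`, and supergradients of concave functions are antitone. -/
lemma inner_sub_inwardNormal_nonpos (hΩ : IsConvexDomain Ω) (hx : x ∈ regularSet Ω)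
    (hx' : x' ∈ regularSet Ω) {s s' : ℝ} (hs : s ∈ Ico 0 (depth Ω x))
    (hs' : s' ∈ Ico 0 (depth Ω x')) :
    ⟪x - s • inwardNormal Ω x - (x' - s' • inwardNormal Ω x'),
      inwardNormal Ω x - inwardNormal Ω x'⟫ ≤ 0 := by
  have transported {x z : E} (hx : x ∈ regularSet Ω) (hz : z ∈ Ω) {s : ℝ}
      (hs : s ∈ Ico 0 (depth Ω x)) : depth Ω z ≤ depth Ω (x - s • inwardNormal Ω x) +
        ⟪inwardNormal Ω x, z - (x - s • inwardNormal Ω x)⟫ := by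
    have h := depth_le_add_inner hΩ hx hz
    rw [depth_sub_smul_inwardNormal hΩ.isOpen hΩ.ne_univ hx (Ico_subset_Icc_self hs),
      sub_sub_eq_add_sub, add_sub_right_comm, inner_add_right, inner_smul_right,
      real_inner_self_eq_norm_sq, norm_inwardNormal hΩ.isOpen hΩ.ne_univ hx]
    linarith
  have h := transported hx (sub_smul_inwardNormal_mem hs') hs
  have h' := transported hx' (sub_smul_inwardNormal_mem hs) hs'
  set w := x - s • inwardNormal Ω x
  set w' := x' - s' • inwardNormal Ω x'
  rw [← neg_sub w w', inner_neg_right, real_inner_comm] at h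
  rw [real_inner_comm] at h'
  rw [inner_sub_right]
  linarith

lemma dist_le_dist_sub_smul_inwardNormal (hΩ : IsConvexDomain Ω) (hx : x ∈ regularSet Ω)
    (hx' : x' ∈ regularSet Ω) (ht : 0 ≤ t) :
    dist x x' ≤ dist (x - t • inwardNormal Ω x) (x' - t • inwardNormal Ω x') := by
  have hmono := inner_sub_inwardNormal_nonpos hΩ hx hx'
    (left_mem_Ico.2 (depth_pos hΩ.isOpen hΩ.ne_univ hx.1))
    (left_mem_Ico.2 (depth_pos hΩ.isOpen hΩ.ne_univ hx'.1))
  rw [zero_smul, zero_smul, sub_zero, sub_zero] at hmono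
  have h := sq_norm_add_sq_mul_norm_le_of_inner_nonpos hmono ht
  rw [smul_sub, sub_sub_sub_comm] at h
  rw [dist_eq_norm, dist_eq_norm]
  exact le_of_sq_le_sq (le_of_add_le_of_nonneg_left h (sq_nonneg _)) (norm_nonneg _)

/-- The point at depth `t` on the inward normal ray through `x`. -/
def levelPoint (Ω : Set E) (t : ℝ) (x : E) : E := footpoint Ω x + t • inwardNormal Ω x

lemma sq_dist_levelPoint_add_sq_le (hΩ : IsConvexDomain Ω) (hx : x ∈ regularSet Ω)
    (hx' : x' ∈ regularSet Ω) (ht : 0 < t) (htx : t ≤ depth Ω x) (htx' : t ≤ depth Ω x') :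
    dist (levelPoint Ω t x) (levelPoint Ω t x') ^ 2 +
      (t * dist (inwardNormal Ω x) (inwardNormal Ω x')) ^ 2 ≤
        dist (footpoint Ω x) (footpoint Ω x') ^ 2 := by
  have hlevel (z : E) : z - (depth Ω z - t) • inwardNormal Ω z = levelPoint Ω t z := by
    rw [levelPoint, footpoint, sub_smul]; abel
  have h := sq_norm_add_sq_mul_norm_le_of_inner_nonpos (inner_sub_inwardNormal_nonpos hΩ hx hx'
    (s := depth Ω x - t) (s' := depth Ω x' - t) ⟨sub_nonneg.2 htx, sub_lt_self _ ht⟩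
    ⟨sub_nonneg.2 htx', sub_lt_self _ ht⟩) ht.le
  rw [hlevel, hlevel, smul_sub, sub_sub_sub_comm] at h
  simpa only [dist_eq_norm, levelPoint, add_sub_cancel_right] using h

end ConvexDomain

section VolumeEstimates

lemma measure_le_measure_image_of_dist_le {E : Type*} [NormedAddCommGroup E] [NormedSpace ℝ E]
    [FiniteDimensional ℝ E] [MeasurableSpace E] [BorelSpace E] (μ : Measure E)
    [μ.IsAddHaarMeasure] {A : Set E} {Φ : E → E}
    (hΦ : ∀ x ∈ A, ∀ x' ∈ A, dist x x' ≤ dist (Φ x) (Φ x')) : μ A ≤ μ (Φ '' A) := by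
  have hanti : AntilipschitzWith 1 (A.domRestrict Φ) :=
    AntilipschitzWith.of_le_mul_dist fun x x' => (hΦ x x.2 x' x'.2).trans_eq (one_mul _).symm
  have h := hanti.le_hausdorffMeasure_image (Nat.cast_nonneg (Module.finrank ℝ E)) univ
  rw [← isometry_subtype_coe.hausdorffMeasure_image (Or.inl (Nat.cast_nonneg _)), image_univ,
    Subtype.range_coe, image_univ, range_domRestrict] at h
  rw [Measure.isAddLeftInvariant_eq_smul μ (Measure.hausdorffMeasure (Module.finrank ℝ E))]
  simp only [Measure.smul_apply]
  gcongr 1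
  simpa using h

variable {E : Type*} [NormedAddCommGroup E] [InnerProductSpace ℝ E] [FiniteDimensional ℝ E]
  [MeasurableSpace E] [BorelSpace E]

lemma volume_le_prod_of_enorm_inner_le {ι : Type*} [Fintype ι] (b : OrthonormalBasis ι ℝ E)
    {A : Set E} {w : ι → ℝ≥0∞} (hw : ∀ i, ∀ x ∈ A, ∀ x' ∈ A, ‖⟪b i, x - x'⟫‖ₑ ≤ w i) :
    volume A ≤ ∏ i, w i := by
  let Ψ := b.measurableEquiv.trans (MeasurableEquiv.toLp 2 (ι → ℝ)).symm
  have hΨ : MeasurePreserving Ψ := b.measurePreserving_measurableEquiv.trans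
    (EuclideanSpace.volume_preserving_symm_measurableEquiv_toLp ι)
  calc volume A = volume (Ψ '' A) := by
        rw [← hΨ.measure_preimage_equiv, Ψ.injective.preimage_image]
    _ ≤ ∏ i, ediam (Function.eval i '' (Ψ '' A)) := Real.volume_pi_le_prod_diam _
    _ ≤ ∏ i, w i := Finset.prod_le_prod' fun i _ => ediam_le <| by
        rintro _ ⟨_, ⟨x, hx, rfl⟩, rfl⟩ _ ⟨_, ⟨x', hx', rfl⟩, rfl⟩
        have h := hw i x hx x' hx'
        rwa [inner_sub_right, ← b.repr_apply_apply, ← b.repr_apply_apply,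
          ← edist_eq_enorm_sub] at h

lemma volume_le_of_enorm_inner_le {A : Set E} {e : E} (he : ‖e‖ = 1) {a b : ℝ≥0∞}
    (hb : ∀ x ∈ A, ∀ x' ∈ A, ‖⟪e, x - x'⟫‖ₑ ≤ b)
    (ha : ∀ f : E, ‖f‖ = 1 → ⟪e, f⟫ = 0 → ∀ x ∈ A, ∀ x' ∈ A, ‖⟪f, x - x'⟫‖ₑ ≤ a) :
    volume A ≤ b * a ^ (Module.finrank ℝ E - 1) := by
  classical
  have hortho : Orthonormal ℝ ((↑) : ({e} : Set E) → E) :=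
    ⟨fun i => by rw [i.2, he], fun i j hij => absurd (Subsingleton.elim i j) hij⟩
  obtain ⟨u, B, hu, hB⟩ := hortho.exists_orthonormalBasis_extension
  let i₀ : u := ⟨e, hu rfl⟩
  have hB₀ : B i₀ = e := by rw [hB]
  have hcard : Fintype.card u = Module.finrank ℝ E := (Module.finrank_eq_card_basis B.toBasis).symm
  calc volume A ≤ ∏ i, Function.update (fun _ => a) i₀ b i := by
        refine volume_le_prod_of_enorm_inner_le B fun i => ?_
        rcases eq_or_ne i i₀ with rfl | hi
        · simpa only [Function.update_self, hB₀] using hb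
        · rw [Function.update_of_ne hi]
          exact ha _ (B.orthonormal.1 i) (hB₀ ▸ B.orthonormal.2 hi.symm)
    _ = b * a ^ (Module.finrank ℝ E - 1) := by
        rw [Finset.prod_update_of_mem (Finset.mem_univ _), Finset.prod_const, ← hcard,
          Finset.card_sdiff_of_subset (Finset.subset_univ _), Finset.card_singleton,
          Finset.card_univ]

end VolumeEstimates

section Slab

variable {E : Type*} [NormedAddCommGroup E] [InnerProductSpace ℝ E]

/-- The regular points of `Ω` whose depth lies between `t` and `t + ε`. -/
def slab (Ω : Set E) (t ε : ℝ) : Set E := {x ∈ regularSet Ω | depth Ω x ∈ Icc t (t + ε)}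

section Measurability

variable [MeasurableSpace E] [BorelSpace E]

lemma measurableSet_regularSet {Ω : Set E} (ho : IsOpen Ω) : MeasurableSet (regularSet Ω) :=
  ho.measurableSet.inter (measurableSet_of_differentiableAt ℝ (depth Ω))

variable [CompleteSpace E] (Ω : Set E)

lemma measurable_inwardNormal : Measurable (inwardNormal Ω) :=
  (InnerProductSpace.toDual ℝ E).symm.continuous.measurable.comp (measurable_fderiv ℝ (depth Ω))

lemma measurable_footpoint [SecondCountableTopology E] : Measurable (footpoint Ω) :=
  measurable_id.sub ((measurable_depth Ω).smul (measurable_inwardNormal Ω))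

end Measurability

variable [FiniteDimensional ℝ E] {Ω : Set E} {t ε d : ℝ}

lemma regularSet_ae_eq [MeasurableSpace E] [BorelSpace E] (Ω : Set E) :
    regularSet Ω =ᵐ[volume] Ω := by
  filter_upwards [(lipschitzWith_depth Ω).ae_differentiableAt] with x hx
  exact propext (and_iff_left hx)

/- Within a slab `x - x'` differs from a multiple of the fixed normal at `x₀` by the displacement
of the level points plus at most `ε` times the variations of the normal. -/
lemma norm_sub_sub_smul_inwardNormal_le (hΩ : IsConvexDomain Ω) (ht : 0 < t) {U : Set E}
    (hU : ∀ y ∈ U, ∀ y' ∈ U, dist y y' ≤ d) {x x' x₀ : E}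
    (hx : x ∈ slab Ω t ε ∩ footpoint Ω ⁻¹' U) (hx' : x' ∈ slab Ω t ε ∩ footpoint Ω ⁻¹' U)
    (hx₀ : x₀ ∈ slab Ω t ε ∩ footpoint Ω ⁻¹' U) :
    ‖x - x' - (depth Ω x - depth Ω x') • inwardNormal Ω x₀‖ ≤ (1 + 2 * ε / t) * d := by
  have hlevel : ‖levelPoint Ω t x - levelPoint Ω t x'‖ ≤ d := by
    rw [← dist_eq_norm]
    have h := sq_dist_levelPoint_add_sq_le hΩ hx.1.1 hx'.1.1 ht hx.1.2.1 hx'.1.2.1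
    exact (le_of_sq_le_sq (le_of_add_le_of_nonneg_left h (sq_nonneg _)) dist_nonneg).trans
      (hU _ hx.2 _ hx'.2)
  have hnormal {z : E} (hz : z ∈ slab Ω t ε ∩ footpoint Ω ⁻¹' U) :
      ‖(depth Ω z - t) • (inwardNormal Ω z - inwardNormal Ω x₀)‖ ≤ ε * (d / t) := by
    have h := sq_dist_levelPoint_add_sq_le hΩ hz.1.1 hx₀.1.1 ht hz.1.2.1 hx₀.1.2.1
    have hdist : t * dist (inwardNormal Ω z) (inwardNormal Ω x₀) ≤ d :=
      (le_of_sq_le_sq (le_of_add_le_of_nonneg_right h (sq_nonneg _)) dist_nonneg).trans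
        (hU _ hz.2 _ hx₀.2)
    rw [norm_smul, Real.norm_of_nonneg (sub_nonneg.2 hz.1.2.1), ← dist_eq_norm]
    exact mul_le_mul (sub_le_iff_le_add'.2 hz.1.2.2) ((le_div_iff₀' ht).2 hdist) dist_nonneg
      (by linarith [hz.1.2.1, hz.1.2.2])
  calc ‖x - x' - (depth Ω x - depth Ω x') • inwardNormal Ω x₀‖
      = ‖levelPoint Ω t x - levelPoint Ω t x'
          + (depth Ω x - t) • (inwardNormal Ω x - inwardNormal Ω x₀)
          - (depth Ω x' - t) • (inwardNormal Ω x' - inwardNormal Ω x₀)‖ := by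
        simp only [levelPoint, footpoint]
        congr 1
        module
    _ ≤ d + ε * (d / t) + ε * (d / t) :=
        (norm_sub_le _ _).trans (add_le_add ((norm_add_le _ _).trans
          (add_le_add hlevel (hnormal hx))) (hnormal hx'))
    _ = (1 + 2 * ε / t) * d := by field_simp; ring

variable [MeasurableSpace E] [BorelSpace E]

lemma volume_slab_inter_preimage_le (hΩ : IsConvexDomain Ω) (ht : 0 < t) {U : Set E}
    (hU : ∀ y ∈ U, ∀ y' ∈ U, dist y y' ≤ d) :
    volume (slab Ω t ε ∩ footpoint Ω ⁻¹' U) ≤ ENNReal.ofReal (ε + (1 + 2 * ε / t) * d) *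
      ENNReal.ofReal ((1 + 2 * ε / t) * d) ^ (Module.finrank ℝ E - 1) := by
  rcases (slab Ω t ε ∩ footpoint Ω ⁻¹' U).eq_empty_or_nonempty with hempty | ⟨x₀, hx₀⟩
  · simp [hempty]
  have hwidth {f : E} (hf : ‖f‖ = 1) {x x' : E} (hx : x ∈ slab Ω t ε ∩ footpoint Ω ⁻¹' U)
      (hx' : x' ∈ slab Ω t ε ∩ footpoint Ω ⁻¹' U) :
      |⟪f, x - x'⟫| ≤ ε * |⟪f, inwardNormal Ω x₀⟫| + (1 + 2 * ε / t) * d := by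
    have hdepth : |depth Ω x - depth Ω x'| ≤ ε := by
      rw [abs_le]
      constructor <;> linarith [hx.1.2.1, hx.1.2.2, hx'.1.2.1, hx'.1.2.2]
    have hrest := (abs_real_inner_le_norm f _).trans
      (mul_le_mul_of_nonneg_left (norm_sub_sub_smul_inwardNormal_le hΩ ht hU hx hx' hx₀)
        (norm_nonneg f))
    rw [hf, one_mul, inner_sub_right, inner_smul_right] at hrest
    rw [← sub_add_cancel ⟪f, x - x'⟫ ((depth Ω x - depth Ω x') * ⟪f, inwardNormal Ω x₀⟫), add_comm]
    refine (abs_add_le _ _).trans (add_le_add ?_ hrest)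
    rw [abs_mul]
    gcongr
  have hν := norm_inwardNormal hΩ.isOpen hΩ.ne_univ hx₀.1.1
  refine volume_le_of_enorm_inner_le hν (fun x hx x' hx' => ?_) fun f hf hf₀ x hx x' hx' => ?_
  · rw [Real.enorm_eq_ofReal_abs]
    simpa [hν] using ENNReal.ofReal_le_ofReal (hwidth hν hx hx')
  · rw [Real.enorm_eq_ofReal_abs]
    simpa [real_inner_comm (inwardNormal Ω x₀) f, hf₀] using
      ENNReal.ofReal_le_ofReal (hwidth hf hx hx')

end Slab

section Coarea

lemma le_smul_hausdorffMeasure {X : Type*} [MetricSpace X] [MeasurableSpace X] [BorelSpace X]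
    {μ : Measure X} {e r : ℝ} {c : ℝ≥0∞} (hc₀ : c ≠ 0) (hc : c ≠ ∞) (hr : 0 < r)
    (h : ∀ s, IsClosed s → ∀ d ∈ Icc 0 r, (∀ x ∈ s, ∀ y ∈ s, dist x y ≤ d) →
      μ s ≤ c * ENNReal.ofReal d ^ e) :
    μ ≤ c • μH[e] := by
  suffices hle : c⁻¹ • μ ≤ μH[e] by
    intro s
    have := hle s
    rwa [Measure.smul_apply, smul_eq_mul, ← ENNReal.div_eq_inv_mul,
      ENNReal.div_le_iff' hc₀ hc] at this
  refine Measure.le_hausdorffMeasure e _ _ (ENNReal.ofReal_pos.2 hr) fun s hs => ?_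
  rw [← ediam_closure s] at hs ⊢
  rw [Measure.smul_apply, smul_eq_mul, ← ENNReal.div_eq_inv_mul, ENNReal.div_le_iff' hc₀ hc]
  have hfin : ediam (closure s) ≠ ∞ := ne_top_of_le_ne_top ENNReal.ofReal_ne_top hs
  have hd := h _ (isClosed_closure (s := s)) (ediam (closure s)).toReal
    ⟨ENNReal.toReal_nonneg, ENNReal.toReal_le_of_le_ofReal hr.le hs⟩ fun x hx y hy => by
      rw [dist_edist]
      exact ENNReal.toReal_mono hfin (edist_le_ediam_of_mem hx hy)
  rw [ENNReal.ofReal_toReal hfin] at hd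
  exact (measure_mono subset_closure).trans hd

variable {E : Type*} [NormedAddCommGroup E] [InnerProductSpace ℝ E] [FiniteDimensional ℝ E]
  [Nontrivial E] [MeasurableSpace E] [BorelSpace E] {Ω : Set E}

lemma map_footpoint_restrict_slab_le (hΩ : IsConvexDomain Ω) {t ε c : ℝ} (ht : 0 < t) (hε : 0 ≤ ε)
    (hc : ε * (1 + 2 * ε / t) ^ (Module.finrank ℝ E - 1) < c) :
    (volume.restrict (slab Ω t ε)).map (footpoint Ω) ≤
      ENNReal.ofReal c • μH[(Module.finrank ℝ E : ℝ) - 1] := by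
  set m := Module.finrank ℝ E - 1 with hm
  set κ := 1 + 2 * ε / t
  have hκ : 0 < κ := by positivity
  have hdim : (Module.finrank ℝ E : ℝ) - 1 = m := by
    rw [hm, Nat.cast_sub Module.finrank_pos, Nat.cast_one]
  obtain ⟨r, hr, hrc⟩ : ∃ r > 0, (ε + κ * r) * κ ^ m = c :=
    ⟨(c - ε * κ ^ m) / (κ * κ ^ m), div_pos (sub_pos.2 hc) (by positivity), by field_simp; ring⟩
  have hc₀ : 0 < c := hrc ▸ by positivity
  refine le_smul_hausdorffMeasure (ENNReal.ofReal_pos.2 hc₀).ne' ENNReal.ofReal_ne_top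
    hr fun s hs d ⟨_, hdr⟩ hdist => ?_
  have hmeas : MeasurableSet (footpoint Ω ⁻¹' s) := measurable_footpoint Ω hs.measurableSet
  rw [Measure.map_apply (measurable_footpoint Ω) hs.measurableSet, Measure.restrict_apply hmeas,
    inter_comm, hdim, ENNReal.rpow_natCast]
  calc volume (slab Ω t ε ∩ footpoint Ω ⁻¹' s)
      ≤ ENNReal.ofReal (ε + κ * d) * ENNReal.ofReal (κ * d) ^ m :=
        volume_slab_inter_preimage_le hΩ ht hdist
    _ ≤ ENNReal.ofReal (ε + κ * r) * ENNReal.ofReal (κ * d) ^ m := by gcongr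
    _ = ENNReal.ofReal c * ENNReal.ofReal d ^ m := by
        rw [ENNReal.ofReal_mul hκ.le, mul_pow, ← mul_assoc, ← ENNReal.ofReal_pow hκ.le,
          ← ENNReal.ofReal_mul (by positivity), hrc]

lemma volume_slab_inter_preimage_le_hausdorffMeasure (hΩ : IsConvexDomain Ω) {t ε : ℝ} (ht : 0 < t)
    (hε : 0 ≤ ε) {B : Set E} (hB : MeasurableSet B)
    (hB_fin : μH[(Module.finrank ℝ E : ℝ) - 1] B ≠ ∞) :
    volume (slab Ω t ε ∩ footpoint Ω ⁻¹' B) ≤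
      ENNReal.ofReal (ε * (1 + 2 * ε / t) ^ (Module.finrank ℝ E - 1)) *
        μH[(Module.finrank ℝ E : ℝ) - 1] B := by
  set m := Module.finrank ℝ E - 1
  set b := μH[(Module.finrank ℝ E : ℝ) - 1] B
  have hlim : Tendsto (fun c : ℝ => ENNReal.ofReal c * b) (𝓝[>] (ε * (1 + 2 * ε / t) ^ m))
      (𝓝 (ENNReal.ofReal (ε * (1 + 2 * ε / t) ^ m) * b)) :=
    ENNReal.Tendsto.mul_const ((ENNReal.continuous_ofReal.tendsto _).mono_left nhdsWithin_le_nhds)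
      (Or.inr hB_fin)
  refine ge_of_tendsto hlim (eventually_mem_nhdsWithin.mono fun c hc => ?_)
  have h := map_footpoint_restrict_slab_le hΩ ht hε hc B
  rwa [Measure.map_apply (measurable_footpoint Ω) hB,
    Measure.restrict_apply (measurable_footpoint Ω hB), inter_comm] at h

lemma subset_Icc_sInf_add {s : Set ℝ} (hs : BddBelow s) {d : ℝ}
    (hd : ∀ x ∈ s, ∀ y ∈ s, dist x y ≤ d) : s ⊆ Icc (sInf s) (sInf s + d) := fun x hx =>
  ⟨csInf_le hs hx, sub_le_iff_le_add.1 <| le_csInf ⟨x, hx⟩ fun y hy =>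
    sub_le_comm.1 ((le_abs_self _).trans (hd x hx y hy))⟩

lemma map_depth_restrict_Ici_le (hΩ : IsConvexDomain Ω) {B : Set E} (hB : MeasurableSet B)
    {c : ℝ≥0∞} (hBc : μH[(Module.finrank ℝ E : ℝ) - 1] B < c) (hc : c ≠ ∞) {t₀ : ℝ} (ht₀ : 0 < t₀) :
    ((volume.restrict (regularSet Ω ∩ footpoint Ω ⁻¹' B)).map (depth Ω)).restrict (Ici t₀) ≤
      c • volume := by
  set m := Module.finrank ℝ E - 1
  set b := μH[(Module.finrank ℝ E : ℝ) - 1] B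
  obtain ⟨r, hr, hrc⟩ : ∃ r > 0, ENNReal.ofReal ((1 + 2 * r / t₀) ^ m) * b < c := by
    have hlim : Tendsto (fun r : ℝ => ENNReal.ofReal ((1 + 2 * r / t₀) ^ m) * b) (𝓝[>] 0)
        (𝓝 b) := by
      have hcont : Continuous fun r : ℝ => ENNReal.ofReal ((1 + 2 * r / t₀) ^ m) :=
        ENNReal.continuous_ofReal.comp (by fun_prop)
      simpa using ENNReal.Tendsto.mul_const ((hcont.tendsto 0).mono_left nhdsWithin_le_nhds)
        (Or.inr hBc.ne_top)
    exact (eventually_mem_nhdsWithin.and (hlim.eventually_lt_const hBc)).exists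
  rw [← hausdorffMeasure_real]
  refine le_smul_hausdorffMeasure (pos_of_gt hBc).ne' hc hr fun s hs d ⟨hd, hdr⟩ hdist => ?_
  set t := sInf (s ∩ Ici t₀)
  have hslab : depth Ω ⁻¹' (s ∩ Ici t₀) ∩ (regularSet Ω ∩ footpoint Ω ⁻¹' B) ⊆
      slab Ω t d ∩ footpoint Ω ⁻¹' B := fun x ⟨hxs, hx, hxB⟩ =>
    ⟨⟨hx, subset_Icc_sInf_add ⟨t₀, fun _ h => h.2⟩
      (fun y hy z hz => hdist y hy.1 z hz.1) hxs⟩, hxB⟩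
  have hs' : MeasurableSet (s ∩ Ici t₀) := hs.measurableSet.inter measurableSet_Ici
  rw [Measure.restrict_apply hs.measurableSet, Measure.map_apply (measurable_depth Ω) hs',
    Measure.restrict_apply (measurable_depth Ω hs'), ENNReal.rpow_one]
  rcases (s ∩ Ici t₀).eq_empty_or_nonempty with hempty | hne
  · simp [hempty]
  have ht : t₀ ≤ t := le_csInf hne fun _ h => h.2
  have ht_pos : 0 < t := ht₀.trans_le ht
  calc volume (depth Ω ⁻¹' (s ∩ Ici t₀) ∩ (regularSet Ω ∩ footpoint Ω ⁻¹' B))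
      ≤ ENNReal.ofReal (d * (1 + 2 * d / t) ^ m) * b := (measure_mono hslab).trans
        (volume_slab_inter_preimage_le_hausdorffMeasure hΩ ht_pos hd hB hBc.ne_top)
    _ ≤ ENNReal.ofReal (d * (1 + 2 * r / t₀) ^ m) * b := by gcongr
    _ = ENNReal.ofReal ((1 + 2 * r / t₀) ^ m) * b * ENNReal.ofReal d := by
        rw [ENNReal.ofReal_mul hd]; ring
    _ ≤ c * ENNReal.ofReal d := by gcongr

lemma map_depth_restrict_Ioi_le (hΩ : IsConvexDomain Ω) {B : Set E} (hB : MeasurableSet B)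
    {c : ℝ≥0∞} (hBc : μH[(Module.finrank ℝ E : ℝ) - 1] B < c) (hc : c ≠ ∞) :
    ((volume.restrict (regularSet Ω ∩ footpoint Ω ⁻¹' B)).map (depth Ω)).restrict (Ioi 0) ≤
      c • volume := by
  have hIoi : Ioi (0 : ℝ) = ⋃ k : ℕ, Ici (1 / ((k : ℝ) + 1)) := by
    ext t
    simp only [mem_Ioi, mem_iUnion, mem_Ici]
    exact ⟨fun ht => (exists_nat_one_div_lt ht).imp fun _ h => h.le,
      fun ⟨_, hk⟩ => Nat.one_div_pos_of_nat.trans_le hk⟩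
  have hmono : Monotone fun k : ℕ => Ici (1 / ((k : ℝ) + 1)) := fun _ _ h =>
    Ici_subset_Ici.2 (Nat.one_div_le_one_div h)
  refine Measure.le_iff.2 fun s hs => ?_
  rw [hIoi, Measure.restrict_iUnion_apply_eq_iSup hmono.directed_le hs]
  exact iSup_le fun k => map_depth_restrict_Ici_le hΩ hB hBc hc Nat.one_div_pos_of_nat s

lemma lintegral_depth_le (hΩ : IsConvexDomain Ω) {B : Set E} (hB : MeasurableSet B)
    {g : ℝ → ℝ≥0∞} (hg : Measurable g) (hg₀ : ∫⁻ t in Ioi 0, g t ≠ 0)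
    (hg_fin : ∫⁻ t in Ioi 0, g t ≠ ∞) :
    ∫⁻ x in regularSet Ω ∩ footpoint Ω ⁻¹' B, g (depth Ω x) ≤
      (∫⁻ t in Ioi 0, g t) * μH[(Module.finrank ℝ E : ℝ) - 1] B := by
  refine ENNReal.le_mul_of_forall_lt (.inl hg₀) (.inl hg_fin) fun I hI c hc => ?_
  rcases eq_or_ne c ∞ with rfl | hc_fin
  · simp [ENNReal.mul_top (pos_of_gt hI).ne']
  set ν := (volume.restrict (regularSet Ω ∩ footpoint Ω ⁻¹' B)).map (depth Ω)
  have hν_pos : ∀ᵐ t ∂ν, t ∈ Ioi (0 : ℝ) := by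
    refine (ae_map_iff (measurable_depth Ω).aemeasurable measurableSet_Ioi).2 ?_
    refine ae_restrict_of_forall_mem ?_ fun x hx => depth_pos hΩ.isOpen hΩ.ne_univ hx.1.1
    exact (measurableSet_regularSet hΩ.isOpen).inter (measurable_footpoint Ω hB)
  calc ∫⁻ x in regularSet Ω ∩ footpoint Ω ⁻¹' B, g (depth Ω x)
      = ∫⁻ t, g t ∂ν.restrict (Ioi 0) := by
        rw [Measure.restrict_eq_self_of_ae_mem hν_pos, lintegral_map hg (measurable_depth Ω)]
    _ = ∫⁻ t in Ioi 0, g t ∂ν.restrict (Ioi 0) := by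
        rw [Measure.restrict_restrict measurableSet_Ioi, inter_self]
    _ ≤ ∫⁻ t in Ioi 0, g t ∂(c • volume) :=
        lintegral_mono' (Measure.restrict_mono subset_rfl
          (map_depth_restrict_Ioi_le hΩ hB hc hc_fin)) le_rfl
    _ = c * ∫⁻ t in Ioi 0, g t := by
        rw [Measure.restrict_smul, lintegral_smul_measure, smul_eq_mul]
    _ ≤ I * c := by rw [mul_comm]; gcongr

theorem lintegral_depth_mul_footpoint_le (hΩ : IsConvexDomain Ω)
    {g : ℝ → ℝ≥0∞} (hg : Measurable g) (hg₀ : ∫⁻ t in Ioi 0, g t ≠ 0)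
    (hg_fin : ∫⁻ t in Ioi 0, g t ≠ ∞) {F : E → ℝ≥0∞} (hF : Measurable F) :
    ∫⁻ x in Ω, g (depth Ω x) * F (footpoint Ω x) ≤
      (∫⁻ t in Ioi 0, g t) * ∫⁻ y in frontier Ω, F y ∂μH[(Module.finrank ℝ E : ℝ) - 1] := by
  set ρ := (volume.restrict (regularSet Ω)).withDensity fun x => g (depth Ω x)
  have hle : ρ.map (footpoint Ω) ≤ (∫⁻ t in Ioi 0, g t) •
      (μH[(Module.finrank ℝ E : ℝ) - 1]).restrict (frontier Ω) := by
    refine Measure.le_iff.2 fun B hB => ?_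
    rw [Measure.map_apply (measurable_footpoint Ω) hB,
      withDensity_apply _ (measurable_footpoint Ω hB),
      Measure.restrict_restrict (measurable_footpoint Ω hB), inter_comm, Measure.smul_apply,
      smul_eq_mul, Measure.restrict_apply hB]
    have hsub : regularSet Ω ∩ footpoint Ω ⁻¹' B ⊆
        regularSet Ω ∩ footpoint Ω ⁻¹' (B ∩ frontier Ω) := fun x ⟨hx, hxB⟩ =>
      ⟨hx, hxB, footpoint_mem_frontier hΩ.isOpen hΩ.ne_univ hx⟩
    exact (lintegral_mono_set hsub).trans
      (lintegral_depth_le hΩ (hB.inter isClosed_frontier.measurableSet) hg hg₀ hg_fin)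
  calc ∫⁻ x in Ω, g (depth Ω x) * F (footpoint Ω x)
      = ∫⁻ x, F (footpoint Ω x) ∂ρ := by
        rw [← setLIntegral_congr (regularSet_ae_eq Ω)]
        exact (lintegral_withDensity_eq_lintegral_mul _ (hg.comp (measurable_depth Ω))
          (hF.comp (measurable_footpoint Ω))).symm
    _ = ∫⁻ y, F y ∂ρ.map (footpoint Ω) := (lintegral_map hF (measurable_footpoint Ω)).symm
    _ ≤ _ := by
        rw [← smul_eq_mul, ← lintegral_smul_measure]
        exact lintegral_mono' hle le_rfl

end Coarea

lemma lintegral_comp_le_of_dist_le {E : Type*} [NormedAddCommGroup E] [NormedSpace ℝ E]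
    [FiniteDimensional ℝ E] [MeasurableSpace E] [BorelSpace E] (μ : Measure E)
    [μ.IsAddHaarMeasure] {A B : Set E} {Φ : E → E} (hΦm : Measurable Φ) (hΦAB : MapsTo Φ A B)
    (hΦ : ∀ x ∈ A, ∀ x' ∈ A, dist x x' ≤ dist (Φ x) (Φ x')) {H : E → ℝ≥0∞} (hH : Measurable H) :
    ∫⁻ x in A, H (Φ x) ∂μ ≤ ∫⁻ y in B, H y ∂μ := by
  have hmap : (μ.restrict A).map Φ ≤ μ.restrict B := Measure.le_iff.2 fun S hS => by
    rw [Measure.map_apply hΦm hS, Measure.restrict_apply (hΦm hS), Measure.restrict_apply hS]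
    calc μ (Φ ⁻¹' S ∩ A) ≤ μ (Φ '' (Φ ⁻¹' S ∩ A)) :=
          measure_le_measure_image_of_dist_le μ fun x hx x' hx' => hΦ x hx.2 x' hx'.2
      _ ≤ μ (S ∩ B) := measure_mono (image_subset_iff.2 fun x hx => ⟨hx.1, hΦAB hx.2⟩)
  calc ∫⁻ x in A, H (Φ x) ∂μ = ∫⁻ y, H y ∂(μ.restrict A).map Φ := (lintegral_map hH hΦm).symm
    _ ≤ ∫⁻ y in B, H y ∂μ := lintegral_mono' hmap le_rfl

section FundamentalTheorem

variable {F : Type*} [NormedAddCommGroup F] [NormedSpace ℝ F] [CompleteSpace F]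

lemma enorm_sub_le_lintegral_enorm_deriv {φ : ℝ → F} {a b : ℝ} (hab : a ≤ b)
    (hcont : ContinuousOn φ (Icc a b)) (hdiff : ∀ t ∈ Ioo a b, DifferentiableAt ℝ φ t) :
    ‖φ b - φ a‖ₑ ≤ ∫⁻ t in Ioo a b, ‖deriv φ t‖ₑ := by
  rcases eq_or_ne (∫⁻ t in Ioo a b, ‖deriv φ t‖ₑ) ∞ with htop | htop
  · exact htop ▸ le_top
  have hint : IntegrableOn (deriv φ) (Ioo a b) :=
    ⟨aestronglyMeasurable_deriv φ _, lt_top_iff_ne_top.2 htop⟩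
  rw [← intervalIntegral.integral_eq_sub_of_hasDerivAt_of_le hab hcont
      (fun t ht => (hdiff t ht).hasDerivAt)
      ((intervalIntegrable_iff_integrableOn_Ioo_of_le hab).2 hint),
    intervalIntegral.integral_of_le hab, integral_Ioc_eq_integral_Ioo]
  exact enorm_integral_le_lintegral_enorm _

variable {E : Type*} [NormedAddCommGroup E] [InnerProductSpace ℝ E] [FiniteDimensional ℝ E]
  {Ω : Set E} {f : E → F}

lemma enorm_le_enorm_footpoint_add_lintegral (ho : IsOpen Ω) (hne : Ω ≠ univ)
    (hf : ContinuousOn f (closure Ω)) (hfd : ∀ x ∈ Ω, DifferentiableAt ℝ f x) {x : E}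
    (hx : x ∈ regularSet Ω) :
    ‖f x‖ₑ ≤ ‖f (footpoint Ω x)‖ₑ +
      ∫⁻ t in Ioo 0 (depth Ω x), ‖fderiv ℝ f (x - t • inwardNormal Ω x)‖ₑ := by
  set e := inwardNormal Ω x
  set φ : ℝ → F := fun t => f (x - t • e)
  have hφ' : ∀ t ∈ Ioo 0 (depth Ω x), HasDerivAt φ (fderiv ℝ f (x - t • e) (-e)) t := by
    intro t ht
    have hray : HasDerivAt (fun s : ℝ => x - s • e) (-e) t := by
      simpa using ((hasDerivAt_id t).smul_const e).const_sub x
    exact (hfd _ (sub_smul_inwardNormal_mem (Ioo_subset_Ico_self ht))).hasFDerivAt.comp_hasDerivAt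
      t hray
  have hmaps : MapsTo (fun t : ℝ => x - t • e) (Icc 0 (depth Ω x)) (closure Ω) := by
    intro t ht
    rcases ht.2.lt_or_eq with hlt | rfl
    · exact subset_closure (sub_smul_inwardNormal_mem ⟨ht.1, hlt⟩)
    · exact frontier_subset_closure (footpoint_mem_frontier ho hne hx)
  have hcont : ContinuousOn φ (Icc 0 (depth Ω x)) := hf.comp (by fun_prop) hmaps
  have hnorm : ∀ t ∈ Ioo 0 (depth Ω x), ‖deriv φ t‖ₑ ≤ ‖fderiv ℝ f (x - t • e)‖ₑ := by
    intro t ht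
    rw [(hφ' t ht).deriv]
    refine ((fderiv ℝ f (x - t • e)).le_opENorm (-e)).trans_eq ?_
    rw [enorm_neg, ← ofReal_norm e, norm_inwardNormal ho hne hx, ENNReal.ofReal_one, mul_one]
  calc ‖f x‖ₑ = ‖φ (depth Ω x) - (φ (depth Ω x) - φ 0)‖ₑ := by simp [φ]
    _ ≤ ‖φ (depth Ω x)‖ₑ + ‖φ (depth Ω x) - φ 0‖ₑ := enorm_sub_le
    _ ≤ ‖f (footpoint Ω x)‖ₑ + ∫⁻ t in Ioo 0 (depth Ω x), ‖deriv φ t‖ₑ := by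
        refine add_le_add_right (enorm_sub_le_lintegral_enorm_deriv depth_nonneg hcont ?_) _
        exact fun t ht => (hφ' t ht).differentiableAt
    _ ≤ _ := add_le_add_right (setLIntegral_mono' measurableSet_Ioo hnorm) _

variable [MeasurableSpace E] [BorelSpace E]

lemma lintegral_depth_mul_comp_sub_smul_le (hΩ : IsConvexDomain Ω) {t : ℝ} (ht : 0 ≤ t)
    {g : ℝ → ℝ≥0∞} (hg : Measurable g) {H : E → ℝ≥0∞} (hH : Measurable H) :
    ∫⁻ x in regularSet Ω ∩ {x | t < depth Ω x}, g (depth Ω x) * H (x - t • inwardNormal Ω x) ≤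
      ∫⁻ x in Ω, g (depth Ω x + t) * H x := by
  have hδ := measurable_depth Ω
  have hν := measurable_inwardNormal Ω
  have hmeas : MeasurableSet (regularSet Ω ∩ {x | t < depth Ω x}) :=
    (measurableSet_regularSet hΩ.isOpen).inter (measurableSet_lt measurable_const hδ)
  calc ∫⁻ x in regularSet Ω ∩ {x | t < depth Ω x}, g (depth Ω x) * H (x - t • inwardNormal Ω x)
      = ∫⁻ x in regularSet Ω ∩ {x | t < depth Ω x},
          (fun y => g (depth Ω y + t) * H y) (x - t • inwardNormal Ω x) :=
        setLIntegral_congr_fun hmeas fun x hx => by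
          simp only [depth_sub_smul_inwardNormal hΩ.isOpen hΩ.ne_univ hx.1 ⟨ht, hx.2.le⟩,
            sub_add_cancel]
    _ ≤ ∫⁻ x in Ω, g (depth Ω x + t) * H x :=
        lintegral_comp_le_of_dist_le volume (by fun_prop)
          (fun x hx => sub_smul_inwardNormal_mem ⟨ht, hx.2⟩)
          (fun x hx x' hx' => dist_le_dist_sub_smul_inwardNormal hΩ hx.1 hx'.1 ht)
          (by fun_prop)

lemma lintegral_depth_mul_segment_le (hΩ : IsConvexDomain Ω) {g : ℝ → ℝ≥0∞} (hg : Measurable g)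
    {H : E → ℝ≥0∞} (hH : Measurable H) :
    ∫⁻ x in Ω, g (depth Ω x) * ∫⁻ t in Ioo 0 (depth Ω x), H (x - t • inwardNormal Ω x) ≤
      ∫⁻ x in Ω, (∫⁻ t in Ioi 0, g (depth Ω x + t)) * H x := by
  have hδ := measurable_depth Ω
  have hν := measurable_inwardNormal Ω
  let K : E → ℝ → ℝ≥0∞ := fun x t =>
    (Iio (depth Ω x)).indicator (fun t => g (depth Ω x) * H (x - t • inwardNormal Ω x)) t
  have hK : Measurable (Function.uncurry K) := by
    refine Measurable.indicator (s := {q : E × ℝ | q.2 < depth Ω q.1}) ?_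
      (measurableSet_lt measurable_snd (by fun_prop))
    fun_prop
  have hpush : ∀ t ∈ Ioi (0 : ℝ),
      ∫⁻ x in regularSet Ω, K x t ≤ ∫⁻ x in Ω, g (depth Ω x + t) * H x := by
    intro t ht
    have hlt : MeasurableSet {x | t < depth Ω x} := measurableSet_lt measurable_const hδ
    refine le_trans (le_of_eq ?_) (lintegral_depth_mul_comp_sub_smul_le hΩ ht.le hg hH)
    rw [inter_comm, ← Measure.restrict_restrict hlt, ← lintegral_indicator hlt]
    rfl
  calc ∫⁻ x in Ω, g (depth Ω x) * ∫⁻ t in Ioo 0 (depth Ω x), H (x - t • inwardNormal Ω x)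
      = ∫⁻ x in regularSet Ω, ∫⁻ t in Ioi 0, K x t := by
        rw [← setLIntegral_congr (regularSet_ae_eq Ω)]
        refine lintegral_congr fun x => ?_
        rw [lintegral_indicator measurableSet_Iio, Measure.restrict_restrict measurableSet_Iio,
          inter_comm, Ioi_inter_Iio, lintegral_const_mul _ (by fun_prop)]
    _ = ∫⁻ t in Ioi 0, ∫⁻ x in regularSet Ω, K x t := lintegral_lintegral_swap hK.aemeasurable
    _ ≤ ∫⁻ t in Ioi 0, ∫⁻ x in Ω, g (depth Ω x + t) * H x :=
        setLIntegral_mono' measurableSet_Ioi hpush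
    _ = ∫⁻ x in Ω, ∫⁻ t in Ioi 0, g (depth Ω x + t) * H x :=
        lintegral_lintegral_swap (Measurable.aemeasurable (by fun_prop))
    _ = ∫⁻ x in Ω, (∫⁻ t in Ioi 0, g (depth Ω x + t)) * H x :=
        lintegral_congr fun x => lintegral_mul_const _ (by fun_prop)

theorem lintegral_depth_mul_enorm_le [Nontrivial E] (hΩ : IsConvexDomain Ω)
    (hf : ContinuousOn f (closure Ω)) (hfd : ∀ x ∈ Ω, DifferentiableAt ℝ f x) {g : ℝ → ℝ≥0∞}
    (hg : Measurable g) (hg₀ : ∫⁻ t in Ioi 0, g t ≠ 0) (hg_fin : ∫⁻ t in Ioi 0, g t ≠ ∞) :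
    ∫⁻ x in Ω, g (depth Ω x) * ‖f x‖ₑ ≤
      (∫⁻ t in Ioi 0, g t) * ∫⁻ y in frontier Ω, ‖f y‖ₑ ∂μH[(Module.finrank ℝ E : ℝ) - 1] +
        ∫⁻ x in Ω, (∫⁻ t in Ioi 0, g (depth Ω x + t)) * ‖fderiv ℝ f x‖ₑ := by
  set T : E → ℝ≥0∞ := (closure Ω).indicator fun y => ‖f y‖ₑ
  have hTm : Measurable T := by
    classical
    have h := ContinuousOn.measurable_piecewise hf.enorm
      (continuousOn_const (c := (0 : ℝ≥0∞))) isClosed_closure.measurableSet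
    rwa [show (fun _ : E => (0 : ℝ≥0∞)) = 0 from rfl, piecewise_eq_indicator] at h
  have hT : ∀ y ∈ frontier Ω, T y = ‖f y‖ₑ := fun y hy =>
    indicator_of_mem (frontier_subset_closure hy) _
  have hpt : ∀ x ∈ regularSet Ω, g (depth Ω x) * ‖f x‖ₑ ≤ g (depth Ω x) * T (footpoint Ω x) +
      g (depth Ω x) * ∫⁻ t in Ioo 0 (depth Ω x), ‖fderiv ℝ f (x - t • inwardNormal Ω x)‖ₑ := by
    intro x hx
    rw [← mul_add, hT _ (footpoint_mem_frontier hΩ.isOpen hΩ.ne_univ hx)]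
    gcongr
    exact enorm_le_enorm_footpoint_add_lintegral hΩ.isOpen hΩ.ne_univ hf hfd hx
  rw [← setLIntegral_congr_fun isClosed_frontier.measurableSet hT]
  refine le_trans ?_ (add_le_add (lintegral_depth_mul_footpoint_le hΩ hg hg₀ hg_fin hTm)
    (lintegral_depth_mul_segment_le hΩ hg (measurable_fderiv ℝ f).enorm))
  have hmeas : Measurable fun x => g (depth Ω x) * T (footpoint Ω x) :=
    (hg.comp (measurable_depth Ω)).mul (hTm.comp (measurable_footpoint Ω))
  rw [← lintegral_add_left hmeas, ← setLIntegral_congr (regularSet_ae_eq Ω),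
    ← setLIntegral_congr (regularSet_ae_eq Ω)]
  exact setLIntegral_mono' (measurableSet_regularSet hΩ.isOpen) hpt

end FundamentalTheorem

lemma alphaC_pos {p σ : ℝ} (hp : 1 < p) (hσ : 0 < σ) : 0 < alphaC p σ :=
  mul_pos (div_pos (sub_pos.2 hp) (zero_lt_one.trans hp)) (Real.rpow_pos_of_pos hσ _)

lemma lintegral_Ioi_ofReal_add_rpow_neg {p a : ℝ} (hp : 1 < p) (ha : 0 < a) :
    ∫⁻ t in Ioi 0, ENNReal.ofReal ((p - 1) * (a + t) ^ (-p)) = ENNReal.ofReal (a ^ (1 - p)) := by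
  have hshift : ∫⁻ t in Ioi 0, ENNReal.ofReal ((p - 1) * (a + t) ^ (-p)) =
      ∫⁻ t in Ioi a, ENNReal.ofReal ((p - 1) * t ^ (-p)) := by
    have h := (measurePreserving_add_left volume a).setLIntegral_comp_preimage_emb
      (measurableEmbedding_addLeft a) (fun t => ENNReal.ofReal ((p - 1) * t ^ (-p))) (Ioi a)
    rwa [preimage_const_add_Ioi, sub_self] at h
  have hint := integrableOn_Ioi_rpow_of_lt (neg_lt_neg hp) ha
  rw [hshift, ← ofReal_integral_eq_lintegral_ofReal (hint.const_mul _), integral_const_mul,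
    integral_Ioi_rpow_of_lt (neg_lt_neg hp) ha, neg_add_eq_sub, neg_div, ← div_neg, neg_sub,
    mul_div_cancel₀ _ (sub_pos.2 hp).ne']
  exact ae_restrict_of_forall_mem measurableSet_Ioi fun t ht =>
    mul_nonneg (sub_nonneg.2 hp.le) (Real.rpow_nonneg (ha.trans ht).le _)

lemma mul_rpow_sub_one_mul_le {p c X Y : ℝ} (hp : 1 < p) (hc : 0 < c) (hX : 0 ≤ X) (hY : 0 ≤ Y) :
    p * X ^ (p - 1) * Y ≤ c ^ (1 - p) * Y ^ p + (p - 1) * c * X ^ p := by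
  have : 0 < p := zero_lt_one.trans hp
  have hp₁ : 0 < p - 1 := sub_pos.2 hp
  have hconj : (p / (p - 1)).HolderConjugate p := (Real.HolderConjugate.conjExponent hp).symm
  have hyoung := Real.young_inequality_of_nonneg (a := (c * X) ^ (p - 1)) (by positivity) hY hconj
  rw [← Real.rpow_mul (by positivity), mul_div_cancel₀ _ hp₁.ne', Real.mul_rpow hc.le hX,
    Real.mul_rpow hc.le hX] at hyoung
  have hc_one : c ^ (1 - p) * c ^ (p - 1) = 1 := by simp [← Real.rpow_add hc]
  have hc_self : c ^ (1 - p) * c ^ p = c := by simp [← Real.rpow_add hc]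
  calc p * X ^ (p - 1) * Y = p * c ^ (1 - p) * (c ^ (p - 1) * X ^ (p - 1) * Y) := by
        linear_combination (-p * X ^ (p - 1) * Y) * hc_one
    _ ≤ p * c ^ (1 - p) * (c ^ p * X ^ p / (p / (p - 1)) + Y ^ p / p) := by gcongr
    _ = c ^ (1 - p) * Y ^ p + (p - 1) * (c ^ (1 - p) * c ^ p) * X ^ p := by field_simp; ring
    _ = c ^ (1 - p) * Y ^ p + (p - 1) * c * X ^ p := by rw [hc_self]

lemma lintegral_rpow_div_depth_add_ne_top {E F : Type*} [NormedAddCommGroup E] [MeasureSpace E]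
    [NormedAddCommGroup F] {Ω : Set E} {u : E → F} {p a : ℝ} (hp : 1 < p) (ha : 0 < a)
    (hu : ∫⁻ x in Ω, ENNReal.ofReal (‖u x‖ ^ p) ≠ ∞) :
    ∫⁻ x in Ω, ENNReal.ofReal (‖u x‖ ^ p / (depth Ω x + a) ^ p) ≠ ∞ := by
  refine ne_top_of_le_ne_top
    (ENNReal.mul_ne_top (ENNReal.ofReal_ne_top (r := (a ^ p)⁻¹)) hu) ?_
  rw [← lintegral_const_mul' _ _ ENNReal.ofReal_ne_top]
  refine lintegral_mono fun x => ?_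
  rw [← ENNReal.ofReal_mul (by positivity), inv_mul_eq_div]
  have := depth_nonneg (Ω := Ω) (x := x)
  gcongr
  linarith

section HilbertValued

variable {F : Type*} [NormedAddCommGroup F] [InnerProductSpace ℝ F]

lemma differentiableAt_norm_rpow_and_norm_fderiv_le {E : Type*} [NormedAddCommGroup E]
    [NormedSpace ℝ E] {u : E → F} {x : E} {p : ℝ} (hu : DifferentiableAt ℝ u x) (hp : 1 < p) :
    DifferentiableAt ℝ (fun y => ‖u y‖ ^ p) x ∧
      ‖fderiv ℝ (fun y => ‖u y‖ ^ p) x‖ ≤ p * ‖u x‖ ^ (p - 1) * ‖fderiv ℝ u x‖ := by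
  have hpow : DifferentiableAt ℝ (fun z : F => ‖z‖ ^ p) (u x) :=
    (contDiff_norm_rpow hp).differentiable one_ne_zero (u x)
  have hcomp := hpow.hasFDerivAt.comp x hu.hasFDerivAt
  refine ⟨hcomp.differentiableAt, ?_⟩
  rw [← norm_fderiv_norm_id_rpow (u x) hp]
  exact (congrArg norm hcomp.fderiv).trans_le (ContinuousLinearMap.opNorm_comp_le _ _)

variable {E : Type*} [NormedAddCommGroup E] [InnerProductSpace ℝ E] [FiniteDimensional ℝ E]
  [MeasurableSpace E] [BorelSpace E] {Ω : Set E} {u : E → F} {p a : ℝ}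

variable [CompleteSpace F]

lemma lintegral_rpow_sub_one_mul_fderiv_le {c : ℝ} (hp : 1 < p) (ha : 0 < a) (hc : 0 < c) :
    ∫⁻ x in Ω, ENNReal.ofReal ((a + depth Ω x) ^ (1 - p)) *
        ENNReal.ofReal (p * ‖u x‖ ^ (p - 1) * ‖fderiv ℝ u x‖) ≤
      ENNReal.ofReal (c ^ (1 - p)) * (∫⁻ x in Ω, ENNReal.ofReal (‖fderiv ℝ u x‖ ^ p)) +
        ENNReal.ofReal ((p - 1) * c) *
          ∫⁻ x in Ω, ENNReal.ofReal (‖u x‖ ^ p / (depth Ω x + a) ^ p) := by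
  have : 0 < p - 1 := sub_pos.2 hp
  have hmeas : Measurable fun x => ENNReal.ofReal (c ^ (1 - p)) *
      ENNReal.ofReal (‖fderiv ℝ u x‖ ^ p) := by
    have := (measurable_fderiv ℝ u).norm
    fun_prop
  rw [← lintegral_const_mul' _ _ ENNReal.ofReal_ne_top,
    ← lintegral_const_mul' _ _ ENNReal.ofReal_ne_top, ← lintegral_add_left hmeas]
  refine lintegral_mono fun x => ?_
  have hδ : 0 < depth Ω x + a := add_pos_of_nonneg_of_pos depth_nonneg ha
  rw [add_comm a, ← ENNReal.ofReal_mul (by positivity), ← ENNReal.ofReal_mul (by positivity),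
    ← ENNReal.ofReal_mul (by positivity), ← ENNReal.ofReal_add (by positivity) (by positivity)]
  refine ENNReal.ofReal_le_ofReal ?_
  have hyoung := mul_rpow_sub_one_mul_le hp hc (by positivity : 0 ≤ ‖u x‖ / (depth Ω x + a))
    (norm_nonneg (fderiv ℝ u x))
  rw [Real.div_rpow (norm_nonneg _) hδ.le, Real.div_rpow (norm_nonneg _) hδ.le] at hyoung
  refine le_of_eq_of_le ?_ hyoung
  rw [← neg_sub p 1, Real.rpow_neg hδ.le]
  ring

variable [Nontrivial E]

lemma sub_one_mul_lintegral_rpow_div_depth_le {c : ℝ} (hΩ : IsConvexDomain Ω) (hp : 1 < p)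
    (ha : 0 < a) (hc : 0 < c) (hu : ContinuousOn u (closure Ω))
    (hud : ∀ x ∈ Ω, DifferentiableAt ℝ u x) :
    ENNReal.ofReal (p - 1) * ∫⁻ x in Ω, ENNReal.ofReal (‖u x‖ ^ p / (depth Ω x + a) ^ p) ≤
      ENNReal.ofReal (a ^ (1 - p)) *
          ∫⁻ y in frontier Ω, ENNReal.ofReal (‖u y‖ ^ p) ∂μH[(Module.finrank ℝ E : ℝ) - 1] +
        (ENNReal.ofReal (c ^ (1 - p)) * (∫⁻ x in Ω, ENNReal.ofReal (‖fderiv ℝ u x‖ ^ p)) +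
          ENNReal.ofReal ((p - 1) * c) *
            ∫⁻ x in Ω, ENNReal.ofReal (‖u x‖ ^ p / (depth Ω x + a) ^ p)) := by
  set g : ℝ → ℝ≥0∞ := fun t => ENNReal.ofReal ((p - 1) * (a + t) ^ (-p)) with hg
  set f : E → ℝ := fun x => ‖u x‖ ^ p
  have hf : ContinuousOn f (closure Ω) := hu.norm.rpow_const fun _ _ => .inr (by linarith)
  have hf' := fun x hx => differentiableAt_norm_rpow_and_norm_fderiv_le (hud x hx) hp
  have henorm : ∀ x, ‖f x‖ₑ = ENNReal.ofReal (‖u x‖ ^ p) := fun x =>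
    Real.enorm_of_nonneg (by positivity)
  have hg_int : ∫⁻ t in Ioi 0, g t = ENNReal.ofReal (a ^ (1 - p)) :=
    lintegral_Ioi_ofReal_add_rpow_neg hp ha
  have hg_shift : ∀ x, ∫⁻ t in Ioi 0, g (depth Ω x + t) =
      ENNReal.ofReal ((a + depth Ω x) ^ (1 - p)) := fun x => by
    simpa only [hg, ← add_assoc] using
      lintegral_Ioi_ofReal_add_rpow_neg hp (add_pos_of_pos_of_nonneg ha depth_nonneg)
  have hcore := lintegral_depth_mul_enorm_le hΩ hf (fun x hx => (hf' x hx).1)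
    (g := g) (by fun_prop) (by rw [hg_int]; positivity)
    (by rw [hg_int]; exact ENNReal.ofReal_ne_top)
  simp only [henorm, hg_int, hg_shift] at hcore
  calc ENNReal.ofReal (p - 1) * ∫⁻ x in Ω, ENNReal.ofReal (‖u x‖ ^ p / (depth Ω x + a) ^ p)
      = ∫⁻ x in Ω, g (depth Ω x) * ENNReal.ofReal (‖u x‖ ^ p) := by
        rw [← lintegral_const_mul' _ _ ENNReal.ofReal_ne_top]
        refine lintegral_congr fun x => ?_
        have hδ : 0 < a + depth Ω x := add_pos_of_pos_of_nonneg ha depth_nonneg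
        rw [← ENNReal.ofReal_mul (sub_nonneg.2 hp.le), ← ENNReal.ofReal_mul, Real.rpow_neg hδ.le,
          add_comm a]
        · ring_nf
        · exact mul_nonneg (sub_nonneg.2 hp.le) (by positivity)
    _ ≤ _ := hcore.trans <| add_le_add_right ?_ _
  refine (setLIntegral_mono' hΩ.isOpen.measurableSet fun x hx => ?_).trans
    (lintegral_rpow_sub_one_mul_fderiv_le hp ha hc)
  rw [← ofReal_norm]
  gcongr
  exact (hf' x hx).2

theorem robin_hardy {σ : ℝ} (hΩ : IsConvexDomain Ω) (hp : 1 < p) (hσ : 0 < σ)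
    (hu : ContinuousOn u (closure Ω)) (hud : ∀ x ∈ Ω, DifferentiableAt ℝ u x)
    (hu_fin : ∫⁻ x in Ω, ENNReal.ofReal (‖u x‖ ^ p) ≠ ∞) :
    ENNReal.ofReal (((p - 1) / p) ^ p) *
        ∫⁻ x in Ω, ENNReal.ofReal (‖u x‖ ^ p / (depth Ω x + alphaC p σ) ^ p) ≤
      (∫⁻ x in Ω, ENNReal.ofReal (‖fderiv ℝ u x‖ ^ p)) + ENNReal.ofReal σ *
        ∫⁻ y in frontier Ω, ENNReal.ofReal (‖u y‖ ^ p) ∂μH[(Module.finrank ℝ E : ℝ) - 1] := by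
  set c := (p - 1) / p with hc_def
  have hc : 0 < c := div_pos (sub_pos.2 hp) (zero_lt_one.trans hp)
  have ha : 0 < alphaC p σ := alphaC_pos hp hσ
  have haσ : alphaC p σ ^ (1 - p) = c ^ (1 - p) * σ := by
    rw [alphaC, Real.mul_rpow hc.le (by positivity), ← Real.rpow_mul hσ.le,
      one_div_mul_cancel (sub_neg.2 hp).ne, Real.rpow_one]
  have hmain := sub_one_mul_lintegral_rpow_div_depth_le hΩ hp ha hc hu hud
  set W := ∫⁻ x in Ω, ENNReal.ofReal (‖u x‖ ^ p / (depth Ω x + alphaC p σ) ^ p)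
  set D := ∫⁻ x in Ω, ENNReal.ofReal (‖fderiv ℝ u x‖ ^ p)
  set S := ∫⁻ y in frontier Ω, ENNReal.ofReal (‖u y‖ ^ p) ∂μH[(Module.finrank ℝ E : ℝ) - 1]
  have hW : ENNReal.ofReal ((p - 1) * c) * W ≠ ∞ := ENNReal.mul_ne_top ENNReal.ofReal_ne_top
    (lintegral_rpow_div_depth_add_ne_top hp ha hu_fin)
  have habsorb : ENNReal.ofReal c * W ≤
      ENNReal.ofReal (c ^ (1 - p)) * (D + ENNReal.ofReal σ * S) := by
    rw [← ENNReal.add_le_add_iff_right hW]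
    calc ENNReal.ofReal c * W + ENNReal.ofReal ((p - 1) * c) * W = ENNReal.ofReal (p - 1) * W := by
          rw [← add_mul, ← ENNReal.ofReal_add hc.le (mul_nonneg (sub_nonneg.2 hp.le) hc.le),
            ← one_add_mul, add_sub_cancel, hc_def, mul_div_cancel₀ _ (by linarith)]
      _ ≤ _ := hmain
      _ = _ := by rw [haσ, ENNReal.ofReal_mul (by positivity)]; ring
  calc ENNReal.ofReal (c ^ p) * W = ENNReal.ofReal (c ^ (p - 1)) * (ENNReal.ofReal c * W) := by
        rw [← mul_assoc, ← ENNReal.ofReal_mul (by positivity), ← Real.rpow_add_one hc.ne',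
          sub_add_cancel]
    _ ≤ ENNReal.ofReal (c ^ (p - 1)) *
        (ENNReal.ofReal (c ^ (1 - p)) * (D + ENNReal.ofReal σ * S)) := by gcongr
    _ = D + ENNReal.ofReal σ * S := by
        rw [← mul_assoc, ← ENNReal.ofReal_mul (by positivity), ← Real.rpow_add hc]
        simp

end HilbertValued

lemma ofReal_le_lamC {n : ℕ} [NeZero n] {Ω : Set (EuclideanSpace ℝ (Fin n))}
    (hΩ : IsConvexDomain Ω) {p σ : ℝ} (hp : 1 < p) (hσ : 0 < σ) :
    ENNReal.ofReal (((p - 1) / p) ^ p) ≤ lamC p Ω σ := by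
  refine le_iInf₂ fun u ⟨hu, hud, hu_fin, _⟩ => le_iInf fun hW₀ => ?_
  have hW : wnormC p Ω σ u =
      ∫⁻ x in Ω, ENNReal.ofReal (‖u x‖ ^ p / (depth Ω x + alphaC p σ) ^ p) :=
    setLIntegral_congr_fun hΩ.isOpen.measurableSet fun x hx => by
      rw [sdist, infDist_frontier_eq_depth hΩ.isOpen hΩ.ne_univ hx, Real.norm_eq_abs]
  have hQ : QpC p Ω σ u = (∫⁻ x in Ω, ENNReal.ofReal (‖fderiv ℝ u x‖ ^ p)) + ENNReal.ofReal σ *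
      ∫⁻ y in frontier Ω, ENNReal.ofReal (‖u y‖ ^ p)
        ∂μH[(Module.finrank ℝ (EuclideanSpace ℝ (Fin n)) : ℝ) - 1] := by
    rw [finrank_euclideanSpace_fin]; rfl
  have hW_fin : wnormC p Ω σ u ≠ ∞ :=
    hW ▸ lintegral_rpow_div_depth_add_ne_top hp (alphaC_pos hp hσ) hu_fin
  rw [ENNReal.le_div_iff_mul_le (.inl hW₀) (.inl hW_fin), hW, hQ]
  exact robin_hardy hΩ hp hσ hu hud hu_fin

section Dilation

open scoped Pointwise

lemma setLIntegral_smul_set {E : Type*} [NormedAddCommGroup E] [NormedSpace ℝ E]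
    [MeasurableSpace E] [BorelSpace E] [FiniteDimensional ℝ E] (μ : Measure E)
    [μ.IsAddHaarMeasure] {R : ℝ} (hR : R ≠ 0) (f : E → ℝ≥0∞) (s : Set E) :
    ∫⁻ x in R • s, f x ∂μ =
      ENNReal.ofReal |R ^ Module.finrank ℝ E| * ∫⁻ x in s, f (R • x) ∂μ := by
  have hmap : MeasurePreserving (fun x => R • x)
      (ENNReal.ofReal |R ^ Module.finrank ℝ E| • μ) μ := by
    refine ⟨measurable_const_smul R, ?_⟩
    rw [Measure.map_smul, Measure.map_addHaar_smul μ hR, smul_smul,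
      ← ENNReal.ofReal_mul (abs_nonneg _), ← abs_mul, mul_inv_cancel₀ (pow_ne_zero _ hR), abs_one,
      ENNReal.ofReal_one, one_smul]
  rw [← hmap.setLIntegral_comp_preimage_emb (measurableEmbedding_const_smul₀ hR),
    preimage_smul₀ hR, inv_smul_smul₀ hR, setLIntegral_smul_measure, smul_eq_mul]

lemma frontier_smul_set {E : Type*} [NormedAddCommGroup E] [NormedSpace ℝ E] {R : ℝ} (hR : R ≠ 0)
    (s : Set E) : frontier (R • s) = R • frontier s :=
  ((Homeomorph.smulOfNeZero R hR).image_frontier s).symm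

variable {n : ℕ} {Ω : Set (EuclideanSpace ℝ (Fin n))} {u : EuclideanSpace ℝ (Fin n) → ℝ}
  {p σ R : ℝ}

lemma sdist_smul (hR : 0 < R) (Ω : Set (EuclideanSpace ℝ (Fin n)))
    (x : EuclideanSpace ℝ (Fin n)) : sdist (R • Ω) (R • x) = R * sdist Ω x := by
  rw [sdist, frontier_smul_set hR.ne', infDist_smul₀ hR.ne', Real.norm_of_nonneg hR.le, sdist]

lemma lintegral_norm_fderiv_comp_inv_smul (hR : 0 < R) :
    ∫⁻ x in R • Ω, ENNReal.ofReal (‖fderiv ℝ (fun y => u (R⁻¹ • y)) x‖ ^ p) =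
      ENNReal.ofReal |R ^ n| * (ENNReal.ofReal (R⁻¹ ^ p) *
        ∫⁻ x in Ω, ENNReal.ofReal (‖fderiv ℝ u x‖ ^ p)) := by
  rw [setLIntegral_smul_set _ hR.ne', finrank_euclideanSpace_fin,
    ← lintegral_const_mul' (ENNReal.ofReal (R⁻¹ ^ p)) _ ENNReal.ofReal_ne_top]
  congr! 3 with x
  rw [fderiv_comp_smul, inv_smul_smul₀ hR.ne', norm_smul, norm_inv, Real.norm_of_nonneg hR.le,
    Real.mul_rpow (by positivity) (norm_nonneg _), ENNReal.ofReal_mul (by positivity)]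

lemma wnormC_comp_inv_smul (hα : 0 < alphaC p σ) (hR : 0 < R) :
    wnormC p (R • Ω) σ (fun x => u (R⁻¹ • x)) =
      ENNReal.ofReal |R ^ n| * (ENNReal.ofReal (R⁻¹ ^ p) *
        ∫⁻ x in Ω, ENNReal.ofReal (|u x| ^ p / (sdist Ω x + alphaC p σ / R) ^ p)) := by
  rw [wnormC, setLIntegral_smul_set _ hR.ne', finrank_euclideanSpace_fin,
    ← lintegral_const_mul' (ENNReal.ofReal (R⁻¹ ^ p)) _ ENNReal.ofReal_ne_top]
  congr! 3 with x
  have hδ : 0 ≤ sdist Ω x := infDist_nonneg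
  have hscale : sdist (R • Ω) (R • x) + alphaC p σ = R * (sdist Ω x + alphaC p σ / R) := by
    rw [sdist_smul hR, mul_add, mul_div_cancel₀ _ hR.ne']
  rw [← ENNReal.ofReal_mul (by positivity), inv_smul_smul₀ hR.ne', hscale,
    Real.mul_rpow hR.le (by positivity), Real.inv_rpow hR.le]
  congr 1
  field_simp

lemma MemW1p.comp_inv_smul (hu : MemW1p p Ω u) (hR : 0 < R) :
    MemW1p p (R • Ω) fun x => u (R⁻¹ • x) := by
  obtain ⟨hcont, hdiff, hfin, hgrad⟩ := hu
  refine ⟨?_, fun x hx => ?_, ?_, ?_⟩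
  · rw [closure_smul₀' hR.ne']
    exact hcont.comp (by fun_prop) fun x hx => (mem_smul_set_iff_inv_smul_mem₀ hR.ne' _ _).1 hx
  · exact (hdiff _ ((mem_smul_set_iff_inv_smul_mem₀ hR.ne' _ _).1 hx)).comp x (by fun_prop)
  · rw [setLIntegral_smul_set _ hR.ne']
    simpa only [inv_smul_smul₀ hR.ne'] using ENNReal.mul_ne_top ENNReal.ofReal_ne_top hfin
  · rw [lintegral_norm_fderiv_comp_inv_smul hR]
    exact ENNReal.mul_ne_top ENNReal.ofReal_ne_top (ENNReal.mul_ne_top ENNReal.ofReal_ne_top hgrad)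

lemma lamC_smul_le (hp : 1 < p) (hσ : 0 < σ) (hu : MemW1p p Ω u) (hu₀ : ∀ x ∈ frontier Ω, u x = 0)
    (hR : 0 < R)
    (hW : ∫⁻ x in Ω, ENNReal.ofReal (|u x| ^ p / (sdist Ω x + alphaC p σ / R) ^ p) ≠ 0) :
    lamC p (R • Ω) σ ≤ (∫⁻ x in Ω, ENNReal.ofReal (‖fderiv ℝ u x‖ ^ p)) /
      ∫⁻ x in Ω, ENNReal.ofReal (|u x| ^ p / (sdist Ω x + alphaC p σ / R) ^ p) := by
  have hRn : ENNReal.ofReal |R ^ n| ≠ 0 := by positivity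
  have hRp : ENNReal.ofReal (R⁻¹ ^ p) ≠ 0 := by positivity
  have hwnorm := wnormC_comp_inv_smul (Ω := Ω) (u := u) (alphaC_pos hp hσ) hR
  have hsurf : ∫⁻ y, ENNReal.ofReal (|u (R⁻¹ • y)| ^ p) ∂(surf (R • Ω)) = 0 := by
    refine setLIntegral_eq_zero isClosed_frontier.measurableSet fun y hy => ?_
    rw [frontier_smul_set hR.ne', mem_smul_set_iff_inv_smul_mem₀ hR.ne'] at hy
    simp [hu₀ _ hy, Real.zero_rpow (by linarith : p ≠ 0)]
  have hQ : QpC p (R • Ω) σ (fun x => u (R⁻¹ • x)) = ENNReal.ofReal |R ^ n| *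
      (ENNReal.ofReal (R⁻¹ ^ p) * ∫⁻ x in Ω, ENNReal.ofReal (‖fderiv ℝ u x‖ ^ p)) := by
    rw [QpC, hsurf, mul_zero, add_zero, lintegral_norm_fderiv_comp_inv_smul hR]
  refine (iInf₂_le_of_le _ (hu.comp_inv_smul hR) (iInf_le _ ?_)).trans_eq ?_
  · rw [hwnorm]
    exact mul_ne_zero hRn (mul_ne_zero hRp hW)
  · rw [hwnorm, hQ, ENNReal.mul_div_mul_left _ _ hRn ENNReal.ofReal_ne_top,
      ENNReal.mul_div_mul_left _ _ hRp ENNReal.ofReal_ne_top]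

lemma tendsto_lintegral_rpow_div_sdist_add {a : ℝ} (ho : IsOpen Ω) (hne : Ω ≠ univ) (hp : 0 ≤ p)
    (ha : 0 < a) (hu : ContinuousOn u Ω) :
    Tendsto (fun k : ℕ =>
        ∫⁻ x in Ω, ENNReal.ofReal (|u x| ^ p / (sdist Ω x + a / (k + 1 : ℝ)) ^ p)) atTop
      (𝓝 (∫⁻ x in Ω, ENNReal.ofReal (|u x| ^ p / sdist Ω x ^ p))) := by
  have hu_meas : AEMeasurable u (volume.restrict Ω) := hu.aemeasurable ho.measurableSet
  have hsdist_meas : Measurable (sdist Ω) := measurable_infDist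
  refine lintegral_tendsto_of_tendsto_of_monotone (fun k => ?_) (.of_forall fun x k l hkl => ?_)
    (ae_restrict_of_forall_mem ho.measurableSet fun x hx => ENNReal.tendsto_ofReal ?_)
  · have := hu_meas.norm
    fun_prop
  · have hδ : 0 ≤ sdist Ω x := infDist_nonneg
    beta_reduce
    gcongr
  · have hδ : 0 < sdist Ω x := by
      rw [sdist, infDist_frontier_eq_depth ho hne hx]
      exact depth_pos ho hne hx
    have hlim : Tendsto (fun k : ℕ => sdist Ω x + a / (k + 1 : ℝ)) atTop (𝓝 (sdist Ω x)) := by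
      simpa [div_eq_mul_one_div a] using
        (tendsto_one_div_add_atTop_nhds_zero_nat.const_mul a).const_add (sdist Ω x)
    exact tendsto_const_nhds.div (hlim.rpow_const (.inl hδ.ne')) (by positivity)

lemma exists_lamC_smul_le (ho : IsOpen Ω) (hne : Ω ≠ univ) (hp : 1 < p) (hσ : 0 < σ)
    (hu : MemW1p p Ω u) (hu₀ : ∀ x ∈ frontier Ω, u x = 0) {A : ℝ≥0∞} (hA : A ≠ ∞)
    (hlt : ∫⁻ x in Ω, ENNReal.ofReal (‖fderiv ℝ u x‖ ^ p) <
      A * ∫⁻ x in Ω, ENNReal.ofReal (|u x| ^ p / sdist Ω x ^ p)) :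
    ∃ R : ℝ, 0 < R ∧ lamC p (R • Ω) σ ≤ A := by
  have hlim := ENNReal.Tendsto.const_mul (tendsto_lintegral_rpow_div_sdist_add ho hne
    (zero_le_one.trans hp.le) (alphaC_pos hp hσ) (hu.1.mono subset_closure)) (.inr hA)
  obtain ⟨k, hk⟩ := (hlim.eventually_const_lt hlt).exists
  refine ⟨k + 1, by positivity, (lamC_smul_le hp hσ hu hu₀ (by positivity) ?_).trans
    (ENNReal.div_le_of_le_mul hk.le)⟩
  exact right_ne_zero_of_mul (pos_of_gt hk).ne'

end Dilation

section Ball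

variable {E : Type*} [NormedAddCommGroup E]

lemma ne_univ_of_isBounded [NormedSpace ℝ E] [Nontrivial E] {s : Set E} (hs : IsBounded s) :
    s ≠ univ :=
  fun h => NormedSpace.unbounded_univ ℝ E (h ▸ hs)

lemma infDist_sphere_le [NormedSpace ℝ E] [Nontrivial E] {R : ℝ} (hR : 0 ≤ R) (x : E) :
    infDist x (sphere 0 R) ≤ |R - ‖x‖| := by
  obtain ⟨e, he, hxe⟩ : ∃ e : E, ‖e‖ = 1 ∧ x = ‖x‖ • e := by
    rcases eq_or_ne x 0 with rfl | hx
    · obtain ⟨e, he⟩ := exists_norm_eq E zero_le_one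
      exact ⟨e, he, by simp⟩
    · exact ⟨‖x‖⁻¹ • x, norm_smul_inv_norm hx, (smul_inv_smul₀ (norm_ne_zero_iff.2 hx) x).symm⟩
  have hmem : R • e ∈ sphere (0 : E) R := by
    rw [mem_sphere_zero_iff_norm, norm_smul, he, Real.norm_of_nonneg hR, mul_one]
  calc infDist x (sphere 0 R) ≤ dist x (R • e) := infDist_le_dist_of_mem hmem
    _ = ‖(R - ‖x‖) • e‖ := by rw [dist_comm, dist_eq_norm, sub_smul, ← hxe]
    _ = |R - ‖x‖| := by rw [norm_smul, he, mul_one, Real.norm_eq_abs]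

lemma hasC2Boundary_ball {n : ℕ} {R : ℝ} (hR : 0 < R) :
    HasC2Boundary (ball (0 : EuclideanSpace ℝ (Fin n)) R) := by
  intro x hx
  rw [frontier_ball _ hR.ne'] at hx ⊢
  refine ⟨{0}ᶜ, fun y => ‖y‖ ^ 2 - R ^ 2, isOpen_compl_singleton, ne_of_mem_sphere hx hR.ne',
    (contDiff_norm_sq ℝ).sub contDiff_const, fun y hy hzero => hy ?_, ?_, ?_⟩
  · rw [((hasStrictFDerivAt_norm_sq y).hasFDerivAt.sub_const (R ^ 2)).fderiv] at hzero
    simpa using congrArg (fun l => l y) hzero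
  · ext y
    simp only [mem_inter_iff, mem_ball_zero_iff, mem_ofPred_eq, sub_neg]
    rw [and_comm, pow_lt_pow_iff_left₀ (norm_nonneg y) hR.le two_ne_zero]
  · ext y
    simp only [mem_inter_iff, mem_sphere_zero_iff_norm, mem_ofPred_eq, sub_eq_zero]
    rw [and_comm, pow_left_inj₀ (norm_nonneg y) hR.le two_ne_zero]

lemma integrableOn_ball_rpow_one_sub_norm [NormedSpace ℝ E] [Nontrivial E] [FiniteDimensional ℝ E]
    [MeasurableSpace E] [BorelSpace E] (μ : Measure E) [μ.IsAddHaarMeasure] {s : ℝ} (hs : -1 < s) :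
    IntegrableOn (fun x => (1 - ‖x‖) ^ s) (ball 0 1) μ := by
  rw [integrableOn_fun_norm_addHaar μ (f := fun r => (1 - r) ^ s)]
  have hradial : IntegrableOn (fun r : ℝ => (1 - r) ^ s) (Ioo 0 1) := by
    have h := (intervalIntegral.intervalIntegrable_rpow' (a := 0) (b := 1) hs).comp_sub_left 1
    rw [sub_zero, sub_self] at h
    exact (intervalIntegrable_iff_integrableOn_Ioo_of_le zero_le_one).1 h.symm
  refine hradial.mono' (by fun_prop) (ae_restrict_of_forall_mem measurableSet_Ioo fun r hr => ?_)
  have hr' : 0 < 1 - r := sub_pos.2 hr.2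
  rw [smul_eq_mul, norm_mul, Real.norm_of_nonneg (pow_nonneg hr.1.le _),
    Real.norm_of_nonneg (by positivity)]
  exact mul_le_of_le_one_left (by positivity) (pow_le_one₀ hr.1.le hr.2.le)

/-- The test function `(1 - ‖y‖²)^β` on the unit ball. It vanishes on the sphere like the power
`δ^β` of the boundary distance, which is extremal for Hardy's inequality at the critical value
`β = (p - 1) / p`, but unlike `δ^β` it is differentiable at the centre. -/
def ballProfile (β : ℝ) (y : E) : ℝ := (1 - ‖y‖ ^ 2) ^ β

variable {β : ℝ} {y : E}

lemma one_sub_sq_norm_pos (hy : y ∈ ball 0 1) : 0 < 1 - ‖y‖ ^ 2 :=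
  sub_pos.2 <| pow_lt_one₀ (norm_nonneg y) (mem_ball_zero_iff.1 hy) two_ne_zero

lemma ballProfile_pos (hy : y ∈ ball 0 1) : 0 < ballProfile β y :=
  Real.rpow_pos_of_pos (one_sub_sq_norm_pos hy) β

lemma continuous_ballProfile (hβ : 0 ≤ β) : Continuous (ballProfile β : E → ℝ) :=
  (by fun_prop : Continuous fun y : E => 1 - ‖y‖ ^ 2).rpow_const fun _ => .inr hβ

lemma ballProfile_eq_zero_of_mem_sphere (hβ : β ≠ 0) (hy : y ∈ sphere 0 1) :
    ballProfile β y = 0 := by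
  rw [ballProfile, mem_sphere_zero_iff_norm.1 hy, one_pow, sub_self, Real.zero_rpow hβ]

lemma ballProfile_le (hβ : β ≤ 1) (hy : y ∈ ball 0 1) :
    ballProfile β y ≤ 2 * (1 - ‖y‖) ^ β := by
  have hy' : 0 < 1 - ‖y‖ := sub_pos.2 (mem_ball_zero_iff.1 hy)
  calc ballProfile β y = (1 + ‖y‖) ^ β * (1 - ‖y‖) ^ β := by
        rw [ballProfile, ← Real.mul_rpow (by positivity) hy'.le]; ring_nf
    _ ≤ (1 + ‖y‖) ^ (1 : ℝ) * (1 - ‖y‖) ^ β := by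
        gcongr
        exact le_add_of_nonneg_right (norm_nonneg y)
    _ ≤ 2 * (1 - ‖y‖) ^ β := by
        rw [Real.rpow_one]
        gcongr
        linarith

lemma hasFDerivAt_ballProfile [InnerProductSpace ℝ E] (hy : y ∈ ball 0 1) :
    HasFDerivAt (ballProfile β)
      ((β * (1 - ‖y‖ ^ 2) ^ (β - 1)) • -(2 • innerSL ℝ y) : E →L[ℝ] ℝ) y :=
  ((hasStrictFDerivAt_norm_sq y).hasFDerivAt.const_sub 1).rpow_const
    (.inl (one_sub_sq_norm_pos hy).ne')

lemma norm_fderiv_ballProfile_le [InnerProductSpace ℝ E] (hβ : 0 ≤ β) (hy : y ∈ ball 0 1) :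
    ‖fderiv ℝ (ballProfile β) y‖ ≤ β * (ballProfile β y / (1 - ‖y‖)) := by
  have hy₁ : 0 < 1 - ‖y‖ := sub_pos.2 (mem_ball_zero_iff.1 hy)
  have hy₂ : 0 < 1 - ‖y‖ ^ 2 := one_sub_sq_norm_pos hy
  calc ‖fderiv ℝ (ballProfile β) y‖ = β * (1 - ‖y‖ ^ 2) ^ (β - 1) * (2 * ‖y‖) := by
        rw [(hasFDerivAt_ballProfile hy).fderiv, norm_smul, norm_neg,
          ← Nat.cast_smul_eq_nsmul ℝ, norm_smul, innerSL_apply_norm, Nat.cast_ofNat, Real.norm_two,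
          Real.norm_of_nonneg (by positivity)]
    _ ≤ β * (1 - ‖y‖ ^ 2) ^ (β - 1) * (1 + ‖y‖) := by gcongr; linarith
    _ = β * (ballProfile β y / (1 - ‖y‖)) := by
        rw [ballProfile, Real.rpow_sub_one hy₂.ne',
          show 1 - ‖y‖ ^ 2 = (1 + ‖y‖) * (1 - ‖y‖) by ring]
        field_simp

end Ball

section BallEnergy

variable {E : Type*} [NormedAddCommGroup E] [MeasurableSpace E] [BorelSpace E] {p β : ℝ}

lemma lintegral_ballProfile_rpow_div_ne_top [NormedSpace ℝ E] [Nontrivial E]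
    [FiniteDimensional ℝ E] (μ : Measure E) [μ.IsAddHaarMeasure] (hp : 0 ≤ p) (hβ : β ≤ 1)
    (hβp : -1 < (β - 1) * p) :
    ∫⁻ y in ball 0 1, ENNReal.ofReal (ballProfile β y ^ p / (1 - ‖y‖) ^ p) ∂μ ≠ ∞ := by
  refine ne_top_of_le_ne_top
    ((integrableOn_ball_rpow_one_sub_norm μ hβp).const_mul (2 ^ p)).lintegral_lt_top.ne
    (setLIntegral_mono' measurableSet_ball fun y hy => ENNReal.ofReal_le_ofReal ?_)
  have hy' : 0 < 1 - ‖y‖ := sub_pos.2 (mem_ball_zero_iff.1 hy)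
  have hpos := (ballProfile_pos (β := β) hy).le
  calc ballProfile β y ^ p / (1 - ‖y‖) ^ p
      ≤ (2 * (1 - ‖y‖) ^ β) ^ p / (1 - ‖y‖) ^ p := by
        gcongr
        exact ballProfile_le hβ hy
    _ = 2 ^ p * (1 - ‖y‖) ^ ((β - 1) * p) := by
        rw [Real.mul_rpow two_pos.le (by positivity), ← Real.rpow_mul hy'.le, mul_div_assoc,
          ← Real.rpow_sub hy', sub_one_mul]

lemma lintegral_ballProfile_rpow_div_ne_zero (μ : Measure E) [μ.IsOpenPosMeasure] :
    ∫⁻ y in ball 0 1, ENNReal.ofReal (ballProfile β y ^ p / (1 - ‖y‖) ^ p) ∂μ ≠ 0 := by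
  have hmeas : Measurable fun y : E =>
      ENNReal.ofReal (ballProfile β y ^ p / (1 - ‖y‖) ^ p) := by
    unfold ballProfile
    fun_prop
  refine ((setLIntegral_pos_iff hmeas).2 ?_).ne'
  refine (measure_ball_pos μ 0 one_pos).trans_le (measure_mono fun y hy => ⟨?_, hy⟩)
  have hy' : 0 < 1 - ‖y‖ := sub_pos.2 (mem_ball_zero_iff.1 hy)
  have hpos := ballProfile_pos (β := β) hy
  exact (ENNReal.ofReal_pos.2 (by positivity)).ne'

lemma lintegral_norm_fderiv_ballProfile_le [InnerProductSpace ℝ E] (μ : Measure E) (hp : 0 ≤ p)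
    (hβ : 0 ≤ β) :
    ∫⁻ y in ball 0 1, ENNReal.ofReal (‖fderiv ℝ (ballProfile β) y‖ ^ p) ∂μ ≤
      ENNReal.ofReal (β ^ p) *
        ∫⁻ y in ball 0 1, ENNReal.ofReal (ballProfile β y ^ p / (1 - ‖y‖) ^ p) ∂μ := by
  rw [← lintegral_const_mul' _ _ ENNReal.ofReal_ne_top]
  refine setLIntegral_mono' measurableSet_ball fun y hy => ?_
  have hy' : 0 < 1 - ‖y‖ := sub_pos.2 (mem_ball_zero_iff.1 hy)
  have hpos := (ballProfile_pos (β := β) hy).le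
  rw [← ENNReal.ofReal_mul (by positivity), ← Real.div_rpow hpos hy'.le,
    ← Real.mul_rpow hβ (by positivity)]
  gcongr
  exact norm_fderiv_ballProfile_le hβ hy

end BallEnergy

section UpperBound

variable {n : ℕ} [NeZero n] {p σ β : ℝ}

lemma memW1p_ballProfile (hp : 0 ≤ p) (hβ₀ : 0 ≤ β) (hβ₁ : β ≤ 1) (hβp : -1 < (β - 1) * p) :
    MemW1p p (ball (0 : EuclideanSpace ℝ (Fin n)) 1) (ballProfile β) := by
  have hW := lintegral_ballProfile_rpow_div_ne_top (E := EuclideanSpace ℝ (Fin n)) volume hp hβ₁ hβp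
  refine ⟨(continuous_ballProfile hβ₀).continuousOn,
    fun y hy => (hasFDerivAt_ballProfile hy).differentiableAt, ne_top_of_le_ne_top hW ?_,
    ne_top_of_le_ne_top (ENNReal.mul_ne_top ENNReal.ofReal_ne_top hW)
      (lintegral_norm_fderiv_ballProfile_le volume hp hβ₀)⟩
  refine setLIntegral_mono' measurableSet_ball fun y hy => ENNReal.ofReal_le_ofReal ?_
  have hy' : 0 < 1 - ‖y‖ := sub_pos.2 (mem_ball_zero_iff.1 hy)
  have hpos := ballProfile_pos (β := β) hy
  rw [abs_of_pos hpos]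
  exact le_div_self (by positivity) (by positivity)
    (Real.rpow_le_one hy'.le (sub_le_self 1 (norm_nonneg y)) hp)

lemma lintegral_norm_fderiv_ballProfile_lt (hp : 0 ≤ p) (hβ₀ : 0 < β) (hβ₁ : β ≤ 1)
    (hβp : -1 < (β - 1) * p) {A : ℝ≥0∞} (hA : ENNReal.ofReal (β ^ p) < A) :
    ∫⁻ y in ball (0 : EuclideanSpace ℝ (Fin n)) 1,
        ENNReal.ofReal (‖fderiv ℝ (ballProfile β) y‖ ^ p) <
      A * ∫⁻ y in ball (0 : EuclideanSpace ℝ (Fin n)) 1,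
        ENNReal.ofReal (|ballProfile β y| ^ p / sdist (ball 0 1) y ^ p) := by
  set B := ball (0 : EuclideanSpace ℝ (Fin n)) 1
  have hB : B ≠ univ := ne_univ_of_isBounded isBounded_ball
  calc ∫⁻ y in B, ENNReal.ofReal (‖fderiv ℝ (ballProfile β) y‖ ^ p)
      ≤ ENNReal.ofReal (β ^ p) *
          ∫⁻ y in B, ENNReal.ofReal (ballProfile β y ^ p / (1 - ‖y‖) ^ p) :=
        lintegral_norm_fderiv_ballProfile_le volume hp hβ₀.le
    _ < A * ∫⁻ y in B, ENNReal.ofReal (ballProfile β y ^ p / (1 - ‖y‖) ^ p) :=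
        ENNReal.mul_lt_mul_left (lintegral_ballProfile_rpow_div_ne_zero volume)
          (lintegral_ballProfile_rpow_div_ne_top volume hp hβ₁ hβp) hA
    _ ≤ A * ∫⁻ y in B, ENNReal.ofReal (|ballProfile β y| ^ p / sdist B y ^ p) := by
        refine mul_le_mul' le_rfl (setLIntegral_mono' measurableSet_ball fun y hy => ?_)
        have hy' : 0 < 1 - ‖y‖ := sub_pos.2 (mem_ball_zero_iff.1 hy)
        have hδ : 0 < sdist B y := by
          rw [sdist, infDist_frontier_eq_depth isOpen_ball hB hy]
          exact depth_pos isOpen_ball hB hy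
        have hδ_le : sdist B y ≤ 1 - ‖y‖ := by
          rw [sdist, frontier_ball _ one_ne_zero, ← abs_of_pos hy']
          exact infDist_sphere_le zero_le_one y
        have hpos := ballProfile_pos (β := β) hy
        rw [abs_of_pos hpos]
        gcongr

lemma exists_lamC_ball_le (hp : 1 < p) (hσ : 0 < σ) {A : ℝ≥0∞} (hA : A ≠ ∞)
    (hlt : ENNReal.ofReal (((p - 1) / p) ^ p) < A) :
    ∃ R : ℝ, 0 < R ∧ lamC p (ball (0 : EuclideanSpace ℝ (Fin n)) R) σ ≤ A := by
  have hp₀ : 0 < p := zero_lt_one.trans hp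
  have hc : (p - 1) / p < 1 := (div_lt_one hp₀).2 (sub_one_lt p)
  have hcont : Tendsto (fun β : ℝ => ENNReal.ofReal (β ^ p)) (𝓝[>] ((p - 1) / p))
      (𝓝 (ENNReal.ofReal (((p - 1) / p) ^ p))) :=
    (ENNReal.tendsto_ofReal (Real.continuousAt_rpow_const _ _ (.inr hp₀.le))).mono_left
      nhdsWithin_le_nhds
  obtain ⟨β, hβA, hcβ, hβ₁⟩ :=
    ((hcont.eventually_lt_const hlt).and (Ioo_mem_nhdsGT hc)).exists
  have hβ₀ : 0 < β := (div_pos (sub_pos.2 hp) hp₀).trans hcβ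
  have hβp : -1 < (β - 1) * p := by linarith [(div_lt_iff₀ hp₀).1 hcβ]
  obtain ⟨R, hR, hlam⟩ := exists_lamC_smul_le
    (Ω := ball (0 : EuclideanSpace ℝ (Fin n)) 1) isOpen_ball
    (ne_univ_of_isBounded isBounded_ball) hp hσ
    (memW1p_ballProfile hp₀.le hβ₀.le hβ₁.le hβp)
    (fun y hy => ballProfile_eq_zero_of_mem_sphere hβ₀.ne'
      (frontier_ball (0 : EuclideanSpace ℝ (Fin n)) one_ne_zero ▸ hy)) hA
    (lintegral_norm_fderiv_ballProfile_lt hp₀.le hβ₀ hβ₁.le hβp hβA)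
  exact ⟨R, hR, by rwa [smul_unitBall_of_pos hR] at hlam⟩

theorem inf_lam_over_convex_general (hp : 1 < p) (hσ : 0 < σ)
    {𝒞 : Set (Set (EuclideanSpace ℝ (Fin n)))}
    (h𝒞 : ∀ Ω : Set (EuclideanSpace ℝ (Fin n)), Ω ∈ 𝒞 → IsConvexDomain Ω)
    (hball : ∀ R > 0, ball 0 R ∈ 𝒞) :
    ⨅ Ω ∈ 𝒞, lamC p Ω σ = ENNReal.ofReal (((p - 1) / p) ^ p) := by
  refine le_antisymm (le_of_forall_gt_imp_ge_of_dense fun A hA => ?_)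
    (le_iInf₂ fun Ω hΩ => ofReal_le_lamC (h𝒞 Ω hΩ) hp hσ)
  rcases eq_or_ne A ∞ with rfl | hA_top
  · exact le_top
  · obtain ⟨R, hR, hlam⟩ := exists_lamC_ball_le (n := n) hp hσ hA_top hA
    exact (iInf₂_le _ (hball R hR)).trans hlam

end UpperBound

/-- **Proposition 4.3, (4.6).** For a fixed constant `σ > 0`, the infimum of `λ_p(Ω,σ)`
over all open bounded convex domains `Ω ⊂ ℝⁿ` with `C²` boundary equals `C_p`. -/
theorem inf_lam_over_convex (n : ℕ) (hn : 1 ≤ n) (p σ : ℝ) (hp : 1 < p) (hσ : 0 < σ) :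
    (⨅ (Ω : Set (EuclideanSpace ℝ (Fin n)))
      (_ : IsOpen Ω ∧ Ω.Nonempty ∧ IsBounded Ω ∧ Convex ℝ Ω ∧ HasC2Boundary Ω),
        lamC p Ω σ) = ENNReal.ofReal (((p - 1) / p) ^ p) := by
  have : NeZero n := ⟨Nat.one_le_iff_ne_zero.1 hn⟩
  exact inf_lam_over_convex_general hp hσ
    (fun Ω ⟨ho, _, hb, hc, _⟩ => ⟨ho, hc, ne_univ_of_isBounded hb⟩) fun R hR =>
      ⟨isOpen_ball, nonempty_ball.2 hR, isBounded_ball, convex_ball 0 R, hasC2Boundary_ball hR⟩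

end RobinHardy
end
end

section
/- Let p > n ≥ 1, R > 0 and σ > 0, and let B_R^c = {x ∈ ℝ^n : |x| > R}. Then for every u ∈ W^{1,p}(B_R^c), ∫_{B_R^c} |∇u(x)|^p dx + σ ∫_{∂B_R} |u|^p dν ≥ C(σ,R) ∫_{B_R^c} |u(x)|^p/|x|^p dx, where C(σ,R) = min{ ((p-n)/p)^p , R^p·σ^{p/(p-1)} } and dν is the surface measure on the sphere ∂B_R = {x : |x| = R}, the boundary values of u being understood via the trace. -/
open MeasureTheory Metric Set Filter Bornology
open scoped ENNReal Topology

noncomputable section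

namespace RobinHardy

/-!
Along a ray, write `y = u(rω)`. By Young's inequality the derivative of
`a ^ (p - 1) * ‖y‖ ^ p * r ^ (n - p)` is at most
`r ^ (n - 1) * (‖y'‖ ^ p - a ^ p * ‖y‖ ^ p / r ^ p)` whenever `0 ≤ a ≤ (p - n) / p`. Integrating
over `(R, ∞)`, where the contribution of large `r` has the favourable sign, and then over the
directions `ω` gives the Hardy inequality with the boundary term
`a ^ (p - 1) * R ^ (n - p) * ∫ ‖u(Rω)‖ ^ p dω`; the theorem is the case of the largest such `a`
with `a ^ (p - 1) * R ^ (n - p) ≤ σ * R ^ (n - 1)`.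

Here `dω` comes from polar coordinates, i.e. it is the cone measure `Measure.toSphere`. It is at
most the Hausdorff measure `μH[n - 1]`: on a small piece of the unit sphere the gnomonic projection
does not decrease the area and is Lipschitz with constant close to `1` into `ℝ ^ (n - 1)` with the
sup norm, where the volume of a set is at most its diameter to the power `n - 1`. Since Mathlib's
`μH[n - 1]` carries no normalising constant, equality cannot be expected when `n ≥ 3`.
-/

theorem mul_rpow_sub_one_mul_le_s15 {p x y : ℝ} (hp : 1 < p) (hx : 0 ≤ x) (hy : 0 ≤ y) :
    p * (x ^ (p - 1) * y) ≤ (p - 1) * x ^ p + y ^ p := by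
  have hpq : (p / (p - 1)).HolderConjugate p := (Real.HolderConjugate.conjExponent hp).symm
  have young := Real.young_inequality_of_nonneg (Real.rpow_nonneg hx (p - 1)) hy hpq
  have hp' : p - 1 ≠ 0 := by linarith
  rw [← Real.rpow_mul hx, mul_div_cancel₀ _ hp'] at young
  calc p * (x ^ (p - 1) * y) ≤ p * (x ^ p / (p / (p - 1)) + y ^ p / p) := by gcongr
    _ = (p - 1) * x ^ p + y ^ p := by field_simp

section HalfLine

variable {g g' v w : ℝ → ℝ} {a : ℝ}

theorem setLIntegral_Ioc_le_add_of_hasDerivAt_le {b : ℝ} (hab : a ≤ b)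
    (hg : ContinuousOn g (Icc a b)) (hg' : ∀ r ∈ Ioo a b, HasDerivAt g (g' r) r)
    (hle : ∀ r ∈ Ioo a b, g' r ≤ w r - v r) (hgb : 0 ≤ g b)
    (hv : IntegrableOn v (Ioc a b)) (hv0 : ∀ r ∈ Ioc a b, 0 ≤ v r)
    (hw : AEStronglyMeasurable w (volume.restrict (Ioc a b))) (hw0 : ∀ r ∈ Ioc a b, 0 ≤ w r) :
    ∫⁻ r in Ioc a b, .ofReal (v r) ≤ (∫⁻ r in Ioc a b, .ofReal (w r)) + .ofReal (g a) := by
  have hv0 := ae_restrict_of_forall_mem (μ := volume) measurableSet_Ioc hv0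
  have hw0 := ae_restrict_of_forall_mem (μ := volume) measurableSet_Ioc hw0
  rcases eq_or_ne (∫⁻ r in Ioc a b, .ofReal (w r)) ∞ with htop | hfin
  · simp [htop]
  have hwi : IntegrableOn w (Ioc a b) := (lintegral_ofReal_ne_top_iff_integrable hw hw0).1 hfin
  have ftc : g b - g a ≤ ∫ r in a..b, w r - v r :=
    intervalIntegral.sub_le_integral_of_hasDeriv_right_of_le hab hg
      (fun r hr => (hg' r hr).hasDerivWithinAt)
      ((integrableOn_Icc_iff_integrableOn_Ioc).2 (hwi.sub hv)) hle
  rw [intervalIntegral.integral_of_le hab, integral_sub hwi hv] at ftc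
  rw [← ofReal_integral_eq_lintegral_ofReal hv hv0, ← ofReal_integral_eq_lintegral_ofReal hwi hw0]
  calc ENNReal.ofReal (∫ r in Ioc a b, v r)
      ≤ .ofReal ((∫ r in Ioc a b, w r) + g a) := by gcongr; linarith
    _ ≤ .ofReal (∫ r in Ioc a b, w r) + .ofReal (g a) := ENNReal.ofReal_add_le

theorem setLIntegral_Ioi_le_add_of_hasDerivAt_le
    (hg : ContinuousOn g (Ici a)) (hg' : ∀ r ∈ Ioi a, HasDerivAt g (g' r) r)
    (hle : ∀ r ∈ Ioi a, g' r ≤ w r - v r) (hg0 : ∀ r ∈ Ioi a, 0 ≤ g r)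
    (hv : ContinuousOn v (Ici a)) (hv0 : ∀ r ∈ Ioi a, 0 ≤ v r)
    (hw : AEStronglyMeasurable w (volume.restrict (Ioi a))) (hw0 : ∀ r ∈ Ioi a, 0 ≤ w r) :
    ∫⁻ r in Ioi a, .ofReal (v r) ≤ (∫⁻ r in Ioi a, .ofReal (w r)) + .ofReal (g a) := by
  have hvm : AEMeasurable (fun r => ENNReal.ofReal (v r)) (volume.restrict (Ioi a)) :=
    ((hv.mono Ioi_subset_Ici_self).aemeasurable measurableSet_Ioi).ennreal_ofReal
  refine le_of_tendsto ((aecover_Iic tendsto_id).lintegral_tendsto_of_countably_generated hvm) ?_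
  filter_upwards [eventually_gt_atTop a] with b hab
  rw [Measure.restrict_restrict measurableSet_Iic, Iic_inter_Ioi]
  calc ∫⁻ r in Ioc a b, .ofReal (v r)
      ≤ (∫⁻ r in Ioc a b, .ofReal (w r)) + .ofReal (g a) :=
        setLIntegral_Ioc_le_add_of_hasDerivAt_le hab.le (hg.mono Icc_subset_Ici_self)
          (fun r hr => hg' r hr.1) (fun r hr => hle r hr.1) (hg0 b hab)
          ((hv.mono Icc_subset_Ici_self).integrableOn_Icc.mono_set Ioc_subset_Icc_self)
          (fun r hr => hv0 r hr.1) (hw.mono_set Ioc_subset_Ioi_self) (fun r hr => hw0 r hr.1)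
    _ ≤ (∫⁻ r in Ioi a, .ofReal (w r)) + .ofReal (g a) := by
        gcongr
        exact Ioc_subset_Ioi_self

end HalfLine

section RadialHardy

variable {F : Type*} [NormedAddCommGroup F] [InnerProductSpace ℝ F] {p s a : ℝ}

theorem norm_rpow_sub_two_mul_inner_le (hp : 1 < p) {y y' : F} {D : ℝ} (hD : ‖y'‖ ≤ D) :
    ‖y‖ ^ (p - 2) * inner ℝ y y' ≤ ‖y‖ ^ (p - 1) * D := by
  have hpow : ‖y‖ ^ (p - 1) = ‖y‖ ^ (p - 2) * ‖y‖ := by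
    rw [← Real.rpow_add_one' (norm_nonneg y) (by linarith)]
    ring_nf
  rw [hpow, mul_assoc]
  gcongr
  exact (real_inner_le_norm y y').trans (by gcongr)

theorem radial_hardy_pointwise (hp : 1 < p) (ha0 : 0 ≤ a) (ha : a ≤ (p - (s + 1)) / p)
    {r D : ℝ} (hr : 0 < r) {y y' : F} (hD : ‖y'‖ ≤ D) :
    a ^ (p - 1) * (p * (‖y‖ ^ (p - 2) * inner ℝ y y') * r ^ (s + 1 - p)
        + ‖y‖ ^ p * ((s + 1 - p) * r ^ (s + 1 - p - 1)))
      ≤ r ^ s * D ^ p - a ^ p * (r ^ s * (‖y‖ ^ p / r ^ p)) := by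
  have hD0 : 0 ≤ D := (norm_nonneg _).trans hD
  have hap : p * a ≤ p - (s + 1) := by
    rwa [le_div_iff₀ (by linarith), mul_comm] at ha
  have hapow : a ^ p = a ^ (p - 1) * a := by
    rw [← Real.rpow_add_one' ha0 (by linarith), sub_add_cancel]
  have young := mul_rpow_sub_one_mul_le_s15 hp (x := a * ‖y‖ / r) (by positivity) hD0
  rw [Real.div_rpow (by positivity) hr.le, Real.div_rpow (by positivity) hr.le,
    Real.mul_rpow ha0 (norm_nonneg _), Real.mul_rpow ha0 (norm_nonneg _)] at young
  have hpow₁ : r ^ (s + 1 - p) = r ^ s / r ^ (p - 1) := by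
    rw [← Real.rpow_sub hr]
    ring_nf
  have hpow₂ : r ^ (s + 1 - p - 1) = r ^ s / r ^ p := by
    rw [← Real.rpow_sub hr]
    ring_nf
  rw [hpow₁, hpow₂]
  calc _ = r ^ s * (p * a ^ (p - 1) / r ^ (p - 1) * (‖y‖ ^ (p - 2) * inner ℝ y y')
          - (p - (s + 1)) * a ^ (p - 1) * (‖y‖ ^ p / r ^ p)) := by ring
    _ ≤ r ^ s * (p * a ^ (p - 1) / r ^ (p - 1) * (‖y‖ ^ (p - 1) * D)
          - p * a * a ^ (p - 1) * (‖y‖ ^ p / r ^ p)) := by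
        gcongr r ^ s * (p * a ^ (p - 1) / r ^ (p - 1) * ?_ - ?_ * a ^ (p - 1) * (‖y‖ ^ p / r ^ p))
        exact norm_rpow_sub_two_mul_inner_le hp hD
    _ = r ^ s * (p * (a ^ (p - 1) * ‖y‖ ^ (p - 1) / r ^ (p - 1) * D)
          - p * a ^ p * (‖y‖ ^ p / r ^ p)) := by rw [hapow]; ring
    _ ≤ r ^ s * ((p - 1) * (a ^ p * ‖y‖ ^ p / r ^ p) + D ^ p
          - p * a ^ p * (‖y‖ ^ p / r ^ p)) := by gcongr
    _ = r ^ s * D ^ p - a ^ p * (r ^ s * (‖y‖ ^ p / r ^ p)) := by ring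

theorem hasDerivAt_norm_rpow_mul_rpow (hp : 1 < p) {f : ℝ → F} {f' : F} {r : ℝ} (hr : r ≠ 0)
    (hf : HasDerivAt f f' r) (t : ℝ) :
    HasDerivAt (fun r => ‖f r‖ ^ p * r ^ t)
      (p * (‖f r‖ ^ (p - 2) * inner ℝ (f r) f') * r ^ t + ‖f r‖ ^ p * (t * r ^ (t - 1))) r := by
  have hnorm := (hasFDerivAt_norm_rpow (f r) hp).comp_hasDerivAt r hf
  rw [smul_apply, innerSL_apply_apply, smul_eq_mul, mul_assoc] at hnorm
  exact hnorm.mul (Real.hasDerivAt_rpow_const (.inl hr))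

theorem radial_hardy (hp : 1 < p) (ha0 : 0 ≤ a) (ha : a ≤ (p - (s + 1)) / p) {R : ℝ} (hR : 0 < R)
    {f f' : ℝ → F} {D : ℝ → ℝ} (hf : ContinuousOn f (Ici R))
    (hf' : ∀ r ∈ Ioi R, HasDerivAt f (f' r) r) (hD : ∀ r ∈ Ioi R, ‖f' r‖ ≤ D r)
    (hDm : AEMeasurable D (volume.restrict (Ioi R))) :
    ENNReal.ofReal (a ^ p) * ∫⁻ r in Ioi R, .ofReal (r ^ s * (‖f r‖ ^ p / r ^ p))
      ≤ (∫⁻ r in Ioi R, .ofReal (r ^ s * D r ^ p))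
        + .ofReal (a ^ (p - 1) * (‖f R‖ ^ p * R ^ (s + 1 - p))) := by
  have hpos : ∀ r ∈ Ici R, 0 < r := fun r hr => hR.trans_le hr
  have hfp : ContinuousOn (fun r => ‖f r‖ ^ p) (Ici R) :=
    hf.norm.rpow_const fun _ _ => .inr (by linarith)
  have hpow (t : ℝ) : ContinuousOn (fun r : ℝ => r ^ t) (Ici R) :=
    continuousOn_id.rpow_const fun r hr => .inl (hpos r hr).ne'
  rw [← lintegral_const_mul' _ _ ENNReal.ofReal_ne_top]
  simp_rw [← ENNReal.ofReal_mul (Real.rpow_nonneg ha0 p)]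
  refine setLIntegral_Ioi_le_add_of_hasDerivAt_le
    (g := fun r => a ^ (p - 1) * (‖f r‖ ^ p * r ^ (s + 1 - p)))
    (continuousOn_const.mul (hfp.mul (hpow _)))
    (fun r hr => (hasDerivAt_norm_rpow_mul_rpow hp (hR.trans hr).ne' (hf' r hr) _).const_mul _)
    (fun r hr => radial_hardy_pointwise hp ha0 ha (hR.trans hr) (hD r hr)) (fun r hr => ?_)
    (continuousOn_const.mul ((hpow s).mul (hfp.div (hpow p) fun r hr => ?_))) (fun r hr => ?_)
    (AEMeasurable.aestronglyMeasurable (by fun_prop)) (fun r hr => ?_)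
  · have := hR.trans hr
    positivity
  · have := hpos r hr
    positivity
  · have := hR.trans hr
    positivity
  · have := hR.trans hr
    have := (norm_nonneg _).trans (hD r hr)
    positivity

end RadialHardy

section Polar

theorem lintegral_volumeIoiPow (k : ℕ) (g : ℝ → ℝ≥0∞) :
    ∫⁻ r, g r ∂Measure.volumeIoiPow k = ∫⁻ r in Ioi (0 : ℝ), .ofReal (r ^ k) * g r := by
  rw [Measure.volumeIoiPow, lintegral_withDensity_eq_lintegral_mul_non_measurable _ (by fun_prop)
    (.of_forall fun _ => ENNReal.ofReal_lt_top)]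
  exact lintegral_subtype_comap measurableSet_Ioi fun r => .ofReal (r ^ k) * g r

variable {E : Type*} [NormedAddCommGroup E] [NormedSpace ℝ E] [FiniteDimensional ℝ E]
  [Nontrivial E] [MeasurableSpace E] [BorelSpace E] (μ : Measure E) [μ.IsAddHaarMeasure]
  {h : E → ℝ≥0∞}

theorem lintegral_polar (hh : AEMeasurable h μ) :
    ∫⁻ x, h x ∂μ = ∫⁻ ω : sphere (0 : E) 1, (∫⁻ r in Ioi (0 : ℝ),
      .ofReal (r ^ (Module.finrank ℝ E - 1)) * h (r • (ω : E))) ∂μ.toSphere := by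
  let e := homeomorphUnitSphereProd E
  have he (x : ({0}ᶜ : Set E)) : ((e x).2 : ℝ) • ((e x).1 : E) = x :=
    congrArg Subtype.val (e.symm_apply_apply x)
  have mp : MeasurePreserving e (μ.comap (↑)) _ := μ.measurePreserving_homeomorphUnitSphereProd
  have hh' : AEMeasurable (fun x : ({0}ᶜ : Set E) => h x) (μ.comap (↑)) :=
    (aemeasurable_restrict_iff_comap_subtype (measurableSet_singleton 0).compl).1 hh.restrict
  have hprod := hh'.comp_quasiMeasurePreserving
    (mp.symm e.toMeasurableEquiv).quasiMeasurePreserving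
  calc ∫⁻ x, h x ∂μ = ∫⁻ x : ({0}ᶜ : Set E), h x ∂μ.comap (↑) := by
        rw [lintegral_subtype_comap (measurableSet_singleton 0).compl, restrict_compl_singleton]
    _ = ∫⁻ q : sphere (0 : E) 1 × Ioi (0 : ℝ), h ((q.2 : ℝ) • (q.1 : E))
          ∂μ.toSphere.prod (.volumeIoiPow (Module.finrank ℝ E - 1)) := by
        rw [← mp.lintegral_comp_emb e.measurableEmbedding]
        simp_rw [he]
    _ = _ := (lintegral_prod _ hprod).trans <|
        lintegral_congr fun ω => lintegral_volumeIoiPow _ fun r => h (r • (ω : E))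

theorem setLIntegral_polar_exterior {R : ℝ} (hR : 0 ≤ R)
    (hh : AEMeasurable h (μ.restrict {x | R < ‖x‖})) :
    ∫⁻ x in {x | R < ‖x‖}, h x ∂μ = ∫⁻ ω : sphere (0 : E) 1, (∫⁻ r in Ioi R,
      .ofReal (r ^ (Module.finrank ℝ E - 1)) * h (r • (ω : E))) ∂μ.toSphere := by
  have hS : MeasurableSet {x : E | R < ‖x‖} := measurableSet_lt measurable_const measurable_norm
  rw [← lintegral_indicator hS, lintegral_polar μ ((aemeasurable_indicator_iff hS).2 hh)]
  refine lintegral_congr fun ω => ?_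
  rw [← inter_eq_left.2 (Ioi_subset_Ioi hR), ← setLIntegral_indicator measurableSet_Ioi]
  refine setLIntegral_congr_fun measurableSet_Ioi fun r hr => ?_
  have hmem : r • (ω : E) ∈ {x : E | R < ‖x‖} ↔ r ∈ Ioi R := by
    simp [norm_smul, abs_of_pos (mem_Ioi.1 hr)]
  by_cases hRr : r ∈ Ioi R
  · rw [indicator_of_mem hRr, indicator_of_mem (hmem.2 hRr)]
  · rw [indicator_of_notMem hRr, indicator_of_notMem (hmem.not.2 hRr), mul_zero]

end Polar

section ExteriorHardy

variable {E F : Type*} [NormedAddCommGroup E] [NormedSpace ℝ E] [FiniteDimensional ℝ E]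
  [Nontrivial E] [MeasurableSpace E] [BorelSpace E] [NormedAddCommGroup F] [InnerProductSpace ℝ F]
  {u : E → F} {p a R : ℝ}

theorem radial_hardy_ray [CompleteSpace F] (hp : 1 < p) (ha0 : 0 ≤ a)
    (ha : a ≤ (p - Module.finrank ℝ E) / p) (hR : 0 < R) (huc : ContinuousOn u {x | R ≤ ‖x‖})
    (hud : ∀ x, R < ‖x‖ → DifferentiableAt ℝ u x) (ω : sphere (0 : E) 1) :
    ENNReal.ofReal (a ^ p) * (∫⁻ r in Ioi R, .ofReal (r ^ (Module.finrank ℝ E - 1)) *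
          .ofReal (‖u (r • (ω : E))‖ ^ p / ‖r • (ω : E)‖ ^ p))
      ≤ (∫⁻ r in Ioi R, .ofReal (r ^ (Module.finrank ℝ E - 1)) *
          .ofReal (‖fderiv ℝ u (r • (ω : E))‖ ^ p))
        + .ofReal (a ^ (p - 1) * R ^ (Module.finrank ℝ E - p)) *
          .ofReal (‖u (R • (ω : E))‖ ^ p) := by
  have hω : ‖(ω : E)‖ = 1 := norm_eq_of_mem_sphere ω
  have hnorm {r : ℝ} (hr : 0 < r) : ‖r • (ω : E)‖ = r := by
    rw [norm_smul, hω, mul_one, Real.norm_of_nonneg hr.le]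
  have hdim : ((Module.finrank ℝ E - 1 : ℕ) : ℝ) + 1 = Module.finrank ℝ E := by
    exact_mod_cast Nat.sub_add_cancel Module.finrank_pos
  have hray := radial_hardy (s := (Module.finrank ℝ E - 1 : ℕ)) (f := fun r => u (r • (ω : E)))
    (f' := fun r => fderiv ℝ u (r • (ω : E)) ω) (D := fun r => ‖fderiv ℝ u (r • (ω : E))‖)
    hp ha0 (by rwa [hdim]) hR
    (huc.comp (by fun_prop) fun r hr => (mem_Ici.1 hr).trans_eq (hnorm (hR.trans_le hr)).symm)
    (fun r hr => (hud _ ((mem_Ioi.1 hr).trans_eq (hnorm (hR.trans hr)).symm)).hasFDerivAt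
      |>.comp_hasDerivAt r (by simpa using (hasDerivAt_id r).smul_const (ω : E)))
    (fun r _ => by simpa [hω] using (fderiv ℝ u (r • (ω : E))).le_opNorm ω)
    ((measurable_fderiv ℝ u).comp (by fun_prop)).norm.aemeasurable
  rw [hdim] at hray
  convert hray using 2
  · refine setLIntegral_congr_fun measurableSet_Ioi fun r hr => ?_
    have hr0 := hR.trans hr
    rw [hnorm hr0, Real.rpow_natCast, ENNReal.ofReal_mul (by positivity)]
  · refine setLIntegral_congr_fun measurableSet_Ioi fun r hr => ?_
    have hr0 := hR.trans hr
    rw [Real.rpow_natCast, ENNReal.ofReal_mul (by positivity)]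
  · rw [← ENNReal.ofReal_mul (by positivity)]
    ring_nf

theorem exterior_hardy_toSphere [CompleteSpace F] (μ : Measure E) [μ.IsAddHaarMeasure]
    (hp : 1 < p) (ha0 : 0 ≤ a)
    (ha : a ≤ (p - Module.finrank ℝ E) / p) (hR : 0 < R) (huc : ContinuousOn u {x | R ≤ ‖x‖})
    (hud : ∀ x, R < ‖x‖ → DifferentiableAt ℝ u x) :
    ENNReal.ofReal (a ^ p) * ∫⁻ x in {x | R < ‖x‖}, .ofReal (‖u x‖ ^ p / ‖x‖ ^ p) ∂μ
      ≤ (∫⁻ x in {x | R < ‖x‖}, .ofReal (‖fderiv ℝ u x‖ ^ p) ∂μ)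
        + .ofReal (a ^ (p - 1) * R ^ (Module.finrank ℝ E - p)) *
          ∫⁻ ω : sphere (0 : E) 1, .ofReal (‖u (R • (ω : E))‖ ^ p) ∂μ.toSphere := by
  have hext : MeasurableSet {x : E | R < ‖x‖} := measurableSet_lt measurable_const measurable_norm
  have hu : AEMeasurable (fun x => ‖u x‖) (μ.restrict {x | R < ‖x‖}) :=
    (huc.norm.mono fun x (hx : R < ‖x‖) => hx.le).aemeasurable hext
  have hsphere : Measurable fun ω : sphere (0 : E) 1 => ‖u (R • (ω : E))‖ :=
    (huc.comp_continuous (by fun_prop) fun ω => by simp [norm_smul, abs_of_pos hR]).norm.measurable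
  rw [setLIntegral_polar_exterior μ hR.le (by fun_prop),
    setLIntegral_polar_exterior μ hR.le (by fun_prop),
    ← lintegral_const_mul' _ _ ENNReal.ofReal_ne_top,
    ← lintegral_const_mul' _ _ ENNReal.ofReal_ne_top, ← lintegral_add_right _ (by fun_prop)]
  exact lintegral_mono fun ω => radial_hardy_ray hp ha0 ha hR huc hud ω

end ExteriorHardy

section Cone

variable {V : Type*} [NormedAddCommGroup V] [NormedSpace ℝ V]

/-- The open cone over `{1} × G` with apex `0` and height `1`, as a subset of `ℝ × V`. -/
def coneOver (G : Set V) : Set (ℝ × V) := {q | q.1 ∈ Ioo 0 1 ∧ q.1⁻¹ • q.2 ∈ G}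

variable [FiniteDimensional ℝ V] [MeasurableSpace V] [BorelSpace V] {G : Set V}

theorem measurableSet_coneOver (hG : MeasurableSet G) : MeasurableSet (coneOver G) :=
  (measurable_fst measurableSet_Ioo).inter
    (hG.preimage (by fun_prop : Measurable fun q : ℝ × V => q.1⁻¹ • q.2))

theorem measure_prodMk_preimage_coneOver (ν : Measure V) [ν.IsAddHaarMeasure] (t : ℝ) :
    ν (Prod.mk t ⁻¹' coneOver G)
      = (Ioo (0 : ℝ) 1).indicator (fun t => .ofReal (t ^ Module.finrank ℝ V) * ν G) t := by
  by_cases ht : t ∈ Ioo (0 : ℝ) 1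
  · have hslice : Prod.mk t ⁻¹' coneOver G = (t⁻¹ • ·) ⁻¹' G := by
      ext y
      exact and_iff_right ht
    rw [indicator_of_mem ht, hslice, Measure.addHaar_preimage_smul ν (inv_ne_zero ht.1.ne'),
      inv_pow, inv_inv, abs_of_pos (pow_pos ht.1 _)]
  · have hslice : Prod.mk t ⁻¹' coneOver G = ∅ := eq_empty_of_forall_notMem fun y hy => ht hy.1
    rw [indicator_of_notMem ht, hslice, measure_empty]

theorem measure_coneOver (ν : Measure V) [ν.IsAddHaarMeasure] (hG : MeasurableSet G) :
    (volume.prod ν) (coneOver G) = .ofReal (1 / (Module.finrank ℝ V + 1)) * ν G := by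
  have hpow : ∫⁻ t in Ioo (0 : ℝ) 1, ENNReal.ofReal (t ^ Module.finrank ℝ V)
      = .ofReal (1 / (Module.finrank ℝ V + 1)) := by
    rw [restrict_Ioo_eq_restrict_Ioc, ← ofReal_integral_eq_lintegral_ofReal
      (intervalIntegral.intervalIntegrable_pow _).1
      (ae_restrict_of_forall_mem measurableSet_Ioc fun t ht => pow_nonneg ht.1.le _),
      ← intervalIntegral.integral_of_le zero_le_one, integral_pow]
    simp
  rw [Measure.prod_apply (measurableSet_coneOver hG)]
  simp_rw [measure_prodMk_preimage_coneOver ν]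
  rw [lintegral_indicator measurableSet_Ioo, lintegral_mul_const _ (by fun_prop), hpow]

end Cone

section Gnomonic

open scoped Pointwise

variable {E : Type*} [NormedAddCommGroup E] [InnerProductSpace ℝ E] {m : ℕ}
  (b : OrthonormalBasis (Fin (m + 1)) ℝ E) {ε : ℝ}

/-- The coordinates of a vector in `b`, with the one along `b 0` split off. -/
def splitCoord (x : E) : ℝ × (Fin m → ℝ) := (inner ℝ (b 0) x, fun i => inner ℝ (b i.succ) x)

/-- The gnomonic (central) projection onto the affine hyperplane tangent to the unit sphere at
`b 0`, in the coordinates given by the rest of the basis. It takes the value `0` on the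
hyperplane orthogonal to `b 0`. -/
def gnomonic (x : E) : Fin m → ℝ := (splitCoord b x).1⁻¹ • (splitCoord b x).2

theorem splitCoord_smul (r : ℝ) (x : E) : splitCoord b (r • x) = r • splitCoord b x := by
  ext <;> simp [splitCoord, real_inner_smul_right]

theorem gnomonic_smul {r : ℝ} (hr : r ≠ 0) (x : E) : gnomonic b (r • x) = gnomonic b x := by
  simp only [gnomonic, splitCoord_smul, Prod.smul_fst, Prod.smul_snd, smul_eq_mul, smul_smul]
  congr 1
  field_simp

theorem measurePreserving_splitCoord [FiniteDimensional ℝ E] [MeasurableSpace E] [BorelSpace E] :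
    MeasurePreserving (splitCoord b) volume (volume.prod volume) := by
  have hsplit : splitCoord b = MeasurableEquiv.piFinSuccAbove (fun _ => ℝ) 0 ∘
      WithLp.ofLp ∘ b.repr := by
    ext x <;> simp [splitCoord, b.repr_apply_apply, MeasurableEquiv.piFinSuccAbove, Fin.tail]
  rw [hsplit]
  exact (volume_preserving_piFinSuccAbove (fun _ : Fin (m + 1) => ℝ) 0).comp
    ((PiLp.volume_preserving_ofLp (Fin (m + 1))).comp b.measurePreserving_repr)

theorem one_sub_le_inner {e x : E} (he : ‖e‖ = 1) (hx : ‖x - e‖ ≤ ε) : 1 - ε ≤ inner ℝ e x := by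
  have h := (real_inner_le_norm e (e - x)).trans_eq (by rw [he, one_mul, norm_sub_rev])
  rw [inner_sub_right, real_inner_self_eq_norm_sq, he] at h
  linarith

theorem abs_inv_mul_sub_inv_mul_le {c d s t v w : ℝ} (hc : 0 < c) (hs : c ≤ s) (ht : c ≤ t)
    (hw : |w| ≤ 1 - c) (hst : |s - t| ≤ d) (hvw : |v - w| ≤ d) :
    |s⁻¹ * v - t⁻¹ * w| ≤ (c ^ 2)⁻¹ * d := by
  have hs0 : 0 < s := hc.trans_le hs
  have ht0 : 0 < t := hc.trans_le ht
  have hc1 : 0 ≤ 1 - c := (abs_nonneg w).trans hw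
  have hd : 0 ≤ d := (abs_nonneg _).trans hst
  calc |s⁻¹ * v - t⁻¹ * w|
      = |s⁻¹ * (v - w) - w * (s - t) * (s⁻¹ * t⁻¹)| := by
        congr 1
        field_simp
        ring
    _ ≤ |s⁻¹ * (v - w)| + |w * (s - t) * (s⁻¹ * t⁻¹)| := abs_sub _ _
    _ = s⁻¹ * |v - w| + |w| * |s - t| * (s⁻¹ * t⁻¹) := by
        rw [abs_mul, abs_mul, abs_mul, abs_of_pos (inv_pos.2 hs0),
          abs_of_pos (mul_pos (inv_pos.2 hs0) (inv_pos.2 ht0))]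
    _ ≤ c⁻¹ * d + (1 - c) * d * (c⁻¹ * c⁻¹) := by gcongr
    _ = (c ^ 2)⁻¹ * d := by
        field_simp
        ring

theorem abs_inv_inner_mul_inner_sub_le {e f x y : E} (he : ‖e‖ = 1) (hf : ‖f‖ = 1)
    (hfe : inner ℝ f e = 0) (hε : ε < 1) (hx : ‖x - e‖ ≤ ε) (hy : ‖y - e‖ ≤ ε) :
    |(inner ℝ e x)⁻¹ * inner ℝ f x - (inner ℝ e y)⁻¹ * inner ℝ f y|
      ≤ ((1 - ε) ^ 2)⁻¹ * ‖x - y‖ := by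
  have hfy : |inner ℝ f y| ≤ ε := by
    have h := (abs_real_inner_le_norm f (y - e)).trans_eq (by rw [hf, one_mul])
    rw [inner_sub_right, hfe, sub_zero] at h
    exact h.trans hy
  have hfxy : |inner ℝ f x - inner ℝ f y| ≤ ‖x - y‖ := by
    simpa [inner_sub_right, hf] using abs_real_inner_le_norm f (x - y)
  have hexy : |inner ℝ e x - inner ℝ e y| ≤ ‖x - y‖ := by
    simpa [inner_sub_right, he] using abs_real_inner_le_norm e (x - y)
  exact abs_inv_mul_sub_inv_mul_le (sub_pos.2 hε) (one_sub_le_inner he hx)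
    (one_sub_le_inner he hy) (by simpa) hexy hfxy

theorem lipschitzOnWith_gnomonic (hε : ε < 1) :
    LipschitzOnWith (Real.toNNReal ((1 - ε) ^ 2)⁻¹) (gnomonic b) (closedBall (b 0) ε) := by
  refine .of_dist_le_mul fun x hx y hy => ?_
  rw [mem_closedBall, dist_eq_norm] at hx hy
  rw [Real.coe_toNNReal _ (by positivity), dist_pi_le_iff (by positivity)]
  intro i
  rw [Real.dist_eq, dist_eq_norm]
  exact abs_inv_inner_mul_inner_sub_le (b.norm_eq_one 0) (b.norm_eq_one _)
    (b.inner_eq_zero (Fin.succ_ne_zero i)) hε hx hy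

theorem smul_subset_preimage_coneOver {s : Set E} (hε : ε < 1)
    (hs : s ⊆ closedBall (b 0) ε) (hs1 : s ⊆ sphere 0 1) :
    Ioo (0 : ℝ) 1 • s ⊆ splitCoord b ⁻¹' coneOver (gnomonic b '' s) := by
  rintro _ ⟨r, hr, x, hx, rfl⟩
  have hpos : 0 < inner ℝ (b 0) x :=
    (sub_pos.2 hε).trans_le (one_sub_le_inner (b.norm_eq_one 0) (mem_closedBall_iff_norm.1 (hs hx)))
  have hle : inner ℝ (b 0) x ≤ (1 : ℝ) := by
    simpa [mem_sphere_zero_iff_norm.1 (hs1 hx)] using real_inner_le_norm (b 0) x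
  refine ⟨?_, x, hx, (gnomonic_smul b hr.1.ne' x).symm⟩
  rw [splitCoord_smul]
  exact ⟨mul_pos hr.1 hpos, mul_lt_one_of_nonneg_of_lt_one_left hr.1.le hr.2 hle⟩

variable [FiniteDimensional ℝ E] [MeasurableSpace E] [BorelSpace E]

theorem toSphere_le_volume_closure_gnomonic {s : Set (sphere (0 : E) 1)} (hs : MeasurableSet s)
    (hε : ε < 1) (hsε : (↑) '' s ⊆ closedBall (b 0) ε) :
    (volume : Measure E).toSphere s ≤ volume (closure (gnomonic b '' ((↑) '' s))) := by
  set G := closure (gnomonic b '' ((↑) '' s))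
  have hG : MeasurableSet G := isClosed_closure.measurableSet
  have hdim : Module.finrank ℝ E = m + 1 := by simpa using Module.finrank_eq_card_basis b.toBasis
  have hcone : Ioo (0 : ℝ) 1 • ((↑) '' s : Set E) ⊆ splitCoord b ⁻¹' coneOver G :=
    (smul_subset_preimage_coneOver b hε hsε (by simp)).trans
      (preimage_mono fun q hq => ⟨hq.1, subset_closure hq.2⟩)
  calc (volume : Measure E).toSphere s
      = (m + 1 : ℕ) * volume (Ioo (0 : ℝ) 1 • ((↑) '' s : Set E)) := by
        rw [Measure.toSphere_apply' _ hs, hdim]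
    _ ≤ (m + 1 : ℕ) * volume (splitCoord b ⁻¹' coneOver G) := by gcongr
    _ = .ofReal (m + 1) * (.ofReal (1 / (m + 1)) * volume G) := by
        rw [(measurePreserving_splitCoord b).measure_preimage
          (measurableSet_coneOver hG).nullMeasurableSet, measure_coneOver _ hG,
          Module.finrank_fin_fun, ← ENNReal.ofReal_natCast, Nat.cast_succ]
    _ = volume G := by
        rw [← mul_assoc, ← ENNReal.ofReal_mul (by positivity),
          mul_one_div_cancel (by positivity), ENNReal.ofReal_one, one_mul]

theorem toSphere_le_mul_ediam_pow {s : Set (sphere (0 : E) 1)} (hs : MeasurableSet s)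
    (hε : ε < 1) (hsε : (↑) '' s ⊆ closedBall (b 0) ε) :
    (volume : Measure E).toSphere s ≤ .ofReal (((1 - ε) ^ 2)⁻¹ ^ m) * ediam s ^ m := by
  have hlip : ediam (gnomonic b '' ((↑) '' s)) ≤ .ofReal ((1 - ε) ^ 2)⁻¹ * ediam s := by
    rw [← isometry_subtype_coe.ediam_image s, ediam_image_le_iff]
    intro x hx y hy
    refine (lipschitzOnWith_gnomonic b hε (hsε hx) (hsε hy)).trans ?_
    gcongr
    exacts [le_rfl, edist_le_ediam_of_mem hx hy]
  calc (volume : Measure E).toSphere s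
      ≤ volume (closure (gnomonic b '' ((↑) '' s))) :=
        toSphere_le_volume_closure_gnomonic b hs hε hsε
    _ ≤ ediam (closure (gnomonic b '' ((↑) '' s))) ^ m := by
        simpa using Real.volume_pi_le_diam_pow (closure (gnomonic b '' ((↑) '' s)))
    _ ≤ (.ofReal ((1 - ε) ^ 2)⁻¹ * ediam s) ^ m := by
        rw [ediam_closure]
        gcongr
    _ = .ofReal (((1 - ε) ^ 2)⁻¹ ^ m) * ediam s ^ m := by
        rw [mul_pow, ENNReal.ofReal_pow (by positivity)]

end Gnomonic

section Hausdorff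

open scoped Pointwise

theorem le_smul_hausdorffMeasure_s15 {X : Type*} [EMetricSpace X] [MeasurableSpace X] [BorelSpace X]
    (μ : Measure X) {d : ℝ} {C δ : ℝ≥0∞} (hC0 : C ≠ 0) (hC : C ≠ ∞) (hδ : 0 < δ)
    (h : ∀ s, IsClosed s → ediam s ≤ δ → μ s ≤ C * ediam s ^ d) : μ ≤ C • μH[d] := by
  have hle : C⁻¹ • μ ≤ μH[d] := by
    refine Measure.le_hausdorffMeasure d _ δ hδ fun s hs => ?_
    rw [Measure.smul_apply, smul_eq_mul, ENNReal.inv_mul_le_iff hC0 hC, ← ediam_closure s]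
    exact (measure_mono subset_closure).trans (h _ isClosed_closure (by rwa [ediam_closure]))
  refine Measure.le_iff'.2 fun s => ?_
  have hs := Measure.le_iff'.1 hle s
  rwa [Measure.smul_apply, smul_eq_mul, ENNReal.inv_mul_le_iff hC0 hC] at hs

variable {E : Type*} [NormedAddCommGroup E] [InnerProductSpace ℝ E] [FiniteDimensional ℝ E]

theorem exists_orthonormalBasis_zero_eq {m : ℕ} (hm : Module.finrank ℝ E = m + 1) {e : E}
    (he : ‖e‖ = 1) : ∃ b : OrthonormalBasis (Fin (m + 1)) ℝ E, b 0 = e := by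
  have hv : Orthonormal ℝ (({0} : Set (Fin (m + 1))).domRestrict fun _ => e) :=
    ⟨fun _ => he, fun i j hij => (hij (Subsingleton.elim i j)).elim⟩
  obtain ⟨b, hb⟩ := hv.exists_orthonormalBasis_extension_of_card_eq (by simp [hm])
  exact ⟨b, hb 0 rfl⟩

variable [MeasurableSpace E] [BorelSpace E]

theorem toSphere_le_smul_hausdorffMeasure {m : ℕ} (hm : Module.finrank ℝ E = m + 1) {ε : ℝ}
    (hε0 : 0 < ε) (hε : ε < 1) :
    (volume : Measure E).toSphere ≤ ENNReal.ofReal (((1 - ε) ^ 2)⁻¹ ^ m) • μH[m] := by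
  have hc : 0 < ((1 - ε) ^ 2)⁻¹ ^ m := by
    have := sub_pos.2 hε
    positivity
  refine le_smul_hausdorffMeasure_s15 _ (by simpa using hc) ENNReal.ofReal_ne_top
    (ENNReal.ofReal_pos.2 hε0) fun s hs hsε => ?_
  rw [ENNReal.rpow_natCast]
  rcases s.eq_empty_or_nonempty with rfl | ⟨e, he⟩
  · simp
  obtain ⟨b, hb⟩ := exists_orthonormalBasis_zero_eq hm (norm_eq_of_mem_sphere e)
  refine toSphere_le_mul_ediam_pow b hs.measurableSet hε ?_
  rintro _ ⟨x, hx, rfl⟩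
  rw [hb, mem_closedBall, ← Subtype.dist_eq, ← edist_le_ofReal hε0.le]
  exact (edist_le_ediam_of_mem hx he).trans hsε

theorem toSphere_le_hausdorffMeasure [Nontrivial E] :
    (volume : Measure E).toSphere ≤ μH[(Module.finrank ℝ E : ℝ) - 1] := by
  obtain ⟨m, hm⟩ := Nat.exists_eq_add_one.2 (Module.finrank_pos (R := ℝ) (M := E))
  have hd : (Module.finrank ℝ E : ℝ) - 1 = m := by rw [hm]; simp
  rw [hd]
  refine Measure.le_iff'.2 fun A => ?_
  have hlim : Tendsto (fun ε : ℝ => ((1 - ε) ^ 2)⁻¹ ^ m) (𝓝[>] 0) (𝓝 1) := by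
    have hcont : ContinuousAt (fun ε : ℝ => ((1 - ε) ^ 2)⁻¹ ^ m) 0 := by
      fun_prop (disch := norm_num)
    simpa using hcont.tendsto.mono_left nhdsWithin_le_nhds
  have hlim' := ENNReal.Tendsto.mul_const (b := μH[(m : ℝ)] A) (ENNReal.tendsto_ofReal hlim)
    (.inl (by simp))
  rw [ENNReal.ofReal_one, one_mul] at hlim'
  refine ge_of_tendsto hlim' ?_
  filter_upwards [Ioo_mem_nhdsGT zero_lt_one] with ε hε
  exact Measure.le_iff'.1 (toSphere_le_smul_hausdorffMeasure hm hε.1 hε.2) A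

theorem smul_map_toSphere_le_hausdorffMeasure [Nontrivial E] {R : ℝ} (hR : 0 < R) :
    ENNReal.ofReal (R ^ ((Module.finrank ℝ E : ℝ) - 1)) •
        (volume : Measure E).toSphere.map (fun ω : sphere (0 : E) 1 => R • (ω : E))
      ≤ μH[(Module.finrank ℝ E : ℝ) - 1].restrict (sphere (0 : E) R) := by
  set d := (Module.finrank ℝ E : ℝ) - 1
  have hd : 0 ≤ d := sub_nonneg.2 (by exact_mod_cast Module.finrank_pos)
  refine Measure.le_iff.2 fun A hA => ?_
  set A' := (fun ω : sphere (0 : E) 1 => R • (ω : E)) ⁻¹' A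
  have hsub : R • ((↑) '' A' : Set E) ⊆ A ∩ sphere 0 R := by
    rintro _ ⟨_, ⟨ω, hω, rfl⟩, rfl⟩
    exact ⟨hω, by simp [norm_smul, abs_of_pos hR]⟩
  rw [Measure.smul_apply, smul_eq_mul, Measure.map_apply (by fun_prop) hA,
    Measure.restrict_apply hA]
  calc ENNReal.ofReal (R ^ d) * (volume : Measure E).toSphere A'
      ≤ .ofReal (R ^ d) * μH[d] A' := by
        gcongr
        exact toSphere_le_hausdorffMeasure
    _ = μH[d] (R • ((↑) '' A' : Set E)) := by
        rw [Measure.hausdorffMeasure_smul₀ hd hR.ne',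
          isometry_subtype_coe.hausdorffMeasure_image (.inl hd), ENNReal.smul_def, smul_eq_mul,
          ENNReal.coe_rpow_of_nonneg _ hd, ← enorm_eq_nnnorm, Real.enorm_of_nonneg hR.le,
          ENNReal.ofReal_rpow_of_pos hR]
    _ ≤ μH[d] (A ∩ sphere 0 R) := measure_mono hsub

theorem mul_lintegral_toSphere_le_setLIntegral_hausdorffMeasure [Nontrivial E] {R : ℝ} (hR : 0 < R)
    (g : E → ℝ≥0∞) :
    .ofReal (R ^ ((Module.finrank ℝ E : ℝ) - 1)) *
        ∫⁻ ω : sphere (0 : E) 1, g (R • (ω : E)) ∂(volume : Measure E).toSphere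
      ≤ ∫⁻ y in sphere (0 : E) R, g y ∂μH[(Module.finrank ℝ E : ℝ) - 1] := by
  have hemb : MeasurableEmbedding fun ω : sphere (0 : E) 1 => R • (ω : E) :=
    (Homeomorph.smulOfNeZero R hR.ne').measurableEmbedding.comp
      (.subtype_coe isClosed_sphere.measurableSet)
  rw [← hemb.lintegral_map, ← smul_eq_mul, ← lintegral_smul_measure]
  exact lintegral_mono' (smul_map_toSphere_le_hausdorffMeasure hR) le_rfl

end Hausdorff

theorem exists_rpow_eq_min {p c R σ : ℝ} (hp : 1 < p) (hc : 0 ≤ c) (hR : 0 ≤ R) (hσ : 0 ≤ σ) :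
    ∃ a, 0 ≤ a ∧ a ≤ c ∧ a ^ p = min (c ^ p) (R ^ p * σ ^ (p / (p - 1))) ∧
      a ^ (p - 1) ≤ R ^ (p - 1) * σ := by
  have hp1 : 0 < p - 1 := sub_pos.2 hp
  set b := R * σ ^ (1 / (p - 1))
  have hb : 0 ≤ b := by positivity
  have hbpow (t : ℝ) : b ^ t = R ^ t * σ ^ (t / (p - 1)) := by
    rw [Real.mul_rpow hR (by positivity), ← Real.rpow_mul hσ, one_div_mul_eq_div]
  refine ⟨min c b, le_min hc hb, min_le_left _ _, ?_, ?_⟩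
  · rw [← hbpow]
    exact (Real.monotoneOn_rpow_Ici_of_exponent_nonneg (by linarith)).map_min hc hb
  · calc min c b ^ (p - 1) ≤ b ^ (p - 1) := by gcongr; exact min_le_right _ _
      _ = R ^ (p - 1) * σ := by rw [hbpow, div_self hp1.ne', Real.rpow_one]

section Robin

variable {E F : Type*} [NormedAddCommGroup E]

theorem closure_setOf_lt_norm [NormedSpace ℝ E] {R : ℝ} (hR : R ≠ 0) :
    closure {x : E | R < ‖x‖} = {x | R ≤ ‖x‖} := by
  have hcompl : {x : E | R < ‖x‖} = (closedBall 0 R)ᶜ := by ext; simp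
  rw [hcompl, closure_compl, interior_closedBall _ hR]
  ext
  simp

theorem exterior_hardy_robin_general [InnerProductSpace ℝ E] [FiniteDimensional ℝ E] [Nontrivial E]
    [MeasurableSpace E] [BorelSpace E] [NormedAddCommGroup F] [InnerProductSpace ℝ F]
    [CompleteSpace F] {p R σ : ℝ} (hp : Module.finrank ℝ E < p) (hR : 0 < R) (hσ : 0 ≤ σ)
    {u : E → F} (huc : ContinuousOn u {x | R ≤ ‖x‖})
    (hud : ∀ x, R < ‖x‖ → DifferentiableAt ℝ u x) :
    .ofReal (min (((p - Module.finrank ℝ E) / p) ^ p) (R ^ p * σ ^ (p / (p - 1)))) *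
        ∫⁻ x in {x | R < ‖x‖}, .ofReal (‖u x‖ ^ p / ‖x‖ ^ p)
      ≤ (∫⁻ x in {x | R < ‖x‖}, .ofReal (‖fderiv ℝ u x‖ ^ p)) + .ofReal σ *
          ∫⁻ y in sphere (0 : E) R, .ofReal (‖u y‖ ^ p) ∂μH[(Module.finrank ℝ E : ℝ) - 1] := by
  set n := Module.finrank ℝ E
  have hn : (1 : ℝ) ≤ n := by exact_mod_cast Module.finrank_pos
  obtain ⟨a, ha0, ha, hap, hap'⟩ := exists_rpow_eq_min (c := (p - n) / p) (hn.trans_lt hp)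
    (div_nonneg (by linarith) (by linarith)) hR.le hσ
  have hbdry : a ^ (p - 1) * R ^ (n - p) ≤ σ * R ^ ((n : ℝ) - 1) := by
    calc a ^ (p - 1) * R ^ (n - p) ≤ R ^ (p - 1) * σ * R ^ (n - p) := by gcongr
      _ = σ * (R ^ (p - 1) * R ^ (n - p)) := by ring
      _ = σ * R ^ ((n : ℝ) - 1) := by
        rw [← Real.rpow_add hR]
        ring_nf
  rw [← hap]
  refine (exterior_hardy_toSphere volume (hn.trans_lt hp) ha0 ha hR huc hud).trans
    (add_le_add_right ?_ _)
  refine le_trans ?_ (mul_le_mul_right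
    (mul_lintegral_toSphere_le_setLIntegral_hausdorffMeasure hR fun y => .ofReal (‖u y‖ ^ p)) _)
  rw [← mul_assoc, ← ENNReal.ofReal_mul hσ]
  gcongr

end Robin

/-- **Theorem 6.2 (Robin–Hardy inequality on the complement of a ball, `p > n`).**
For `p > n ≥ 1`, `R > 0`, `σ > 0` and every `u ∈ W^{1,p}(B_R^c)`:
`∫_{B_R^c} |∇u|^p + σ ∫_{∂B_R} |u|^p dν ≥ C(σ,R) ∫_{B_R^c} |u|^p/|x|^p`,
with `C(σ,R) = min{((p-n)/p)^p, R^p σ^{p/(p-1)}}`. -/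
theorem exterior_hardy_robin (n : ℕ) (hn : 1 ≤ n) (p R σ : ℝ) (hpn : (n : ℝ) < p)
    (hR : 0 < R) (hσ : 0 < σ)
    (u : EuclideanSpace ℝ (Fin n) → ℝ)
    (hu : MemW1p p {x : EuclideanSpace ℝ (Fin n) | R < ‖x‖} u) :
    (∫⁻ x in {x : EuclideanSpace ℝ (Fin n) | R < ‖x‖},
        ENNReal.ofReal (‖fderiv ℝ u x‖ ^ p)) +
      ENNReal.ofReal σ *
        (∫⁻ y in Metric.sphere (0 : EuclideanSpace ℝ (Fin n)) R,
          ENNReal.ofReal (|u y| ^ p) ∂(Measure.hausdorffMeasure ((n : ℝ) - 1))) ≥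
      ENNReal.ofReal (min (((p - (n : ℝ)) / p) ^ p) (R ^ p * σ ^ (p / (p - 1)))) *
        ∫⁻ x in {x : EuclideanSpace ℝ (Fin n) | R < ‖x‖},
          ENNReal.ofReal (|u x| ^ p / ‖x‖ ^ p) := by
  have : Nontrivial (EuclideanSpace ℝ (Fin n)) :=
    Module.nontrivial_of_finrank_pos (R := ℝ) (by rwa [finrank_euclideanSpace_fin])
  obtain ⟨huc, hud, -⟩ := hu
  rw [closure_setOf_lt_norm hR.ne'] at huc
  simpa only [finrank_euclideanSpace_fin, Real.norm_eq_abs] using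
    exterior_hardy_robin_general (by rwa [finrank_euclideanSpace_fin]) hR hσ.le huc hud

end RobinHardy
end
end

section
/- Let p = n ≥ 2, R > 0 and σ > 0, and let B_R^c = {x ∈ ℝ^n : |x| > R}. Then there is no constant C > 0 such that ∫_{B_R^c} |∇u(x)|^n dx + σ ∫_{∂B_R} |u|^n dν ≥ C ∫_{B_R^c} |u(x)|^n/|x|^n dx holds for all u ∈ W^{1,n}(B_R^c). In fact, for the test functions u_k(x) = max{0, 1 − log(|x|/R)/log k}, k ∈ ℕ, k ≥ 2, the quotient ( ∫_{B_R^c} |∇u_k|^n dx + σ ∫_{∂B_R} |u_k|^n dν ) / ∫_{B_R^c} |u_k|^n/|x|^n dx tends to 0 as k → ∞. -/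
open MeasureTheory Metric Set Filter Bornology
open scoped ENNReal Topology

noncomputable section

namespace RobinHardy

/-- The test functions `u_k(x) = max{0, 1 - log(|x|/R)/log k}`. -/
def uTest (n : ℕ) (R : ℝ) (k : ℕ) (x : EuclideanSpace ℝ (Fin n)) : ℝ :=
  max 0 (1 - Real.log (‖x‖ / R) / Real.log k)

/-!
In dimension `n` the exponent `p = n` makes the problem scale invariant. A radial profile that is
affine in `log ‖x‖` and drops from `1` to `0` between the radii `R` and `R * exp L` has gradient of
norm `1 / (L * ‖x‖)`, so its energy is a multiple of `L ^ (1 - n)` and stays bounded, as does the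
boundary term, whereas the integral of `|u| ^ n / ‖x‖ ^ n` grows like `L`. The profile has kinks
where it vanishes; its square is differentiable outside the ball and has the same asymptotics.
-/

open Module
open scoped MeasureTheory Pointwise

section HausdorffMeasureSphere

lemma hausdorffMeasure_image_lt_top_of_contDiff {V F : Type*}
    [NormedAddCommGroup V] [NormedSpace ℝ V] [FiniteDimensional ℝ V]
    [NormedAddCommGroup F] [NormedSpace ℝ F] [MeasurableSpace F] [BorelSpace F]
    {f : V → F} (hf : ContDiff ℝ 1 f) {K : Set V} (hK : IsCompact K) :
    μH[finrank ℝ V] (f '' K) < ∞ := by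
  borelize V
  obtain ⟨C, hC⟩ := LocallyLipschitzOn.exists_lipschitzOnWith_of_compact hK
    hf.locallyLipschitz.locallyLipschitzOn
  exact (hC.hausdorffMeasure_image_le (Nat.cast_nonneg _)).trans_lt
    (ENNReal.mul_lt_top (ENNReal.rpow_lt_top_of_nonneg (Nat.cast_nonneg _) ENNReal.coe_ne_top)
      hK.measure_lt_top)

variable {E : Type*} [NormedAddCommGroup E] [InnerProductSpace ℝ E]

lemma hemisphere_subset_image_stereoInvFunAux {v : E} (hv : ‖v‖ = 1) :
    {x ∈ sphere (0 : E) 1 | inner ℝ v x ≤ 0} ⊆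
      (fun w : (ℝ ∙ v)ᗮ => stereoInvFunAux v w) '' closedBall 0 2 := by
  rintro x ⟨hx, hvx⟩
  have hx_ne : x ≠ v := by
    rintro rfl
    rw [real_inner_self_eq_norm_sq, hv] at hvx
    norm_num at hvx
  refine ⟨stereoToFun v x, ?_, congrArg Subtype.val (stereo_left_inv hv (x := ⟨x, hx⟩) hx_ne)⟩
  have h_proj : ‖(ℝ ∙ v)ᗮ.orthogonalProjectionOnto x‖ ≤ 1 :=
    (Submodule.norm_orthogonalProjectionOnto_apply_le _ x).trans_eq (by simpa using hx)
  have h_scale : |2 / (1 - inner ℝ v x)| ≤ 2 := by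
    rw [abs_of_nonneg (div_nonneg zero_le_two (by linarith)), div_le_iff₀ (by linarith)]
    linarith
  rw [mem_closedBall_zero_iff, stereoToFun_apply, norm_smul, Real.norm_eq_abs, innerSL_apply_apply]
  nlinarith [norm_nonneg ((ℝ ∙ v)ᗮ.orthogonalProjectionOnto x)]

variable [FiniteDimensional ℝ E] [MeasurableSpace E] [BorelSpace E]

lemma hausdorffMeasure_hemisphere_lt_top {v : E} (hv : ‖v‖ = 1) :
    μH[(finrank ℝ E : ℝ) - 1] {x ∈ sphere (0 : E) 1 | inner ℝ v x ≤ 0} < ∞ := by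
  have h_dim : (finrank ℝ (ℝ ∙ v)ᗮ : ℝ) = finrank ℝ E - 1 := by
    rw [← Submodule.finrank_add_finrank_orthogonal (ℝ ∙ v),
      finrank_span_singleton (norm_pos_iff.1 (hv ▸ one_pos))]
    push_cast
    ring
  rw [← h_dim]
  exact (measure_mono (hemisphere_subset_image_stereoInvFunAux hv)).trans_lt
    (hausdorffMeasure_image_lt_top_of_contDiff
      (contDiff_stereoInvFunAux.comp (ℝ ∙ v)ᗮ.subtypeL.contDiff) (isCompact_closedBall 0 2))

variable [Nontrivial E]

lemma hausdorffMeasure_unitSphere_lt_top :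
    μH[(finrank ℝ E : ℝ) - 1] (sphere (0 : E) 1) < ∞ := by
  obtain ⟨v, hv⟩ := exists_norm_eq E zero_le_one
  refine (measure_mono fun x hx => ?_).trans_lt
    (measure_union_lt_top (hausdorffMeasure_hemisphere_lt_top hv)
      (hausdorffMeasure_hemisphere_lt_top (v := -v) (by rwa [norm_neg])))
  rcases le_total (inner ℝ v x) 0 with h | h
  · exact Or.inl ⟨hx, h⟩
  · exact Or.inr ⟨hx, by rwa [inner_neg_left, neg_nonpos]⟩

lemma hausdorffMeasure_sphere_lt_top {R : ℝ} (hR : 0 < R) :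
    μH[(finrank ℝ E : ℝ) - 1] (sphere (0 : E) R) < ∞ := by
  have h_dim : (0 : ℝ) ≤ finrank ℝ E - 1 := sub_nonneg.2 (Nat.one_le_cast.2 finrank_pos)
  have h_scale : sphere (0 : E) R = R • sphere (0 : E) 1 := by
    simp [smul_sphere R (0 : E) zero_le_one, abs_of_pos hR]
  rw [h_scale, Measure.hausdorffMeasure_smul₀ h_dim hR.ne']
  exact ENNReal.mul_lt_top ENNReal.coe_lt_top hausdorffMeasure_unitSphere_lt_top

end HausdorffMeasureSphere

section RadialIntegrals

variable {E : Type*} [NormedAddCommGroup E] [NormedSpace ℝ E] [FiniteDimensional ℝ E]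
  [Nontrivial E] [MeasurableSpace E] [BorelSpace E] (μ : Measure E) [μ.IsAddHaarMeasure]

lemma lintegral_fun_norm_addHaar {f : ℝ → ℝ≥0∞} (hf : Measurable f) :
    ∫⁻ x, f ‖x‖ ∂μ =
      μ.toSphere univ * ∫⁻ r in Ioi (0 : ℝ), ENNReal.ofReal (r ^ (finrank ℝ E - 1)) * f r := by
  have hf' : Measurable fun r : Ioi (0 : ℝ) => f r := hf.comp measurable_subtype_coe
  calc ∫⁻ x, f ‖x‖ ∂μ
      = ∫⁻ x : ({0}ᶜ : Set E), f ‖(x : E)‖ ∂μ.comap (↑) := by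
        rw [lintegral_subtype_comap (measurableSet_singleton _).compl fun x => f ‖x‖,
          restrict_compl_singleton]
    _ = ∫⁻ z, f z.2 ∂μ.toSphere.prod (.volumeIoiPow (finrank ℝ E - 1)) := by
        simpa using μ.measurePreserving_homeomorphUnitSphereProd.lintegral_comp
          (hf'.comp measurable_snd)
    _ = μ.toSphere univ * ∫⁻ r, f r ∂Measure.volumeIoiPow (finrank ℝ E - 1) := by
        rw [lintegral_prod _ (by fun_prop)]
        simp only [lintegral_const, mul_comm]
    _ = _ := by
        rw [Measure.volumeIoiPow, lintegral_withDensity_eq_lintegral_mul _ (by fun_prop) hf']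
        exact congrArg _ (lintegral_subtype_comap measurableSet_Ioi
          fun r => ENNReal.ofReal (r ^ (finrank ℝ E - 1)) * f r)

lemma setLIntegral_inv_Ioc {a b : ℝ} (ha : 0 < a) (hab : a ≤ b) :
    ∫⁻ r in Ioc a b, ENNReal.ofReal r⁻¹ = ENNReal.ofReal (Real.log (b / a)) := by
  have h_int : IntegrableOn (fun r : ℝ => r⁻¹) (Ioc a b) :=
    (continuousOn_inv₀.mono fun r (hr : r ∈ Icc a b) =>
      (ha.trans_le hr.1).ne').integrableOn_Icc.mono_set Ioc_subset_Icc_self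
  have h_nonneg : 0 ≤ᵐ[volume.restrict (Ioc a b)] fun r : ℝ => r⁻¹ := by
    filter_upwards [ae_restrict_mem measurableSet_Ioc] with r hr
    exact inv_nonneg.2 (ha.trans hr.1).le
  rw [← ofReal_integral_eq_lintegral_ofReal h_int h_nonneg,
    ← intervalIntegral.integral_of_le hab, integral_inv_of_pos ha (ha.trans_le hab)]

lemma setLIntegral_inv_norm_pow_finrank {a b : ℝ} (ha : 0 < a) (hab : a ≤ b) :
    ∫⁻ x in (norm : E → ℝ) ⁻¹' Ioc a b, ENNReal.ofReal (‖x‖⁻¹ ^ finrank ℝ E) ∂μ =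
      μ.toSphere univ * ENNReal.ofReal (Real.log (b / a)) := by
  have h_radial : ∀ r ∈ Ioi (0 : ℝ), ENNReal.ofReal (r ^ (finrank ℝ E - 1)) *
      (Ioc a b).indicator (fun r => ENNReal.ofReal (r⁻¹ ^ finrank ℝ E)) r =
        (Ioc a b).indicator (fun r => ENNReal.ofReal r⁻¹) r := by
    intro r (hr : 0 < r)
    by_cases h : r ∈ Ioc a b
    · rw [indicator_of_mem h, indicator_of_mem h, ← ENNReal.ofReal_mul (by positivity),
        ← mul_pow_sub_one finrank_pos.ne', inv_pow, mul_left_comm,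
        mul_inv_cancel₀ (pow_pos hr _).ne', mul_one]
    · rw [indicator_of_notMem h, indicator_of_notMem h, mul_zero]
  have h_inter : Ioc a b ∩ Ioi 0 = Ioc a b := inter_eq_left.2 fun _ hr => ha.trans hr.1
  calc ∫⁻ x in (norm : E → ℝ) ⁻¹' Ioc a b, ENNReal.ofReal (‖x‖⁻¹ ^ finrank ℝ E) ∂μ
      = ∫⁻ x, (Ioc a b).indicator (fun r => ENNReal.ofReal (r⁻¹ ^ finrank ℝ E)) ‖x‖ ∂μ := by
        rw [← lintegral_indicator (measurable_norm measurableSet_Ioc)]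
        rfl
    _ = μ.toSphere univ * ∫⁻ r in Ioi (0 : ℝ), (Ioc a b).indicator
          (fun r => ENNReal.ofReal r⁻¹) r := by
        rw [lintegral_fun_norm_addHaar μ (by measurability),
          setLIntegral_congr_fun measurableSet_Ioi h_radial]
    _ = μ.toSphere univ * ENNReal.ofReal (Real.log (b / a)) := by
        rw [setLIntegral_indicator measurableSet_Ioc, h_inter, setLIntegral_inv_Ioc ha hab]

end RadialIntegrals

lemma abs_log_sub_log_le {a b t : ℝ} (ht : 0 < t) (ha : t ≤ a) (hb : t ≤ b) :
    |Real.log a - Real.log b| ≤ |a - b| / t := by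
  wlog hab : b ≤ a generalizing a b
  · rw [abs_sub_comm, abs_sub_comm a]
    exact this hb ha (le_of_not_ge hab)
  have hb0 : 0 < b := ht.trans_le hb
  have ha0 : 0 < a := ht.trans_le ha
  rw [abs_of_nonneg (sub_nonneg.2 (Real.log_le_log hb0 hab)), abs_of_nonneg (sub_nonneg.2 hab)]
  calc Real.log a - Real.log b = Real.log (a / b) := (Real.log_div ha0.ne' hb0.ne').symm
    _ ≤ a / b - 1 := Real.log_le_sub_one_of_pos (div_pos ha0 hb0)
    _ = (a - b) / b := by rw [sub_div, div_self hb0.ne']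
    _ ≤ (a - b) / t := by gcongr

lemma differentiable_max_zero_pow {m : ℕ} (hm : 1 < m) :
    Differentiable ℝ fun t : ℝ => max 0 t ^ m := by
  intro t
  rcases lt_trichotomy t 0 with ht | rfl | ht
  · have h_zero : (fun s : ℝ => max 0 s ^ m) =ᶠ[𝓝 t] fun _ => 0 := by
      filter_upwards [eventually_lt_nhds ht] with s hs
      rw [max_eq_left hs.le, zero_pow (by lia)]
    exact (differentiableAt_const 0).congr_of_eventuallyEq h_zero
  · refine (Asymptotics.IsBigO.hasFDerivAt (n := m) (.of_bound' (.of_forall fun s => ?_))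
      hm).differentiableAt
    rw [sub_zero, norm_pow, norm_pow, norm_norm]
    gcongr
    simpa using abs_max_le_max_abs_abs (a := 0) (b := s)
  · have h_pow : (fun s : ℝ => max 0 s ^ m) =ᶠ[𝓝 t] fun s => s ^ m := by
      filter_upwards [eventually_gt_nhds ht] with s hs
      rw [max_eq_right hs.le]
    exact (differentiableAt_pow m).congr_of_eventuallyEq h_pow

section LogCutoff

variable {E : Type*} [NormedAddCommGroup E]

/-- The radial cutoff that is `1` on the sphere of radius `R` and decreases linearly in `log ‖x‖`
until it vanishes at radius `R * exp L`; thus `uTest n R k = logCutoff R (log k)`. -/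
def logCutoff (R L : ℝ) (x : E) : ℝ :=
  max 0 (1 - Real.log (‖x‖ / R) / L)

variable {R L : ℝ} {x y : E} {m : ℕ}

lemma continuousOn_logCutoff (hR : R ≠ 0) : ContinuousOn (logCutoff R L) ({0}ᶜ : Set E) := by
  unfold logCutoff
  fun_prop (disch := simp_all)

lemma logCutoff_nonneg : 0 ≤ logCutoff R L x := le_max_left _ _

lemma logCutoff_le_one (hR : 0 < R) (hL : 0 ≤ L) (hx : R ≤ ‖x‖) : logCutoff R L x ≤ 1 :=
  max_le zero_le_one <| sub_le_self _ <|
    div_nonneg (Real.log_nonneg ((one_le_div₀ hR).2 hx)) hL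

lemma logCutoff_eq_one (hR : R ≠ 0) (hx : ‖x‖ = R) : logCutoff R L x = 1 := by
  simp [logCutoff, hx, div_self hR]

lemma logCutoff_eq_zero (hR : 0 < R) (hL : 0 < L) (hx : R * Real.exp L ≤ ‖x‖) :
    logCutoff R L x = 0 := by
  have h_log : L ≤ Real.log (‖x‖ / R) := by
    rw [Real.le_log_iff_exp_le (div_pos (lt_of_lt_of_le (by positivity) hx) hR), le_div_iff₀' hR]
    exact hx
  exact max_eq_left (sub_nonpos.2 ((one_le_div₀ hL).2 h_log))

lemma one_half_le_logCutoff (hR : 0 < R) (hL : 0 < L) (hx₀ : 0 < ‖x‖)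
    (hx : ‖x‖ ≤ R * Real.exp (L / 2)) : 1 / 2 ≤ logCutoff R L x := by
  have h_log : Real.log (‖x‖ / R) ≤ L / 2 := by
    rw [Real.log_le_iff_le_exp (div_pos hx₀ hR), div_le_iff₀' hR]
    exact hx
  have h_div : Real.log (‖x‖ / R) / L ≤ 1 / 2 := by
    rw [div_le_iff₀ hL]
    linarith
  exact le_max_of_le_right (by linarith)

lemma abs_logCutoff_sub_le {t : ℝ} (hR : R ≠ 0) (hL : 0 ≤ L) (ht : 0 < t)
    (hx : t ≤ ‖x‖) (hy : t ≤ ‖y‖) :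
    |logCutoff R L x - logCutoff R L y| ≤ ‖x - y‖ / (L * t) := by
  calc |logCutoff R L x - logCutoff R L y|
      ≤ |(1 - Real.log (‖x‖ / R) / L) - (1 - Real.log (‖y‖ / R) / L)| := by
        simpa [logCutoff, max_comm] using abs_max_sub_max_le_abs
          (1 - Real.log (‖x‖ / R) / L) (1 - Real.log (‖y‖ / R) / L) 0
    _ = |Real.log ‖x‖ - Real.log ‖y‖| / L := by
        rw [Real.log_div (ht.trans_le hx).ne' hR, Real.log_div (ht.trans_le hy).ne' hR,
          ← abs_of_nonneg hL, ← abs_div, abs_of_nonneg hL, abs_sub_comm]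
        ring_nf
    _ ≤ ‖x - y‖ / t / L := by
        gcongr
        exact (abs_log_sub_log_le ht hx hy).trans
          (div_le_div_of_nonneg_right (abs_norm_sub_norm_le x y) ht.le)
    _ = ‖x - y‖ / (L * t) := by rw [div_div, mul_comm]

lemma abs_logCutoff_pow_sub_le {t : ℝ} (hR : 0 < R) (hL : 0 ≤ L) (ht : R ≤ t)
    (hx : t ≤ ‖x‖) (hy : t ≤ ‖y‖) :
    |logCutoff R L x ^ m - logCutoff R L y ^ m| ≤ m / (L * t) * ‖x - y‖ := by
  have h_max : max |logCutoff R L x| |logCutoff R L y| ≤ 1 := by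
    simp only [abs_of_nonneg logCutoff_nonneg]
    exact max_le (logCutoff_le_one hR hL (ht.trans hx)) (logCutoff_le_one hR hL (ht.trans hy))
  calc |logCutoff R L x ^ m - logCutoff R L y ^ m|
      ≤ |logCutoff R L x - logCutoff R L y| * m *
          max |logCutoff R L x| |logCutoff R L y| ^ (m - 1) := abs_pow_sub_pow_le _ _ _
    _ ≤ |logCutoff R L x - logCutoff R L y| * m * 1 := by
        gcongr
        exact pow_le_one₀ (le_max_of_le_left (abs_nonneg _)) h_max
    _ ≤ ‖x - y‖ / (L * t) * m * 1 := by
        gcongr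
        exact abs_logCutoff_sub_le hR.ne' hL (hR.trans_le ht) hx hy
    _ = m / (L * t) * ‖x - y‖ := by ring

variable [NormedSpace ℝ E]

lemma norm_fderiv_logCutoff_pow_le (hR : 0 < R) (hL : 0 < L) (hx : R < ‖x‖) :
    ‖fderiv ℝ (fun y => logCutoff R L y ^ m) x‖ ≤ m / (L * ‖x‖) := by
  have h_bound : ∀ t ∈ Ioo R ‖x‖, ‖fderiv ℝ (fun y => logCutoff R L y ^ m) x‖ ≤ m / (L * t) := by
    rintro t ⟨hRt, htx⟩
    have ht : 0 < t := hR.trans hRt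
    refine norm_fderiv_le_of_lip' ℝ (by positivity) ?_
    filter_upwards [continuous_norm.continuousAt.eventually_const_lt htx] with y hy
    exact abs_logCutoff_pow_sub_le hR hL.le hRt.le hy.le htx.le
  have h_lim : Tendsto (fun t => m / (L * t)) (𝓝[<] ‖x‖) (𝓝 (m / (L * ‖x‖))) :=
    (tendsto_const_nhds.div (tendsto_id.const_mul L)
      (mul_pos hL (hR.trans hx)).ne').mono_left nhdsWithin_le_nhds
  exact ge_of_tendsto h_lim (eventually_of_mem (Ioo_mem_nhdsLT hx) h_bound)

lemma fderiv_logCutoff_pow_eq_zero (hR : 0 < R) (hL : 0 < L) (hm : m ≠ 0)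
    (hx : R * Real.exp L < ‖x‖) : fderiv ℝ (fun y => logCutoff R L y ^ m) x = 0 := by
  have h_zero : (fun y : E => logCutoff R L y ^ m) =ᶠ[𝓝 x] fun _ => 0 := by
    filter_upwards [continuous_norm.continuousAt.eventually_const_lt hx] with y hy
    rw [logCutoff_eq_zero hR hL hy.le, zero_pow hm]
  rw [h_zero.fderiv_eq, fderiv_fun_const, Pi.zero_apply]

lemma ofReal_norm_fderiv_logCutoff_pow_rpow_le (hR : 0 < R) (hL : 0 < L) (hm : m ≠ 0) {d : ℕ}
    (hd : d ≠ 0) (hx : R < ‖x‖) :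
    ENNReal.ofReal (‖fderiv ℝ (fun y => logCutoff R L y ^ m) x‖ ^ (d : ℝ)) ≤
      (norm ⁻¹' Ioc R (R * Real.exp L)).indicator
        (fun x => ENNReal.ofReal ((m / L) ^ d) * ENNReal.ofReal (‖x‖⁻¹ ^ d)) x := by
  rw [Real.rpow_natCast]
  by_cases h : ‖x‖ ≤ R * Real.exp L
  · rw [indicator_of_mem (show x ∈ norm ⁻¹' Ioc R (R * Real.exp L) from ⟨hx, h⟩),
      ← ENNReal.ofReal_mul (by positivity), ← mul_pow, ← div_eq_mul_inv, div_div]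
    gcongr
    exact norm_fderiv_logCutoff_pow_le hR hL hx
  · rw [fderiv_logCutoff_pow_eq_zero hR hL hm (not_le.1 h), norm_zero, zero_pow hd,
      ENNReal.ofReal_zero]
    exact zero_le

lemma differentiableAt_logCutoff_pow {F : Type*} [NormedAddCommGroup F] [InnerProductSpace ℝ F]
    {x : F} (hR : R ≠ 0) (hm : 1 < m) (hx : x ≠ 0) :
    DifferentiableAt ℝ (fun y => logCutoff R L y ^ m) x := by
  have h_ne : ‖x‖ / R ≠ 0 := div_ne_zero (norm_ne_zero_iff.2 hx) hR
  have h_norm : DifferentiableAt ℝ (fun y : F => ‖y‖) x := differentiableAt_id.norm ℝ hx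
  have h_profile : DifferentiableAt ℝ (fun y : F => 1 - Real.log (‖y‖ / R) / L) x := by
    fun_prop (disch := assumption)
  exact (differentiable_max_zero_pow hm _).comp x h_profile

end LogCutoff

section Energies

variable {E : Type*} [NormedAddCommGroup E] [MeasurableSpace E]

/-- The weighted integral of `|u| ^ p / ‖x‖ ^ p` on the right-hand side of the Hardy inequality
on the exterior of the ball of radius `R`. -/
def hardyIntegral (μ : Measure E) (p R : ℝ) (u : E → ℝ) : ℝ≥0∞ :=
  ∫⁻ x in {x | R < ‖x‖}, ENNReal.ofReal (|u x| ^ p / ‖x‖ ^ p) ∂μ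

lemma setLIntegral_sphere_logCutoff_pow [OpensMeasurableSpace E] (ν : Measure E) {R L : ℝ} {m : ℕ}
    (hR : R ≠ 0) (p : ℝ) :
    ∫⁻ y in sphere (0 : E) R, ENNReal.ofReal (|logCutoff R L y ^ m| ^ p) ∂ν = ν (sphere 0 R) := by
  rw [setLIntegral_congr_fun isClosed_sphere.measurableSet (g := fun _ => 1), setLIntegral_one]
  intro y hy
  simp [logCutoff_eq_one hR (mem_sphere_zero_iff_norm.1 hy)]

lemma setLIntegral_logCutoff_pow_le [OpensMeasurableSpace E] (μ : Measure E) {R L p : ℝ} {m : ℕ}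
    (hR : 0 < R) (hL : 0 < L) (hm : m ≠ 0) (hp : 0 < p) :
    ∫⁻ x in {x : E | R < ‖x‖}, ENNReal.ofReal (|logCutoff R L x ^ m| ^ p) ∂μ ≤
      μ (closedBall 0 (R * Real.exp L)) := by
  calc _ ≤ ∫⁻ x in {x : E | R < ‖x‖}, (closedBall 0 (R * Real.exp L)).indicator 1 x ∂μ := by
        refine setLIntegral_mono' (measurableSet_lt measurable_const measurable_norm) fun x hx => ?_
        by_cases h : x ∈ closedBall 0 (R * Real.exp L)
        · rw [indicator_of_mem h, abs_of_nonneg (pow_nonneg logCutoff_nonneg m), Pi.one_apply,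
            ENNReal.ofReal_le_one]
          exact Real.rpow_le_one (pow_nonneg logCutoff_nonneg m)
            (pow_le_one₀ logCutoff_nonneg (logCutoff_le_one hR hL.le (le_of_lt hx))) hp.le
        · rw [indicator_of_notMem h, logCutoff_eq_zero hR hL
            (le_of_not_ge (mt mem_closedBall_zero_iff.2 h)), zero_pow hm, abs_zero,
            Real.zero_rpow hp.ne', ENNReal.ofReal_zero]
    _ ≤ μ (closedBall 0 (R * Real.exp L)) :=
        (setLIntegral_le_lintegral _ _).trans_eq
          (lintegral_indicator_one isClosed_closedBall.measurableSet)

variable [NormedSpace ℝ E]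

/-- The left-hand side of the Robin–Hardy inequality on the exterior of the ball of radius `R`,
with an arbitrary measure `ν` on the boundary sphere: the Robin parameter `σ` is absorbed in `ν`. -/
def robinEnergy (μ ν : Measure E) (p R : ℝ) (u : E → ℝ) : ℝ≥0∞ :=
  (∫⁻ x in {x | R < ‖x‖}, ENNReal.ofReal (‖fderiv ℝ u x‖ ^ p) ∂μ) +
    ∫⁻ y in sphere 0 R, ENNReal.ofReal (|u y| ^ p) ∂ν

variable [FiniteDimensional ℝ E] [Nontrivial E] [BorelSpace E]
  (μ : Measure E) [μ.IsAddHaarMeasure] (ν : Measure E) {R L : ℝ} {m : ℕ}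

lemma setLIntegral_norm_fderiv_logCutoff_pow_le (hR : 0 < R) (hL : 0 < L) (hm : m ≠ 0) :
    ∫⁻ x in {x : E | R < ‖x‖}, ENNReal.ofReal
        (‖fderiv ℝ (fun y => logCutoff R L y ^ m) x‖ ^ (finrank ℝ E : ℝ)) ∂μ ≤
      ENNReal.ofReal ((m / L) ^ finrank ℝ E) * (μ.toSphere univ * ENNReal.ofReal L) := by
  have h_shell : MeasurableSet ((norm : E → ℝ) ⁻¹' Ioc R (R * Real.exp L)) :=
    measurable_norm measurableSet_Ioc
  calc _ ≤ ∫⁻ x in {x : E | R < ‖x‖}, (norm ⁻¹' Ioc R (R * Real.exp L)).indicator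
          (fun x => ENNReal.ofReal ((m / L) ^ finrank ℝ E) *
            ENNReal.ofReal (‖x‖⁻¹ ^ finrank ℝ E)) x ∂μ :=
        setLIntegral_mono' (measurableSet_lt measurable_const measurable_norm) fun _ hx =>
          ofReal_norm_fderiv_logCutoff_pow_rpow_le hR hL hm finrank_pos.ne' hx
    _ ≤ ∫⁻ x in norm ⁻¹' Ioc R (R * Real.exp L), ENNReal.ofReal ((m / L) ^ finrank ℝ E) *
          ENNReal.ofReal (‖x‖⁻¹ ^ finrank ℝ E) ∂μ :=
        (setLIntegral_le_lintegral _ _).trans_eq (lintegral_indicator h_shell _)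
    _ = ENNReal.ofReal ((m / L) ^ finrank ℝ E) * (μ.toSphere univ * ENNReal.ofReal L) := by
        rw [lintegral_const_mul _ (by fun_prop), setLIntegral_inv_norm_pow_finrank μ hR
          (le_mul_of_one_le_right hR.le (Real.one_le_exp hL.le)), mul_div_cancel_left₀ _ hR.ne',
          Real.log_exp]

lemma setLIntegral_norm_fderiv_logCutoff_pow_le_of_one_le (hR : 0 < R) (hL : 1 ≤ L) (hm : m ≠ 0) :
    ∫⁻ x in {x : E | R < ‖x‖}, ENNReal.ofReal
        (‖fderiv ℝ (fun y => logCutoff R L y ^ m) x‖ ^ (finrank ℝ E : ℝ)) ∂μ ≤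
      ENNReal.ofReal (m ^ finrank ℝ E) * μ.toSphere univ := by
  have hL₀ : 0 < L := one_pos.trans_le hL
  have h_scale : (m / L : ℝ) ^ finrank ℝ E * L ≤ m ^ finrank ℝ E := by
    rw [div_pow, div_mul_eq_mul_div, div_le_iff₀ (pow_pos hL₀ _)]
    gcongr
    exact le_self_pow₀ hL finrank_pos.ne'
  calc _ ≤ ENNReal.ofReal ((m / L) ^ finrank ℝ E) * (μ.toSphere univ * ENNReal.ofReal L) :=
        setLIntegral_norm_fderiv_logCutoff_pow_le μ hR hL₀ hm
    _ = ENNReal.ofReal ((m / L) ^ finrank ℝ E * L) * μ.toSphere univ := by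
        rw [ENNReal.ofReal_mul (by positivity)]
        ring
    _ ≤ ENNReal.ofReal (m ^ finrank ℝ E) * μ.toSphere univ := by gcongr

lemma robinEnergy_logCutoff_pow_le (hR : 0 < R) (hL : 1 ≤ L) (hm : m ≠ 0) :
    robinEnergy μ ν (finrank ℝ E) R (fun x => logCutoff R L x ^ m) ≤
      ENNReal.ofReal (m ^ finrank ℝ E) * μ.toSphere univ + ν (sphere 0 R) :=
  add_le_add (setLIntegral_norm_fderiv_logCutoff_pow_le_of_one_le μ hR hL hm)
    (setLIntegral_sphere_logCutoff_pow ν hR.ne' _).le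

lemma le_hardyIntegral_logCutoff_pow (hR : 0 < R) (hL : 0 < L) :
    ENNReal.ofReal ((1 / 2) ^ (m * finrank ℝ E)) * (μ.toSphere univ * ENNReal.ofReal (L / 2)) ≤
      hardyIntegral μ (finrank ℝ E) R (fun x => logCutoff R L x ^ m) := by
  have h_shell : MeasurableSet ((norm : E → ℝ) ⁻¹' Ioc R (R * Real.exp (L / 2))) :=
    measurable_norm measurableSet_Ioc
  calc _ = ∫⁻ x in (norm : E → ℝ) ⁻¹' Ioc R (R * Real.exp (L / 2)),
          ENNReal.ofReal ((1 / 2) ^ (m * finrank ℝ E)) *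
            ENNReal.ofReal (‖x‖⁻¹ ^ finrank ℝ E) ∂μ := by
        rw [lintegral_const_mul _ (by fun_prop), setLIntegral_inv_norm_pow_finrank μ hR
          (le_mul_of_one_le_right hR.le (Real.one_le_exp (half_pos hL).le)),
          mul_div_cancel_left₀ _ hR.ne', Real.log_exp]
    _ ≤ ∫⁻ x in (norm : E → ℝ) ⁻¹' Ioc R (R * Real.exp (L / 2)), ENNReal.ofReal
          (|logCutoff R L x ^ m| ^ (finrank ℝ E : ℝ) / ‖x‖ ^ (finrank ℝ E : ℝ)) ∂μ := by
        refine setLIntegral_mono' h_shell fun x hx => ?_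
        rw [← ENNReal.ofReal_mul (by positivity), Real.rpow_natCast, Real.rpow_natCast,
          abs_of_nonneg (pow_nonneg logCutoff_nonneg m), ← pow_mul, inv_pow, ← div_eq_mul_inv]
        gcongr
        exact one_half_le_logCutoff hR hL (hR.trans hx.1) hx.2
    _ ≤ _ := lintegral_mono_set fun _ hx => hx.1

lemma tendsto_hardyIntegral_logCutoff_pow (hR : 0 < R) :
    Tendsto (fun L => hardyIntegral μ (finrank ℝ E) R (fun x => logCutoff R L x ^ m))
      atTop (𝓝 ∞) := by
  have h_coeff : ENNReal.ofReal ((1 / 2) ^ (m * finrank ℝ E)) * μ.toSphere univ ≠ 0 :=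
    mul_ne_zero (ENNReal.ofReal_pos.2 (by positivity)).ne'
      (Measure.measure_univ_ne_zero.2 μ.toSphere_ne_zero)
  have h_lower : Tendsto (fun L => ENNReal.ofReal ((1 / 2) ^ (m * finrank ℝ E)) *
      μ.toSphere univ * ENNReal.ofReal (L / 2)) atTop (𝓝 ∞) := by
    rw [← ENNReal.mul_top h_coeff]
    exact ENNReal.Tendsto.const_mul
      (ENNReal.tendsto_ofReal_atTop.comp (tendsto_id.atTop_div_const two_pos))
      (Or.inl ENNReal.top_ne_zero)
  refine tendsto_nhds_top_mono h_lower ?_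
  filter_upwards [eventually_gt_atTop 0] with L hL
  rw [mul_assoc]
  exact le_hardyIntegral_logCutoff_pow μ hR hL

variable {ν}

lemma eventually_robinEnergy_logCutoff_pow_lt (hR : 0 < R) (hν : ν (sphere 0 R) ≠ ∞) (hm : m ≠ 0)
    {C : ℝ≥0∞} (hC : C ≠ 0) :
    ∀ᶠ L in atTop, robinEnergy μ ν (finrank ℝ E) R (fun x => logCutoff R L x ^ m) <
      C * hardyIntegral μ (finrank ℝ E) R (fun x => logCutoff R L x ^ m) := by
  have h_rhs : Tendsto (fun L => C * hardyIntegral μ (finrank ℝ E) R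
      (fun x => logCutoff R L x ^ m)) atTop (𝓝 ∞) := by
    rw [← ENNReal.mul_top hC]
    exact ENNReal.Tendsto.const_mul (tendsto_hardyIntegral_logCutoff_pow μ hR)
      (Or.inl ENNReal.top_ne_zero)
  have h_top : ENNReal.ofReal (m ^ finrank ℝ E) * μ.toSphere univ + ν (sphere 0 R) ≠ ∞ :=
    ENNReal.add_ne_top.2 ⟨ENNReal.mul_ne_top ENNReal.ofReal_ne_top (measure_ne_top _ _), hν⟩
  filter_upwards [h_rhs.eventually_const_lt h_top.lt_top, eventually_ge_atTop 1]
    with L h_lt hL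
  exact (robinEnergy_logCutoff_pow_le μ ν hR hL hm).trans_lt h_lt

lemma tendsto_robinEnergy_div_hardyIntegral_logCutoff_pow (hR : 0 < R) (hν : ν (sphere 0 R) ≠ ∞)
    (hm : m ≠ 0) :
    Tendsto (fun L => robinEnergy μ ν (finrank ℝ E) R (fun x => logCutoff R L x ^ m) /
      hardyIntegral μ (finrank ℝ E) R (fun x => logCutoff R L x ^ m)) atTop (𝓝 0) := by
  rw [ENNReal.tendsto_nhds_zero]
  intro ε hε
  filter_upwards [eventually_robinEnergy_logCutoff_pow_lt μ hR hν hm hε.ne'] with L h_lt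
  exact ENNReal.div_le_of_le_mul h_lt.le

end Energies

section EuclideanSpace

variable {n : ℕ} {R : ℝ}

lemma memW1p_logCutoff_pow {L : ℝ} {m : ℕ} (hn : n ≠ 0) (hR : 0 < R) (hL : 0 < L) (hm : 1 < m) :
    MemW1p n {x : EuclideanSpace ℝ (Fin n) | R < ‖x‖} (fun x => logCutoff R L x ^ m) := by
  have : NeZero n := ⟨hn⟩
  have h_ne {x : EuclideanSpace ℝ (Fin n)} (hx : R ≤ ‖x‖) : x ≠ 0 :=
    norm_pos_iff.1 (hR.trans_le hx)
  refine ⟨?_, fun x hx => differentiableAt_logCutoff_pow hR.ne' hm (h_ne (le_of_lt hx)),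
    ne_top_of_le_ne_top measure_closedBall_lt_top.ne
      (setLIntegral_logCutoff_pow_le volume hR hL (by lia) (by positivity)), ?_⟩
  · refine ((continuousOn_logCutoff hR.ne').pow m).mono fun x hx => h_ne ?_
    exact closure_lt_subset_le continuous_const continuous_norm hx
  · have h_gradient := setLIntegral_norm_fderiv_logCutoff_pow_le
      (volume : Measure (EuclideanSpace ℝ (Fin n))) hR hL (show m ≠ 0 by lia)
    rw [finrank_euclideanSpace_fin] at h_gradient
    exact ne_top_of_le_ne_top (ENNReal.mul_ne_top ENNReal.ofReal_ne_top
      (ENNReal.mul_ne_top (measure_ne_top _ _) ENNReal.ofReal_ne_top)) h_gradient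

lemma hausdorffMeasure_euclideanSphere_lt_top (hn : n ≠ 0) (hR : 0 < R) :
    μH[(n : ℝ) - 1] (sphere (0 : EuclideanSpace ℝ (Fin n)) R) < ∞ := by
  have : NeZero n := ⟨hn⟩
  simpa only [finrank_euclideanSpace_fin] using
    hausdorffMeasure_sphere_lt_top (E := EuclideanSpace ℝ (Fin n)) hR

theorem exterior_hardy_fails_p_eq_n_general (hn : n ≠ 0) (hR : 0 < R)
    {ν : Measure (EuclideanSpace ℝ (Fin n))} (hν : ν (sphere 0 R) ≠ ∞) :
    (¬ ∃ C : ℝ, 0 < C ∧ ∀ u : EuclideanSpace ℝ (Fin n) → ℝ, MemW1p n {x | R < ‖x‖} u →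
        robinEnergy volume ν n R u ≥ ENNReal.ofReal C * hardyIntegral volume n R u) ∧
      Tendsto (fun k => robinEnergy volume ν n R (uTest n R k) /
        hardyIntegral volume n R (uTest n R k)) atTop (𝓝 0) := by
  have : NeZero n := ⟨hn⟩
  constructor
  · rintro ⟨C, hC, h_hardy⟩
    have h_lt := eventually_robinEnergy_logCutoff_pow_lt volume hR hν two_ne_zero
      (ENNReal.ofReal_pos.2 hC).ne'
    rw [finrank_euclideanSpace_fin] at h_lt
    obtain ⟨L, h_lt, hL⟩ := (h_lt.and (eventually_gt_atTop 0)).exists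
    exact h_lt.not_ge (h_hardy _ (memW1p_logCutoff_pow hn hR hL one_lt_two))
  · have h_quotient := tendsto_robinEnergy_div_hardyIntegral_logCutoff_pow volume hR hν one_ne_zero
    simp only [pow_one, finrank_euclideanSpace_fin] at h_quotient
    exact h_quotient.comp (Real.tendsto_log_atTop.comp tendsto_natCast_atTop_atTop)

end EuclideanSpace

/-- **Remark 6.3 (ii): failure of the Robin–Hardy inequality for `p = n`.**
For `p = n ≥ 2`, `R > 0`, `σ > 0`, no constant `C > 0` makes the inequality
`∫_{B_R^c} |∇u|^n + σ∫_{∂B_R} |u|^n dν ≥ C ∫_{B_R^c} |u|^n/|x|^n` hold for all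
`u ∈ W^{1,n}(B_R^c)`; indeed for the test functions
`u_k(x) = max{0, 1 - log(|x|/R)/log k}` the corresponding quotient tends to `0`. -/
theorem exterior_hardy_fails_p_eq_n (n : ℕ) (hn : 2 ≤ n) (R σ : ℝ)
    (hR : 0 < R) (hσ : 0 < σ) :
    (¬ ∃ C : ℝ, 0 < C ∧ ∀ u : EuclideanSpace ℝ (Fin n) → ℝ,
        MemW1p (n : ℝ) {x : EuclideanSpace ℝ (Fin n) | R < ‖x‖} u →
        (∫⁻ x in {x : EuclideanSpace ℝ (Fin n) | R < ‖x‖},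
            ENNReal.ofReal (‖fderiv ℝ u x‖ ^ (n : ℝ))) +
          ENNReal.ofReal σ *
            (∫⁻ y in Metric.sphere (0 : EuclideanSpace ℝ (Fin n)) R,
              ENNReal.ofReal (|u y| ^ (n : ℝ)) ∂(Measure.hausdorffMeasure ((n : ℝ) - 1))) ≥
          ENNReal.ofReal C *
            ∫⁻ x in {x : EuclideanSpace ℝ (Fin n) | R < ‖x‖},
              ENNReal.ofReal (|u x| ^ (n : ℝ) / ‖x‖ ^ (n : ℝ))) ∧
      Tendsto (fun k : ℕ =>
        ((∫⁻ x in {x : EuclideanSpace ℝ (Fin n) | R < ‖x‖},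
            ENNReal.ofReal (‖fderiv ℝ (uTest n R k) x‖ ^ (n : ℝ))) +
          ENNReal.ofReal σ *
            ∫⁻ y in Metric.sphere (0 : EuclideanSpace ℝ (Fin n)) R,
              ENNReal.ofReal (|uTest n R k y| ^ (n : ℝ))
                ∂(Measure.hausdorffMeasure ((n : ℝ) - 1))) /
          ∫⁻ x in {x : EuclideanSpace ℝ (Fin n) | R < ‖x‖},
            ENNReal.ofReal (|uTest n R k x| ^ (n : ℝ) / ‖x‖ ^ (n : ℝ)))
        atTop (𝓝 (0 : ℝ≥0∞)) := by
  have hn₀ : n ≠ 0 := by lia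
  simpa only [robinEnergy, hardyIntegral, Measure.restrict_smul, lintegral_smul_measure,
    smul_eq_mul] using
    exterior_hardy_fails_p_eq_n_general hn₀ hR (ν := ENNReal.ofReal σ • μH[(n : ℝ) - 1])
      (ENNReal.mul_ne_top ENNReal.ofReal_ne_top (hausdorffMeasure_euclideanSphere_lt_top hn₀ hR).ne)

end RobinHardy
end
end
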